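/- arXiv:1103.0203 — 4 statements merged into one kernel-verified Lean document; each statement's English description precedes it below -/
import Mathlib

section
/- Let n ≥ 2, m ≥ 1, V = ℂ^{n+1}. For a general symmetric m-multilinear map M : V^m → Λ^{n−1}V (i.e., off the zero set of some nonzero polynomial in the coefficients of M), the set of eigenvector lines {[v] ∈ P^n : v ≠ 0 and M(v,…,v) ∧ v = 0 in Λ^nV} is finite of cardinality exactly ((m+1)^{n+1} + (−1)^n)/(m+2). -/
open MvPolynomial ExteriorAlgebra

/-- The basis wedge `e_S = e_{j_1} ∧ ⋯ ∧ e_{j_b}` (indices of `S` in increasing order),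
as an element of the exterior algebra of `ℂ^k`. -/
noncomputable def eWedge (k : ℕ) (S : Finset (Fin k)) : ExteriorAlgebra ℂ (Fin k → ℂ) :=
  ((S.sort (· ≤ ·)).map fun j => ExteriorAlgebra.ι ℂ (Pi.single j (1:ℂ))).prod

/-- The value `M(v^m) ∈ Λ^b ℂ^k` of the tensor `M ∈ Hom(S^m ℂ^k, Λ^b ℂ^k)` represented by
the family of polynomials `q = (q_S)_{|S| = b}`, namely `Σ_S q_S(v) · e_S`. -/
noncomputable def tval (k b : ℕ)
    (q : {S : Finset (Fin k) // S.card = b} → MvPolynomial (Fin k) ℂ)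
    (v : Fin k → ℂ) : ExteriorAlgebra ℂ (Fin k → ℂ) :=
  ∑ S : {S : Finset (Fin k) // S.card = b}, MvPolynomial.eval v (q S) • eWedge k S.1

/-!
The eigenvectors of `M` are the nonzero common zeros of the forms `p_i` of degree `m + 1`, where
`p_i(v)` is the coefficient of `e_0 ∧ ⋯ ∧ e_n` in `M(v^m) ∧ v ∧ e_i`. These `n + 1` forms in `n + 1`
variables satisfy `∑ v_i p_i(v) = 0`, so in the chart `v_0 = 1` a zero is cut out by the `n`
equations `p_1 = ⋯ = p_n = 0`. Asking that every projective zero be nondegenerate and lie in the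
chart is, by elimination theory, a nonempty Zariski-open condition on `M`. Under this condition the
number of zeros is locally constant (implicit function theorem and compactness), hence constant
along the complex line through two such tensors with the finitely many bad parameters removed,
which is connected.

It remains to count the zeros for one tensor. The one with `p_i = x_i^m x_{i+1} - x_{i-1}^{m+1}`
(cyclic indices) works: in the chart, all `x_i^{m+1} x_{i+1}` equal the same `c`, so
`x_k = c^{a_k}` with `a_0 = 0` and `a_{k+1} = 1 - (m + 1) a_k`, and closing the cycle leaves the
single equation `c^{a_{n+1}} = 1`.
-/
section FibreCount

open Filter Topology

variable {T Y : Type*} [TopologicalSpace T] [TopologicalSpace Y] {Z : Set (T × Y)} {t₀ : T}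

/-- `φ` parametrises `Z` near `(t₀, y)` by the first coordinate: it is continuous at `t₀` with limit
`y`, and near `(t₀, y)` the set `Z` is the graph of `φ`. -/
def IsLocalBranch (Z : Set (T × Y)) (t₀ : T) (y : Y) (φ : T → Y) : Prop :=
  Tendsto φ (𝓝 t₀) (𝓝 y) ∧ ∀ᶠ z in 𝓝 (t₀, y), z ∈ Z ↔ φ z.1 = z.2

theorem IsLocalBranch.eventually_mem {y : Y} {φ : T → Y} (hφ : IsLocalBranch Z t₀ y φ) :
    ∀ᶠ t in 𝓝 t₀, (t, φ t) ∈ Z := by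
  have hgraph : Tendsto (fun t => (t, φ t)) (𝓝 t₀) (𝓝 (t₀, y)) := tendsto_id.prodMk_nhds hφ.1
  exact (hgraph.eventually hφ.2).mono fun t ht => ht.2 rfl

theorem IsLocalBranch.eventually_eq {y : Y} {φ : T → Y} (hφ : IsLocalBranch Z t₀ y φ)
    (hy : (t₀, y) ∈ Z) : ∀ᶠ y' in 𝓝 y, (t₀, y') ∈ Z → y' = y := by
  have hslice : Tendsto (fun y' => (t₀, y')) (𝓝 y) (𝓝 (t₀, y)) :=
    (Continuous.prodMk_right t₀).tendsto y
  have hφy : φ t₀ = y := hφ.2.self_of_nhds.1 hy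
  exact (hslice.eventually hφ.2).mono fun y' hy' h => (hy'.1 h).symm.trans hφy

theorem finite_fibre_of_isLocalBranch (hZ : IsClosed Z) {K : Set Y} (hK : IsCompact K)
    (hZK : ∀ y, (t₀, y) ∈ Z → y ∈ K)
    (hbranch : ∀ y, (t₀, y) ∈ Z → ∃ φ, IsLocalBranch Z t₀ y φ) : {y | (t₀, y) ∈ Z}.Finite := by
  by_contra hinf
  obtain ⟨y, -, hy⟩ := Set.Infinite.exists_accPt_of_subset_isCompact hinf hK hZK
  have hyZ : (t₀, y) ∈ Z :=
    (hZ.preimage (Continuous.prodMk_right t₀)).closure_subset hy.clusterPt.mem_closure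
  obtain ⟨φ, hφ⟩ := hbranch y hyZ
  rw [accPt_iff_frequently] at hy
  exact hy ((hφ.eventually_eq hyZ).mono fun y' h h' => h'.1 (h h'.2))

theorem eventually_mem_fibre_imp_exists_branch (hZ : IsClosed Z) {K : Set Y} (hK : IsCompact K)
    {φ : Y → T → Y} (hφ : ∀ y, (t₀, y) ∈ Z → IsLocalBranch Z t₀ y (φ y)) :
    ∀ᶠ t in 𝓝 t₀, ∀ y' ∈ K, (t, y') ∈ Z → ∃ y, (t₀, y) ∈ Z ∧ φ y t = y' := by
  refine hK.eventually_forall_of_forall_eventually (P := fun t y' =>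
    (t, y') ∈ Z → ∃ y, (t₀, y) ∈ Z ∧ φ y t = y') fun y _ => ?_
  by_cases hy : (t₀, y) ∈ Z
  · exact (hφ y hy).2.mono fun z hz h => ⟨y, hy, hz.1 h⟩
  · filter_upwards [hZ.isOpen_compl.mem_nhds hy] with z hz h using absurd h hz

theorem eventually_injOn_branches [T2Space Y] {s : Set Y} (hs : s.Finite) {φ : Y → T → Y}
    (hφ : ∀ y ∈ s, Tendsto (φ y) (𝓝 t₀) (𝓝 y)) :
    ∀ᶠ t in 𝓝 t₀, s.InjOn fun y => φ y t := by
  simp only [Set.InjOn]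
  refine hs.eventually_all.2 fun y hy => hs.eventually_all.2 fun y' hy' => ?_
  rcases eq_or_ne y y' with rfl | hne
  · exact Eventually.of_forall fun _ _ => rfl
  · have hnhds := isClosed_diagonal.isOpen_compl.mem_nhds (x := (y, y')) hne
    filter_upwards [((hφ y hy).prodMk_nhds (hφ y' hy')).eventually hnhds] with t ht h
      using absurd h ht

theorem eventually_ncard_fibre_eq [T2Space Y] (hZ : IsClosed Z) {K : Set Y} (hK : IsCompact K)
    (hZK : ∀ᶠ t in 𝓝 t₀, ∀ y, (t, y) ∈ Z → y ∈ K)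
    (hbranch : ∀ y, (t₀, y) ∈ Z → ∃ φ, IsLocalBranch Z t₀ y φ) :
    ∀ᶠ t in 𝓝 t₀, {y | (t, y) ∈ Z}.ncard = {y | (t₀, y) ∈ Z}.ncard := by
  have hfin := finite_fibre_of_isLocalBranch hZ hK hZK.self_of_nhds hbranch
  have hbranch' (y : Y) : ∃ φ, (t₀, y) ∈ Z → IsLocalBranch Z t₀ y φ := by
    by_cases hy : (t₀, y) ∈ Z
    · exact (hbranch y hy).imp fun φ hφ _ => hφ
    · exact ⟨fun _ => y, fun h => absurd h hy⟩
  choose φ hφ using hbranch'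
  filter_upwards [hZK, eventually_mem_fibre_imp_exists_branch hZ hK hφ,
    hfin.eventually_all.2 fun y hy => (hφ y hy).eventually_mem,
    eventually_injOn_branches hfin fun y hy => (hφ y hy).1] with t hK hcover hmem hinj
  have himage : {y | (t, y) ∈ Z} = (fun y => φ y t) '' {y | (t₀, y) ∈ Z} :=
    Set.Subset.antisymm (fun y hy => hcover y (hK y hy) hy) (Set.image_subset_iff.2 hmem)
  rw [himage, hinj.ncard_image]

end FibreCount

section ChartZeros

open Filter Topology Function

/-- The zeros of `f` in the affine chart `v i₀ = 1`. -/
def affineZeros {R ι : Type*} [Zero R] [One R] (i₀ : ι) (f : (ι → R) → ι → R) : Set (ι → R) :=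
  {v | v i₀ = 1 ∧ f v = 0}

theorem ne_zero_of_mem_affineZeros {R ι : Type*} [Zero R] [One R] [NeZero (1 : R)] {i₀ : ι}
    {f : (ι → R) → ι → R} {v : ι → R} (hv : v ∈ affineZeros i₀ f) : v ≠ 0 := fun h =>
  one_ne_zero (hv.1.symm.trans (congrFun h i₀))

section

variable {R ι : Type*} [CommRing R] [DecidableEq ι]

/-- A square system for the zeros of `f` in the chart `v i₀ = 1`. When `v ⬝ᵥ f v = 0` identically,
one component of `f` is redundant, and its place is taken by the chart equation. -/
def chartSystem (i₀ : ι) (f : (ι → R) → ι → R) (v : ι → R) : ι → R :=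
  f v + (v i₀ - 1) • Pi.single i₀ 1

variable [Fintype ι]

theorem chartSystem_eq_zero_iff [IsDomain R] {i₀ : ι} {f : (ι → R) → ι → R} {v : ι → R}
    (horth : v ⬝ᵥ f v = 0) (h0 : v i₀ ≠ 0) : chartSystem i₀ f v = 0 ↔ v ∈ affineZeros i₀ f := by
  refine ⟨fun h => ?_, fun h => by simp [chartSystem, h.1, h.2]⟩
  have hmul : v i₀ * (v i₀ - 1) = 0 := by
    simpa [chartSystem, dotProduct_add, dotProduct_smul, horth, mul_comm] using
      congrArg (v ⬝ᵥ ·) h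
  have hv : v i₀ = 1 := sub_eq_zero.1 ((mul_eq_zero.1 hmul).resolve_left h0)
  exact ⟨hv, by simpa [chartSystem, hv] using h⟩

end

variable {𝕜 ι : Type*} [RCLike 𝕜] {i₀ : ι}

section

variable {f : (ι → 𝕜) → ι → 𝕜} {v : ι → 𝕜}

theorem fderiv_chartSystem_apply [Finite ι] [DecidableEq ι] (hf : DifferentiableAt 𝕜 f v)
    (w : ι → 𝕜) :
    fderiv 𝕜 (chartSystem i₀ f) v w = fderiv 𝕜 f v w + Pi.single i₀ (w i₀) := by
  have := Fintype.ofFinite ι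
  have hchart : HasFDerivAt (fun v : ι → 𝕜 => (v i₀ - 1) • (Pi.single i₀ 1 : ι → 𝕜)) _ v :=
    ((hasFDerivAt_apply (𝕜 := 𝕜) i₀ v).sub_const 1).smul_const _
  have hsum : HasFDerivAt (chartSystem i₀ f) _ v := hf.hasFDerivAt.add hchart
  simp [hsum.fderiv, ← Pi.single_smul]

variable [Fintype ι]

theorem dotProduct_fderiv_eq_zero (horth : ∀ v, v ⬝ᵥ f v = 0) (hf : DifferentiableAt 𝕜 f v)
    (hv : f v = 0) (w : ι → 𝕜) : v ⬝ᵥ fderiv 𝕜 f v w = 0 := by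
  have hprod := HasFDerivAt.fun_sum (u := Finset.univ) fun i _ =>
    (hasFDerivAt_apply (𝕜 := 𝕜) i v).mul (hasFDerivAt_pi'.1 hf.hasFDerivAt i)
  have hconst : HasFDerivAt (𝕜 := 𝕜) (fun v => v ⬝ᵥ f v) 0 v := by
    simpa only [horth] using hasFDerivAt_const (0 : 𝕜) v
  simpa [hv, dotProduct] using DFunLike.congr_fun (hprod.unique hconst) w

theorem isInvertible_fderiv_chartSystem [DecidableEq ι] (horth : ∀ v, v ⬝ᵥ f v = 0)
    (hf : DifferentiableAt 𝕜 f v) (hv : v ∈ affineZeros i₀ f)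
    (hsimple : ∀ w, w i₀ = 0 → fderiv 𝕜 f v w = 0 → w = 0) :
    (fderiv 𝕜 (chartSystem i₀ f) v).IsInvertible := by
  have hinj : Injective (fderiv 𝕜 (chartSystem i₀ f) v) := by
    refine (injective_iff_map_eq_zero _).2 fun w hw => ?_
    rw [fderiv_chartSystem_apply hf] at hw
    have hw0 : w i₀ = 0 := by
      simpa [dotProduct_add, dotProduct_fderiv_eq_zero horth hf hv.2, hv.1] using
        congrArg (v ⬝ᵥ ·) hw
    exact hsimple w hw0 (by simpa [hw0] using hw)
  exact ⟨(LinearEquiv.ofInjectiveEndo (fderiv 𝕜 (chartSystem i₀ f) v).toLinearMap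
    hinj).toContinuousLinearEquiv, by ext; rfl⟩

end

variable [Fintype ι]

theorem exists_isLocalBranch_affineZeros {E : Type*} [NormedAddCommGroup E] [NormedSpace 𝕜 E]
    [CompleteSpace E] {F : E → (ι → 𝕜) → ι → 𝕜} {t₀ : E} {v₀ : ι → 𝕜}
    (hF : ContDiff 𝕜 1 (uncurry F)) (horth : ∀ t v, v ⬝ᵥ F t v = 0)
    (hv₀ : v₀ ∈ affineZeros i₀ (F t₀))
    (hsimple : ∀ w, w i₀ = 0 → fderiv 𝕜 (F t₀) v₀ w = 0 → w = 0) :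
    ∃ φ, IsLocalBranch {z : E × (ι → 𝕜) | z.2 ∈ affineZeros i₀ (F z.1)} t₀ v₀ φ := by
  classical
  let G : E × (ι → 𝕜) → ι → 𝕜 := fun z => chartSystem i₀ (F z.1) z.2
  have hG : ContDiff 𝕜 1 G := by
    have hchart : ContDiff 𝕜 1 fun z : E × (ι → 𝕜) =>
      (z.2 i₀ - 1) • (Pi.single i₀ 1 : ι → 𝕜) := by fun_prop
    exact hF.add hchart
  have hstrict := hG.contDiffAt.hasStrictFDerivAt one_ne_zero (x := (t₀, v₀))
  have hFd : DifferentiableAt 𝕜 (F t₀) v₀ :=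
    (hF.differentiable one_ne_zero (t₀, v₀)).comp v₀
      (hasFDerivAt_prodMk_right (𝕜 := 𝕜) t₀ v₀).differentiableAt
  have hpartial : (fderiv 𝕜 G (t₀, v₀)).comp (.inr 𝕜 E (ι → 𝕜)) =
      fderiv 𝕜 (chartSystem i₀ (F t₀)) v₀ :=
    (hstrict.hasFDerivAt.comp v₀ (hasFDerivAt_prodMk_right t₀ v₀)).fderiv.symm
  have hinv : ((fderiv 𝕜 G (t₀, v₀)).comp (.inr 𝕜 E (ι → 𝕜))).IsInvertible :=
    hpartial ▸ isInvertible_fderiv_chartSystem (horth t₀) hFd hv₀ hsimple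
  refine ⟨hstrict.implicitFunctionOfProdDomain hinv,
    hstrict.tendsto_implicitFunctionOfProdDomain hinv, ?_⟩
  have hGz₀ : G (t₀, v₀) = 0 := (chartSystem_eq_zero_iff (horth t₀ v₀) (by simp [hv₀.1])).2 hv₀
  have hne : ∀ᶠ z : E × (ι → 𝕜) in 𝓝 (t₀, v₀), z.2 i₀ ≠ 0 :=
    ContinuousAt.eventually_ne (by fun_prop) (by simp [hv₀.1])
  filter_upwards [hne, hstrict.eventually_apply_eq_iff_implicitFunctionOfProdDomain hinv]
    with z hz0 hz
  rw [hGz₀] at hz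
  exact (chartSystem_eq_zero_iff (horth z.1 z.2) hz0).symm.trans hz

section

variable {T : Type*} [TopologicalSpace T] {F : T → (ι → 𝕜) → ι → 𝕜} {t₀ : T}

theorem exists_pos_eventually_lt_norm_apply_or_ne_zero (hF : Continuous (uncurry F))
    (hzero : ∀ v, v ≠ 0 → F t₀ v = 0 → v i₀ ≠ 0) :
    ∃ ε > 0, ∀ᶠ t in 𝓝 t₀, ∀ v ∈ Metric.sphere (0 : ι → 𝕜) 1, ε < ‖v i₀‖ ∨ F t v ≠ 0 := by
  have hsphere : ∀ᶠ x : T × ℝ in 𝓝 (t₀, 0), ∀ v ∈ Metric.sphere (0 : ι → 𝕜) 1,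
      x.2 < ‖v i₀‖ ∨ F x.1 v ≠ 0 := by
    refine (isCompact_sphere _ _).eventually_forall_of_forall_eventually (P := fun (x : T × ℝ) v =>
      x.2 < ‖v i₀‖ ∨ F x.1 v ≠ 0) fun v hv => ?_
    by_cases h : F t₀ v = 0
    · have hlt : ∀ᶠ z : (T × ℝ) × (ι → 𝕜) in 𝓝 ((t₀, 0), v), z.1.2 < ‖z.2 i₀‖ :=
        ContinuousAt.eventually_lt (by fun_prop) (by fun_prop)
          (by simpa using hzero v (ne_zero_of_mem_unit_sphere ⟨v, hv⟩) h)
      exact hlt.mono fun _ => Or.inl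
    · have hne : ∀ᶠ z : (T × ℝ) × (ι → 𝕜) in 𝓝 ((t₀, 0), v), uncurry F (z.1.1, z.2) ≠ 0 :=
        ContinuousAt.eventually_ne (by fun_prop) h
      exact hne.mono fun _ => Or.inr
  rw [nhds_prod_eq] at hsphere
  obtain ⟨p, hp, r, hr, h⟩ := eventually_prod_iff.1 hsphere
  obtain ⟨ε, hε, hε0⟩ := ((hr.filter_mono nhdsWithin_le_nhds).and
    (self_mem_nhdsWithin (a := (0 : ℝ)) (s := Set.Ioi 0))).exists
  exact ⟨ε, hε0, hp.mono fun t ht => h ht hε⟩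

theorem exists_eventually_affineZeros_subset_closedBall {d : ℕ} (hF : Continuous (uncurry F))
    (hhom : ∀ t (c : 𝕜) v, F t (c • v) = c ^ d • F t v)
    (hzero : ∀ v, v ≠ 0 → F t₀ v = 0 → v i₀ ≠ 0) :
    ∃ C : ℝ, ∀ᶠ t in 𝓝 t₀, affineZeros i₀ (F t) ⊆ Metric.closedBall 0 C := by
  obtain ⟨ε, hε0, hε⟩ := exists_pos_eventually_lt_norm_apply_or_ne_zero hF hzero
  refine ⟨ε⁻¹, hε.mono fun t ht v hv => ?_⟩
  have hnorm : 0 < ‖v‖ := norm_pos_iff.2 (ne_zero_of_mem_affineZeros hv)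
  rcases ht (((‖v‖⁻¹ : ℝ) : 𝕜) • v) (by simp [norm_smul, hnorm.ne']) with h | h
  · have hlt : ε < ‖v‖⁻¹ := by simpa [hv.1] using h
    simpa using (le_inv_comm₀ hε0 hnorm).1 hlt.le
  · exact absurd (by rw [hhom, hv.2, smul_zero]) h

end

theorem eventually_ncard_affineZeros_eq {E : Type*} [NormedAddCommGroup E] [NormedSpace 𝕜 E]
    [CompleteSpace E] {F : E → (ι → 𝕜) → ι → 𝕜} {t₀ : E} {d : ℕ}
    (hF : ContDiff 𝕜 1 (uncurry F)) (horth : ∀ t v, v ⬝ᵥ F t v = 0)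
    (hhom : ∀ t (c : 𝕜) v, F t (c • v) = c ^ d • F t v)
    (hzero : ∀ v, v ≠ 0 → F t₀ v = 0 → v i₀ ≠ 0)
    (hsimple : ∀ v ∈ affineZeros i₀ (F t₀), ∀ w, w i₀ = 0 → fderiv 𝕜 (F t₀) v w = 0 → w = 0) :
    ∀ᶠ t in 𝓝 t₀, (affineZeros i₀ (F t)).ncard = (affineZeros i₀ (F t₀)).ncard := by
  have hFc := hF.continuous
  obtain ⟨C, hC⟩ := exists_eventually_affineZeros_subset_closedBall hFc hhom hzero
  have hclosed : IsClosed {z : E × (ι → 𝕜) | z.2 ∈ affineZeros i₀ (F z.1)} :=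
    (isClosed_eq (by fun_prop) continuous_const).inter (isClosed_eq hFc continuous_const)
  exact eventually_ncard_fibre_eq hclosed (isCompact_closedBall 0 C) hC fun v hv =>
    exists_isLocalBranch_affineZeros hF horth hv (hsimple v hv)

end ChartZeros

section PolynomialMaps

open Matrix

section

variable {R S σ : Type*} [CommRing R] [CommRing S]

/-- The polynomial map with components `p`. -/
noncomputable def polyMap (p : σ → MvPolynomial σ R) (v : σ → R) (i : σ) : R :=
  eval v (p i)

/-- The Jacobian matrix of `p`. -/
noncomputable def jacobian (p : σ → MvPolynomial σ R) : Matrix σ σ (MvPolynomial σ R) :=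
  of fun i j => pderiv j (p i)

/-- The Jacobian matrix of `chartSystem i₀ (polyMap p)`, up to the factor `X i₀ ^ m` in the last
term, which makes all entries homogeneous when the components of `p` have degree `m + 1`. -/
noncomputable def chartJacobian [DecidableEq σ] (i₀ : σ) (m : ℕ) (p : σ → MvPolynomial σ R) :
    Matrix σ σ (MvPolynomial σ R) :=
  jacobian p + single i₀ i₀ (X i₀ ^ m)

theorem polyMap_lineMap (p q : σ → MvPolynomial σ R) (t : R) (v : σ → R) :
    polyMap (AffineMap.lineMap p q t) v = AffineMap.lineMap (polyMap p v) (polyMap q v) t := by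
  ext i
  simp [polyMap, AffineMap.lineMap_apply_module, smul_eval]

theorem polyMap_smul {p : σ → MvPolynomial σ R} {d : ℕ} (hp : ∀ i, (p i).IsHomogeneous d)
    (c : R) (v : σ → R) : polyMap p (c • v) = c ^ d • polyMap p v := by
  ext i
  have hmon (ν : σ →₀ ℕ) (hν : ν ∈ (p i).support) :
      ∏ j ∈ ν.support, (c * v j) ^ ν j = c ^ d * ∏ j ∈ ν.support, v j ^ ν j := by
    simp only [(hp i).degree_eq_sum_deg_support hν, mul_pow, Finset.prod_mul_distrib,
      Finset.prod_pow_eq_pow_sum]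
  simp only [polyMap, eval_eq, Pi.smul_apply, smul_eq_mul, Finset.mul_sum]
  refine Finset.sum_congr rfl fun ν hν => ?_
  rw [hmon ν hν, mul_left_comm]

section

variable {τ : Type*} [Fintype σ] [DecidableEq σ]

theorem isHomogeneous_det {A : Matrix σ σ (MvPolynomial τ R)} {d : ℕ}
    (hA : ∀ i j, (A i j).IsHomogeneous d) : A.det.IsHomogeneous (Fintype.card σ * d) := by
  rw [det_apply]
  refine Submodule.sum_mem (homogeneousSubmodule τ R _) fun g _ =>
    Submodule.smul_of_tower_mem _ _ ?_
  simpa using IsHomogeneous.prod Finset.univ (fun i => A (g i) i) _ fun i _ => hA (g i) i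

theorem isHomogeneous_det_chartJacobian (i₀ : σ) {p : σ → MvPolynomial σ R} {m : ℕ}
    (hp : ∀ i, (p i).IsHomogeneous (m + 1)) :
    (chartJacobian i₀ m p).det.IsHomogeneous (Fintype.card σ * m) := by
  refine isHomogeneous_det fun i j => (hp i).pderiv.add ?_
  rw [single_apply]
  split_ifs
  · exact isHomogeneous_X_pow i₀ m
  · exact isHomogeneous_zero σ R m

theorem map_det_chartJacobian (f : R →+* S) (i₀ : σ) (m : ℕ) (p : σ → MvPolynomial σ R) :
    map f (chartJacobian i₀ m p).det = (chartJacobian i₀ m fun i => map f (p i)).det := by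
  rw [RingHom.map_det]
  congr 1
  ext1 i j
  simp [chartJacobian, jacobian, single_apply, pderiv_map, apply_ite (map f)]

end

theorem jacobian_mulVec_self [Fintype σ] {p : σ → MvPolynomial σ R} {d : ℕ}
    (hp : ∀ i, (p i).IsHomogeneous d) (v : σ → R) :
    (jacobian p).map (eval v) *ᵥ v = d • polyMap p v := by
  ext i
  simpa [polyMap, jacobian, mulVec, dotProduct, mul_comm] using
    congrArg (eval v) (hp i).sum_X_mul_pderiv

theorem chartJacobian_mulVec [Fintype σ] [DecidableEq σ] (i₀ : σ) (m : ℕ)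
    (p : σ → MvPolynomial σ R) (v w : σ → R) :
    (chartJacobian i₀ m p).map (eval v) *ᵥ w =
      (jacobian p).map (eval v) *ᵥ w + Pi.single i₀ (v i₀ ^ m * w i₀) := by
  simp [chartJacobian, Matrix.map_add, add_mulVec, map_single, single_mulVec, Pi.single]

end

section

variable {K σ : Type*} [Field K] [Fintype σ] [DecidableEq σ] {i₀ : σ} {m : ℕ}
  {p : σ → MvPolynomial σ K}

/-- Every projective zero of `p` lies in the chart `v i₀ ≠ 0` and is nondegenerate there. -/
def HasSimpleZeros (i₀ : σ) (m : ℕ) (p : σ → MvPolynomial σ K) : Prop :=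
  ∀ v, polyMap p v = 0 → eval v (chartJacobian i₀ m p).det = 0 → v = 0

theorem HasSimpleZeros.eq_zero_of_mulVec (h : HasSimpleZeros i₀ m p) {v w : σ → K} (hv : v ≠ 0)
    (hpv : polyMap p v = 0) (hw : w i₀ = 0) (hJ : (jacobian p).map (eval v) *ᵥ w = 0) : w = 0 := by
  refine eq_zero_of_mulVec_eq_zero (M := (chartJacobian i₀ m p).map (eval v)) (fun hdet => ?_) ?_
  · exact hv (h v hpv ((RingHom.map_det _ _).trans hdet))
  · rw [chartJacobian_mulVec, hJ, hw, mul_zero, Pi.single_zero, add_zero]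

theorem HasSimpleZeros.apply_ne_zero (h : HasSimpleZeros i₀ m p) {d : ℕ}
    (hp : ∀ i, (p i).IsHomogeneous d) {v : σ → K} (hv : v ≠ 0) (hpv : polyMap p v = 0) :
    v i₀ ≠ 0 := fun hv0 =>
  hv (h.eq_zero_of_mulVec hv hpv hv0 (by rw [jacobian_mulVec_self hp, hpv, smul_zero]))

theorem HasSimpleZeros.exists_representatives (h : HasSimpleZeros i₀ m p) {d N : ℕ}
    (hp : ∀ i, (p i).IsHomogeneous d) (hN : (affineZeros i₀ (polyMap p)).ncard = N) (hN0 : N ≠ 0) :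
    ∃ v : Fin N → σ → K, (∀ i, v i ≠ 0 ∧ polyMap p (v i) = 0) ∧
      (∀ i j, ∀ c : K, v i = c • v j → i = j) ∧
      ∀ w, w ≠ 0 → polyMap p w = 0 → ∃ i, ∃ c : K, w = c • v i := by
  have := (Set.finite_of_ncard_ne_zero (hN.trans_ne hN0)).to_subtype
  let e : Fin N ≃ affineZeros i₀ (polyMap p) :=
    (finCongr (hN.symm.trans (Nat.card_coe_set_eq _).symm)).trans (Finite.equivFin _).symm
  have hone (i : Fin N) : (e i : σ → K) i₀ = 1 := (e i).2.1
  refine ⟨fun i => e i, fun i => ⟨fun h => ?_, (e i).2.2⟩, fun i j c hij => ?_,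
    fun w hw hpw => ?_⟩
  · simpa [h] using hone i
  · have hc : c = 1 := by simpa [hone] using (congrFun hij i₀).symm
    exact e.injective (Subtype.ext (by simpa [hc] using hij))
  · have hw0 := h.apply_ne_zero hp hw hpw
    have hmem : (w i₀)⁻¹ • w ∈ affineZeros i₀ (polyMap p) :=
      ⟨inv_mul_cancel₀ hw0, by rw [polyMap_smul hp, hpw, smul_zero]⟩
    exact ⟨e.symm ⟨_, hmem⟩, w i₀, by simp [smul_smul, hw0]⟩

end

section

variable {𝕜 σ : Type*} [RCLike 𝕜] [Fintype σ]

theorem hasFDerivAt_eval (q : MvPolynomial σ 𝕜) (v : σ → 𝕜) :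
    HasFDerivAt (fun v => eval v q)
      (∑ j, eval v (pderiv j q) • ContinuousLinearMap.proj (R := 𝕜) (φ := fun _ : σ => 𝕜) j) v := by
  classical
  induction q using MvPolynomial.induction_on with
  | C a =>
    simp only [eval_C]
    exact (hasFDerivAt_const a v).congr_fderiv (by ext; simp)
  | add p q hp hq =>
    simp only [map_add]
    refine (hp.add hq).congr_fderiv ?_
    ext w
    simp [add_mul, Finset.sum_add_distrib]
  | mul_X p i hp =>
    simp only [map_mul, eval_X]
    refine (hp.mul (hasFDerivAt_apply (𝕜 := 𝕜) i v)).congr_fderiv ?_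
    ext w
    simp [pderiv_X, Pi.single_apply, add_mul, Finset.sum_add_distrib, Finset.mul_sum, mul_assoc,
      apply_ite (eval v)]

theorem fderiv_polyMap_apply (p : σ → MvPolynomial σ 𝕜) (v w : σ → 𝕜) :
    fderiv 𝕜 (polyMap p) v w = (jacobian p).map (eval v) *ᵥ w := by
  have h : HasFDerivAt (polyMap p) _ v := hasFDerivAt_pi.2 fun i => hasFDerivAt_eval (p i) v
  ext i
  simp [h.fderiv, jacobian, mulVec, dotProduct]

theorem contDiff_polyMap {k : WithTop ℕ∞} (p : σ → MvPolynomial σ 𝕜) :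
    ContDiff 𝕜 k (polyMap p) :=
  contDiff_pi.2 fun i => (AnalyticOnNhd.eval_mvPolynomial (p i)).contDiff

theorem contDiff_polyMap_lineMap {k : WithTop ℕ∞} (p q : σ → MvPolynomial σ 𝕜) :
    ContDiff 𝕜 k
      (Function.uncurry fun t : 𝕜 => polyMap (AffineMap.lineMap p q t)) := by
  simp only [Function.uncurry_def, polyMap_lineMap]
  simp only [AffineMap.lineMap_apply_module]
  have hp := (contDiff_polyMap p).comp (contDiff_snd (𝕜 := 𝕜) (E := 𝕜) (n := k))
  have hq := (contDiff_polyMap q).comp (contDiff_snd (𝕜 := 𝕜) (E := 𝕜) (n := k))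
  exact ((contDiff_const.sub contDiff_fst).smul hp).add (contDiff_fst.smul hq)

theorem ncard_affineZeros_eq_of_hasSimpleZeros [DecidableEq σ] {i₀ : σ} {m d : ℕ}
    {p₀ p₁ : σ → MvPolynomial σ ℂ}
    (h₀ : ∀ i, (p₀ i).IsHomogeneous d) (h₁ : ∀ i, (p₁ i).IsHomogeneous d)
    (horth₀ : ∀ v, v ⬝ᵥ polyMap p₀ v = 0) (horth₁ : ∀ v, v ⬝ᵥ polyMap p₁ v = 0)
    {s : Set ℂ} (hs : s.Finite) (hs0 : 0 ∉ s) (hs1 : 1 ∉ s)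
    (hsimple : ∀ t ∉ s, HasSimpleZeros i₀ m (AffineMap.lineMap p₀ p₁ t)) :
    (affineZeros i₀ (polyMap p₁)).ncard = (affineZeros i₀ (polyMap p₀)).ncard := by
  have hhom (t : ℂ) (i : σ) : (AffineMap.lineMap p₀ p₁ t i).IsHomogeneous d := by
    rw [AffineMap.pi_lineMap_apply, AffineMap.lineMap_apply_module]
    exact ((homogeneousSubmodule σ ℂ d).smul_mem _ (h₀ i)).add
      ((homogeneousSubmodule σ ℂ d).smul_mem _ (h₁ i))
  have horth (t : ℂ) (v : σ → ℂ) : v ⬝ᵥ polyMap (AffineMap.lineMap p₀ p₁ t) v = 0 := by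
    rw [polyMap_lineMap, AffineMap.lineMap_apply_module, dotProduct_add, dotProduct_smul,
      dotProduct_smul, horth₀, horth₁, smul_zero, smul_zero, add_zero]
  have hlocal (t : ℂ) (ht : t ∉ s) := eventually_ncard_affineZeros_eq (t₀ := t)
    (contDiff_polyMap_lineMap p₀ p₁) horth (fun t => polyMap_smul (hhom t))
    (fun v hv hpv => (hsimple t ht).apply_ne_zero (hhom t) hv hpv) fun v hv w hw hJ =>
      (hsimple t ht).eq_zero_of_mulVec (ne_zero_of_mem_affineZeros hv) hv.2 hw
        ((fderiv_polyMap_apply _ v w).symm.trans hJ)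
  have hconn : IsPreconnected sᶜ :=
    (hs.countable.isConnected_compl_of_one_lt_rank (by simp)).isPreconnected
  have hcont : ContinuousOn (fun t => (affineZeros i₀ (polyMap (AffineMap.lineMap p₀ p₁ t))).ncard)
      sᶜ := fun t ht => ContinuousAt.continuousWithinAt <| by
    rw [ContinuousAt, nhds_discrete ℕ, Filter.tendsto_pure]
    exact hlocal t ht
  simpa using hconn.constant hcont hs1 hs0

end

end PolynomialMaps

section CyclicExample

open scoped Fin.CommRing
open Matrix

/-- The alternating geometric sum `1 - d + d² - ⋯ = (1 - (-d) ^ k) / (1 + d)`. -/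
def altGeomSum (d k : ℕ) : ℤ :=
  ∑ i ∈ Finset.range k, (-d : ℤ) ^ i

theorem altGeomSum_zero (d : ℕ) : altGeomSum d 0 = 0 :=
  rfl

theorem altGeomSum_succ (d k : ℕ) : altGeomSum d (k + 1) = 1 - d * altGeomSum d k := by
  rw [altGeomSum, geom_sum_succ, altGeomSum]
  ring

theorem altGeomSum_mul (d k : ℕ) : altGeomSum d k * (d + 1) = 1 - (-d) ^ k := by
  rw [altGeomSum, ← geom_sum_mul_neg]
  ring

theorem altGeomSum_ne_zero {d : ℕ} (hd : d ≠ 1) (k : ℕ) : altGeomSum d (k + 1) ≠ 0 := by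
  rw [altGeomSum_succ, sub_ne_zero]
  exact fun h => hd (Int.natCast_dvd_natCast.1 ⟨_, h⟩ |> Nat.dvd_one.1)

theorem natAbs_altGeomSum {d : ℕ} (hd : d ≠ 0) (k : ℕ) :
    (altGeomSum d k).natAbs = if Even k then (d ^ k - 1) / (d + 1) else (d ^ k + 1) / (d + 1) := by
  have hmul : (altGeomSum d k).natAbs * (d + 1) = (1 - (-d : ℤ) ^ k).natAbs := by
    rw [← altGeomSum_mul, Int.natAbs_mul]
    rfl
  have hpos : 1 ≤ d ^ k := Nat.one_le_pow _ _ (Nat.pos_of_ne_zero hd)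
  split_ifs with hk
  · rw [hk.neg_pow, ← Nat.cast_pow] at hmul
    exact (Nat.div_eq_of_eq_mul_left d.add_one_pos (by omega)).symm
  · rw [(Nat.not_even_iff_odd.1 hk).neg_pow, ← Nat.cast_pow] at hmul
    exact (Nat.div_eq_of_eq_mul_left d.add_one_pos (by omega)).symm

variable {n : ℕ}

theorem forall_fin_of_forall_add_one {P : Fin (n + 1) → Prop} {i : Fin (n + 1)} (hi : P i)
    (h : ∀ j, P j → P (j + 1)) (j : Fin (n + 1)) : P j := by
  have hadd (k : ℕ) : P (i + (k : Fin (n + 1))) := by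
    induction k with
    | zero => simpa using hi
    | succ k ih => simpa [add_assoc] using h _ ih
  simpa using hadd (j - i).val

section

variable {R : Type*} [CommRing R] {d m : ℕ}

theorem apply_natCast_eq_mul_altGeomSum {u : Fin (n + 1) → R} {s : R} (hu0 : u 0 = 0)
    (hu : ∀ i, u (i + 1) = s - d * u i) (k : ℕ) : u k = s * altGeomSum d k := by
  induction k with
  | zero => simpa [altGeomSum_zero] using hu0
  | succ k ih =>
    rw [Nat.cast_add_one, hu, ih, altGeomSum_succ]
    push_cast
    ring

/-- The components `x_i ^ m * x_{i+1} - x_{i-1} ^ (m + 1)`, with cyclic indices. -/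
noncomputable def cyclicPoly (R : Type*) [CommRing R] (n m : ℕ) (i : Fin (n + 1)) :
    MvPolynomial (Fin (n + 1)) R :=
  X i ^ m * X (i + 1) - X (i - 1) ^ (m + 1)

theorem polyMap_cyclicPoly (m : ℕ) (v : Fin (n + 1) → R) (i : Fin (n + 1)) :
    polyMap (cyclicPoly R n m) v i = v i ^ m * v (i + 1) - v (i - 1) ^ (m + 1) := by
  simp [polyMap, cyclicPoly]

theorem jacobian_cyclicPoly_mulVec (m : ℕ) (v w : Fin (n + 1) → R) (i : Fin (n + 1)) :
    ((jacobian (cyclicPoly R n m)).map (eval v) *ᵥ w) i =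
      m * v i ^ (m - 1) * w i * v (i + 1) + v i ^ m * w (i + 1) -
        (m + 1) * v (i - 1) ^ m * w (i - 1) := by
  have hterm (j : Fin (n + 1)) : eval v (pderiv j (cyclicPoly R n m i)) * w j =
      (if i = j then m * v i ^ (m - 1) * w j * v (i + 1) else 0) +
      (if i + 1 = j then v i ^ m * w j else 0) -
      (if i - 1 = j then (m + 1) * v (i - 1) ^ m * w j else 0) := by
    simp only [cyclicPoly, map_sub, pderiv_mul, pderiv_pow, pderiv_X, Pi.single_apply, map_add,
      map_mul, map_pow, eval_X, map_natCast, apply_ite (eval v), map_one, map_zero]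
    split_ifs <;> simp <;> ring
  simp only [mulVec, dotProduct, jacobian, map_apply, of_apply, hterm, Finset.sum_sub_distrib,
    Finset.sum_add_distrib, Finset.sum_ite_eq, Finset.mem_univ, if_true]

/-- The directional derivative of `v_i ^ (m + 1) * v_{i+1}` along `w`. This monomial takes the same
value for all `i` at a zero of `cyclicPoly`. -/
def cyclicMonomialDeriv (m : ℕ) (v w : Fin (n + 1) → R) (i : Fin (n + 1)) : R :=
  (m + 1) * v i ^ m * w i * v (i + 1) + v i ^ (m + 1) * w (i + 1)

theorem cyclicMonomialDeriv_sub (m : ℕ) (v w : Fin (n + 1) → R) (i : Fin (n + 1)) :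
    cyclicMonomialDeriv m v w i - cyclicMonomialDeriv m v w (i - 1) =
      v i * ((jacobian (cyclicPoly R n m)).map (eval v) *ᵥ w) i +
        w i * polyMap (cyclicPoly R n m) v i := by
  rw [jacobian_cyclicPoly_mulVec, polyMap_cyclicPoly, cyclicMonomialDeriv, cyclicMonomialDeriv,
    sub_add_cancel]
  cases m with
  | zero =>
    push_cast
    ring
  | succ m =>
    rw [add_tsub_cancel_right]
    push_cast
    ring

theorem pow_mul_apply_add_one_eq {v : Fin (n + 1) → R} (hv : polyMap (cyclicPoly R n m) v = 0)
    (i : Fin (n + 1)) : v i ^ (m + 1) * v (i + 1) = v 0 ^ (m + 1) * v 1 := by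
  revert i
  refine forall_fin_of_forall_add_one (i := 0) (by rw [zero_add]) fun i hi => ?_
  have h := congrFun hv (i + 1)
  rw [polyMap_cyclicPoly, add_sub_cancel_right, Pi.zero_apply] at h
  rw [← hi]
  linear_combination v (i + 1) * h

theorem apply_ne_zero_of_polyMap_cyclicPoly_eq_zero [IsDomain R] (hm : 1 ≤ m)
    {v : Fin (n + 1) → R} (hv : v ≠ 0)
    (hpv : polyMap (cyclicPoly R n m) v = 0) (i : Fin (n + 1)) : v i ≠ 0 := by
  intro hi
  have hpred (k : Fin (n + 1)) (hk : v (-k) = 0) : v (-(k + 1)) = 0 := by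
    have h := congrFun hpv (-k)
    rw [polyMap_cyclicPoly, hk, zero_pow (by omega)] at h
    rw [neg_add, ← sub_eq_add_neg]
    simpa using h
  refine hv (funext fun j => ?_)
  simpa using forall_fin_of_forall_add_one (P := fun k => v (-k) = 0) (i := -i) (by simpa using hi)
    hpred (-j)

end

section

variable {K : Type*} [Field K] {d m : ℕ} {v w : Fin (n + 1) → K}

theorem apply_zero_eq_zero_of_chartJacobian_cyclicPoly_mulVec (hv : v 0 ≠ 0)
    (hpv : polyMap (cyclicPoly K n m) v = 0)
    (hw : (chartJacobian 0 m (cyclicPoly K n m)).map (eval v) *ᵥ w = 0) : w 0 = 0 := by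
  have hsum : v ⬝ᵥ ((jacobian (cyclicPoly K n m)).map (eval v) *ᵥ w) = 0 := by
    have hterm (i : Fin (n + 1)) := cyclicMonomialDeriv_sub m v w i
    simp only [hpv, Pi.zero_apply, mul_zero, add_zero] at hterm
    rw [dotProduct, ← Finset.sum_congr rfl fun i _ => hterm i, Finset.sum_sub_distrib, sub_eq_zero]
    exact (Equiv.sum_comp (Equiv.subRight (1 : Fin (n + 1))) (cyclicMonomialDeriv m v w)).symm
  have hdot := congrArg (v ⬝ᵥ ·) hw
  simpa [chartJacobian_mulVec, dotProduct_add, hsum, hv] using hdot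

theorem eq_zero_of_jacobian_cyclicPoly_mulVec [CharZero K] (hm : 1 ≤ m) (hv : ∀ i, v i ≠ 0)
    (hpv : polyMap (cyclicPoly K n m) v = 0)
    (hw : (jacobian (cyclicPoly K n m)).map (eval v) *ᵥ w = 0) (hw0 : w 0 = 0) : w = 0 := by
  have hconst : ∀ i, cyclicMonomialDeriv m v w i = cyclicMonomialDeriv m v w 0 := by
    refine forall_fin_of_forall_add_one (i := 0) rfl fun i hi => ?_
    have h := cyclicMonomialDeriv_sub m v w (i + 1)
    rwa [hw, hpv, add_sub_cancel_right, Pi.zero_apply, mul_zero, mul_zero, add_zero, sub_eq_zero,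
      hi] at h
  -- The logarithmic derivatives `w_i / v_i` satisfy an affine recurrence with constant term `s`,
  -- and closing up the cycle forces `s = 0`.
  set s := cyclicMonomialDeriv m v w 0 / (v 0 ^ (m + 1) * v 1)
  have hrec (i : Fin (n + 1)) : w (i + 1) / v (i + 1) = s - (m + 1 : ℕ) * (w i / v i) := by
    have hi := hv i
    have hi' := hv (i + 1)
    simp only [s]
    rw [← hconst i, ← pow_mul_apply_add_one_eq hpv i, cyclicMonomialDeriv]
    push_cast
    field_simp
    ring
  have hu := apply_natCast_eq_mul_altGeomSum (u := fun i => w i / v i) (by simp [hw0]) hrec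
  have hs : s = 0 := by
    have hclose := hu (n + 1)
    rw [Fin.natCast_self, hw0, zero_div] at hclose
    exact (mul_eq_zero.1 hclose.symm).resolve_right
      (Int.cast_ne_zero.2 (altGeomSum_ne_zero (by omega) n))
  funext i
  simpa [hs, hv i] using hu i

theorem hasSimpleZeros_cyclicPoly [CharZero K] (hm : 1 ≤ m) :
    HasSimpleZeros 0 m (cyclicPoly K n m) := by
  intro v hpv hdet
  by_contra hv
  have hne := apply_ne_zero_of_polyMap_cyclicPoly_eq_zero hm hv hpv
  obtain ⟨w, hw, hJw⟩ := exists_mulVec_eq_zero_iff.2 ((RingHom.map_det _ _).symm.trans hdet)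
  have hw0 := apply_zero_eq_zero_of_chartJacobian_cyclicPoly_mulVec (hne 0) hpv hJw
  rw [RingHom.mapMatrix_apply, chartJacobian_mulVec, hw0, mul_zero, Pi.single_zero, add_zero] at hJw
  exact hw (eq_zero_of_jacobian_cyclicPoly_mulVec hm hne hpv hJw hw0)

theorem apply_natCast_eq_zpow_altGeomSum {c : K} (hc : c ≠ 0) (hv0 : v 0 = 1)
    (hv : ∀ i, v i ^ d * v (i + 1) = c) (k : ℕ) : v k = c ^ altGeomSum d k := by
  induction k with
  | zero => simpa [altGeomSum_zero] using hv0
  | succ k ih =>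
    have h := hv k
    rw [ih, ← zpow_natCast, ← _root_.zpow_mul] at h
    rw [Nat.cast_add_one, altGeomSum_succ, zpow_sub₀ hc, zpow_one,
      eq_div_iff (zpow_ne_zero _ hc), mul_comm, mul_comm (d : ℤ), h]

/-- The solution of `v_0 = 1`, `v_i ^ d * v_{i+1} = c` for `i < n`; the last equation `v_n ^ d = c`
of the cycle holds when `c ^ altGeomSum d (n + 1) = 1`. -/
noncomputable def cyclicZero (n d : ℕ) (c : K) (i : Fin (n + 1)) : K :=
  c ^ altGeomSum d i

theorem cyclicZero_pow_mul_cyclicZero_add_one {c : K} (hc0 : c ≠ 0)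
    (hc : c ^ altGeomSum d (n + 1) = 1) (i : Fin (n + 1)) :
    cyclicZero n d c i ^ d * cyclicZero n d c (i + 1) = c := by
  have hsucc : cyclicZero n d c (i + 1) = c ^ altGeomSum d (i + 1 : ℕ) := by
    rw [cyclicZero, Fin.val_add_one]
    split_ifs with hi
    · rw [hi, Fin.val_last, hc, altGeomSum_zero, zpow_zero]
    · rfl
  rw [hsucc, cyclicZero, ← zpow_natCast, ← _root_.zpow_mul, ← zpow_add₀ hc0, altGeomSum_succ,
    mul_comm, add_sub_cancel, zpow_one]

theorem cyclicZero_mem_affineZeros {c : K} (hc0 : c ≠ 0)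
    (hc : c ^ altGeomSum (m + 1) (n + 1) = 1) :
    cyclicZero n (m + 1) c ∈ affineZeros 0 (polyMap (cyclicPoly K n m)) := by
  refine ⟨by simp [cyclicZero, altGeomSum_zero], funext fun i => ?_⟩
  have hi := cyclicZero_pow_mul_cyclicZero_add_one hc0 hc i
  have hpred := cyclicZero_pow_mul_cyclicZero_add_one hc0 hc (i - 1)
  rw [sub_add_cancel] at hpred
  have hne : cyclicZero n (m + 1) c i ≠ 0 := zpow_ne_zero _ hc0
  rw [polyMap_cyclicPoly]
  refine (mul_eq_zero.1 ?_).resolve_left hne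
  linear_combination hi - hpred

theorem eq_cyclicZero_of_mem_affineZeros (hm : 1 ≤ m)
    (hv : v ∈ affineZeros 0 (polyMap (cyclicPoly K n m))) :
    v 1 ^ altGeomSum (m + 1) (n + 1) = 1 ∧ cyclicZero n (m + 1) (v 1) = v := by
  have hne := apply_ne_zero_of_polyMap_cyclicPoly_eq_zero hm (ne_zero_of_mem_affineZeros hv) hv.2
  have hconst (i : Fin (n + 1)) : v i ^ (m + 1) * v (i + 1) = v 1 := by
    rw [pow_mul_apply_add_one_eq hv.2, hv.1, one_pow, one_mul]
  have hpow := apply_natCast_eq_zpow_altGeomSum (hne 1) hv.1 hconst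
  refine ⟨?_, funext fun i => ?_⟩
  · rw [← hpow, Fin.natCast_self, hv.1]
  · rw [cyclicZero, ← hpow, Fin.cast_val_eq_self]

theorem affineZeros_cyclicPoly (hm : 1 ≤ m) :
    affineZeros 0 (polyMap (cyclicPoly K n m)) =
      cyclicZero n (m + 1) '' {c | c ≠ 0 ∧ c ^ altGeomSum (m + 1) (n + 1) = 1} := by
  refine Set.Subset.antisymm (fun v hv => ?_) ?_
  · have hv1 := apply_ne_zero_of_polyMap_cyclicPoly_eq_zero hm (ne_zero_of_mem_affineZeros hv)
      hv.2 1
    obtain ⟨hpow, hzero⟩ := eq_cyclicZero_of_mem_affineZeros hm hv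
    exact ⟨v 1, ⟨hv1, hpow⟩, hzero⟩
  · rintro _ ⟨c, ⟨hc0, hc⟩, rfl⟩
    exact cyclicZero_mem_affineZeros hc0 hc

theorem injOn_cyclicZero (n d : ℕ) :
    {c : K | c ≠ 0 ∧ c ^ altGeomSum d (n + 1) = 1}.InjOn (cyclicZero n d) := by
  rintro c ⟨hc0, hc⟩ c' ⟨hc0', hc'⟩ h
  rw [← cyclicZero_pow_mul_cyclicZero_add_one hc0 hc 0, h,
    cyclicZero_pow_mul_cyclicZero_add_one hc0' hc' 0]

end

theorem zpow_eq_one_iff_pow_natAbs_eq_one {G : Type*} [DivisionMonoid G] (c : G) (z : ℤ) :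
    c ^ z = 1 ↔ c ^ z.natAbs = 1 := by
  cases z <;> simp

theorem ncard_affineZeros_cyclicPoly {m : ℕ} (hm : 1 ≤ m) :
    (affineZeros 0 (polyMap (cyclicPoly ℂ n m))).ncard =
      (altGeomSum (m + 1) (n + 1)).natAbs := by
  have hN : (altGeomSum (m + 1) (n + 1)).natAbs ≠ 0 :=
    Int.natAbs_ne_zero.2 (altGeomSum_ne_zero (by omega) n)
  have hroots : {c : ℂ | c ≠ 0 ∧ c ^ altGeomSum (m + 1) (n + 1) = 1} =
      Polynomial.nthRootsFinset (altGeomSum (m + 1) (n + 1)).natAbs (1 : ℂ) := by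
    ext c
    rw [Finset.mem_coe, Polynomial.mem_nthRootsFinset (Nat.pos_of_ne_zero hN)]
    change c ≠ 0 ∧ _ ↔ _
    rw [zpow_eq_one_iff_pow_natAbs_eq_one]
    refine and_iff_right_of_imp ?_
    rintro h rfl
    exact zero_ne_one ((zero_pow hN).symm.trans h)
  rw [affineZeros_cyclicPoly hm, (injOn_cyclicZero n (m + 1)).ncard_image, hroots,
    Set.ncard_coe_finset, (Complex.isPrimitiveRoot_exp _ hN).card_nthRootsFinset]

end CyclicExample

section ExteriorAlgebra

variable {k : ℕ}

theorem eWedge_eq_basis (S : Finset (Fin k)) :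
    eWedge k S = (Pi.basisFun ℂ (Fin k)).ExteriorAlgebra S := by
  rw [ExteriorAlgebra.basis_apply]
  change _ = ιMulti ℂ S.card (Pi.basisFun ℂ (Fin k) ∘ S.orderEmbOfFin rfl)
  rw [ιMulti_apply, eWedge, ← Finset.listMap_orderEmbOfFin_finRange S rfl, List.map_map,
    List.ofFn_eq_map]
  simp [Function.comp_def]

theorem eWedge_singleton (j : Fin k) : eWedge k {j} = ι ℂ (Pi.single j (1 : ℂ)) := by
  simp [eWedge]

theorem eWedge_mul_ι_of_mem {S : Finset (Fin k)} {j : Fin k} (hj : j ∈ S) :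
    eWedge k S * ι ℂ (Pi.single j (1 : ℂ)) = 0 := by
  rw [← eWedge_singleton, eWedge_eq_basis, eWedge_eq_basis]
  exact basis_mul_of_not_disjoint _ ⟨S, rfl⟩ ⟨{j}, rfl⟩ (by simpa using hj)

theorem exists_eWedge_mul_ι_eq_smul {S : Finset (Fin k)} {j : Fin k} (hj : j ∉ S) :
    ∃ ε : ℤˣ, eWedge k S * ι ℂ (Pi.single j (1 : ℂ)) = ε • eWedge k (insert j S) := by
  have hdisj : Disjoint S {j} := Finset.disjoint_singleton_right.2 hj
  have hmul := basis_mul_of_disjoint (Pi.basisFun ℂ (Fin k)) ⟨S, rfl⟩ ⟨{j}, rfl⟩ hdisj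
  rw [Set.powersetCard.coe_disjUnion, Finset.disjUnion_eq_union, Finset.union_singleton] at hmul
  rw [← eWedge_singleton, eWedge_eq_basis, eWedge_eq_basis, eWedge_eq_basis]
  exact ⟨_, hmul⟩

/-- The coefficient of `e_0 ∧ ⋯ ∧ e_{k-1}`. -/
noncomputable def topCoeff (k : ℕ) : ExteriorAlgebra ℂ (Fin k → ℂ) →ₗ[ℂ] ℂ :=
  (Pi.basisFun ℂ (Fin k)).ExteriorAlgebra.coord Finset.univ

theorem topCoeff_eWedge_univ (k : ℕ) : topCoeff k (eWedge k Finset.univ) = 1 := by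
  rw [topCoeff, eWedge_eq_basis, Module.Basis.coord_apply, Module.Basis.repr_self,
    Finsupp.single_eq_same]

theorem topCoeff_eWedge_mul_ι_ne_zero {i : Fin k} :
    topCoeff k (eWedge k {i}ᶜ * ι ℂ (Pi.single i (1 : ℂ))) ≠ 0 := by
  obtain ⟨ε, hε⟩ := exists_eWedge_mul_ι_eq_smul (j := i) (S := {i}ᶜ) (by simp)
  rw [hε, Finset.insert_compl_self, LinearMap.map_smul_of_tower, topCoeff_eWedge_univ]
  exact fun h => one_ne_zero ((smul_eq_zero_iff_eq ε).1 h)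

theorem eq_zero_of_forall_topCoeff_mul_ι_eq_zero {ω : ExteriorAlgebra ℂ (Fin k → ℂ)}
    (hω : ω ∈ Submodule.span ℂ (Set.range fun i => eWedge k {i}ᶜ))
    (h : ∀ i, topCoeff k (ω * ι ℂ (Pi.single i (1 : ℂ))) = 0) : ω = 0 := by
  obtain ⟨c, rfl⟩ := (Submodule.mem_span_range_iff_exists_fun ℂ).1 hω
  refine Finset.sum_eq_zero fun i _ => ?_
  have hi : c i * topCoeff k (eWedge k {i}ᶜ * ι ℂ (Pi.single i (1 : ℂ))) = 0 := by
    rw [← smul_eq_mul, ← map_smul, ← h i, Finset.sum_mul, Finset.sum_eq_single i, smul_mul_assoc]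
    · intro j _ hj
      rw [smul_mul_assoc, eWedge_mul_ι_of_mem (by simpa using hj.symm), smul_zero]
    · simp
  rw [(mul_eq_zero.1 hi).resolve_right topCoeff_eWedge_mul_ι_ne_zero, zero_smul]

theorem eWedge_mul_ι_mem_span {S : Finset (Fin k)} (hS : S.card + 2 = k) (j : Fin k) :
    eWedge k S * ι ℂ (Pi.single j (1 : ℂ)) ∈
      Submodule.span ℂ (Set.range fun i => eWedge k {i}ᶜ) := by
  by_cases hj : j ∈ S
  · rw [eWedge_mul_ι_of_mem hj]
    exact Submodule.zero_mem _
  · obtain ⟨i, hi⟩ : ∃ i, (insert j S)ᶜ = {i} := by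
      rw [← Finset.card_eq_one, Finset.card_compl, Finset.card_insert_of_notMem hj,
        Fintype.card_fin]
      omega
    obtain ⟨ε, hε⟩ := exists_eWedge_mul_ι_eq_smul hj
    rw [hε, ← compl_compl (insert j S), hi]
    exact Submodule.smul_of_tower_mem _ ε (Submodule.subset_span ⟨i, rfl⟩)

theorem ι_eq_sum_smul_ι_single {R σ : Type*} [CommRing R] [Fintype σ] [DecidableEq σ] (v : σ → R) :
    ι R v = ∑ j, v j • ι R (Pi.single j (1 : R)) := by
  conv_lhs => rw [pi_eq_sum_univ' v]
  simp [map_sum]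

theorem tval_mul_ι_eq_zero_iff {b : ℕ} (hb : b + 2 = k)
    (q : {S : Finset (Fin k) // S.card = b} → MvPolynomial (Fin k) ℂ) (v : Fin k → ℂ) :
    tval k b q v * ι ℂ v = 0 ↔
      ∀ i, topCoeff k (tval k b q v * ι ℂ v * ι ℂ (Pi.single i (1 : ℂ))) = 0 := by
  refine ⟨fun h i => by rw [h, zero_mul, map_zero], eq_zero_of_forall_topCoeff_mul_ι_eq_zero ?_⟩
  rw [ι_eq_sum_smul_ι_single, tval, Finset.sum_mul_sum]
  refine Submodule.sum_mem _ fun S _ => Submodule.sum_mem _ fun j _ => ?_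
  rw [smul_mul_smul_comm]
  exact Submodule.smul_mem _ _ (eWedge_mul_ι_mem_span (by rw [S.2, hb]) j)

/-- The coefficient of `e_0 ∧ ⋯ ∧ e_{k-1}` in `e_S ∧ e_j ∧ e_i`. -/
noncomputable def wedgeCoeff (S : Finset (Fin k)) (j i : Fin k) : ℂ :=
  topCoeff k (eWedge k S * ι ℂ (Pi.single j (1 : ℂ)) * ι ℂ (Pi.single i (1 : ℂ)))

theorem wedgeCoeff_swap (S : Finset (Fin k)) (j i : Fin k) :
    wedgeCoeff S i j = -wedgeCoeff S j i := by
  rw [wedgeCoeff, wedgeCoeff, mul_assoc, eq_neg_of_add_eq_zero_left (ι_add_mul_swap _ _), mul_neg,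
    map_neg, mul_assoc]

theorem wedgeCoeff_of_mem_left {S : Finset (Fin k)} {j : Fin k} (hj : j ∈ S) (i : Fin k) :
    wedgeCoeff S j i = 0 := by
  rw [wedgeCoeff, eWedge_mul_ι_of_mem hj, zero_mul, map_zero]

theorem wedgeCoeff_of_mem_right {S : Finset (Fin k)} {i : Fin k} (hi : i ∈ S) (j : Fin k) :
    wedgeCoeff S j i = 0 := by
  rw [wedgeCoeff_swap, wedgeCoeff_of_mem_left hi, neg_zero]

theorem wedgeCoeff_self (S : Finset (Fin k)) (j : Fin k) : wedgeCoeff S j j = 0 :=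
  self_eq_neg.1 (wedgeCoeff_swap S j j)

theorem wedgeCoeff_mul_self {S : Finset (Fin k)} (hS : S.card + 2 = k) {j i : Fin k}
    (hj : j ∉ S) (hi : i ∉ S) (hij : i ≠ j) : wedgeCoeff S j i * wedgeCoeff S j i = 1 := by
  have hi' : i ∉ insert j S := by simp [hij, hi]
  obtain ⟨ε, hε⟩ := exists_eWedge_mul_ι_eq_smul hj
  obtain ⟨δ, hδ⟩ := exists_eWedge_mul_ι_eq_smul hi'
  have huniv : insert i (insert j S) = Finset.univ := by
    rw [← Finset.card_eq_iff_eq_univ, Finset.card_insert_of_notMem hi',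
      Finset.card_insert_of_notMem hj, hS, Fintype.card_fin]
  have hsign : wedgeCoeff S j i = (ε * δ : ℤˣ) • 1 := by
    rw [wedgeCoeff, hε, smul_mul_assoc, hδ, huniv, LinearMap.map_smul_of_tower,
      LinearMap.map_smul_of_tower, topCoeff_eWedge_univ, mul_smul]
  rw [hsign, smul_mul_smul_comm, Int.units_mul_self, one_smul, one_mul]

end ExteriorAlgebra

section Elimination

theorem exists_idealOfVars_pow_le {ι K : Type*} [Finite ι] [Field K] [IsAlgClosed K]
    {I : Ideal (MvPolynomial ι K)} (hI : ∀ v ∈ zeroLocus K I, v = 0) :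
    ∃ N, idealOfVars ι K ^ N ≤ I := by
  have hrad : idealOfVars ι K ≤ I.radical := by
    rw [← vanishingIdeal_zeroLocus_eq_radical (K := K), idealOfVars, Ideal.span_le]
    rintro _ ⟨i, rfl⟩ v hv
    simp [hI v hv]
  exact Ideal.exists_pow_le_of_le_radical_of_fg hrad (idealOfVars_fg ι K)

theorem eval_homogeneousComponent_eq_zero_of_mem_span {ι κ R : Type*} [CommRing R]
    {p : κ → MvPolynomial ι R} {d : κ → ℕ} (hp : ∀ k, (p k).IsHomogeneous (d k)) {v : ι → R}
    (hv : ∀ k, eval v (p k) = 0) {f : MvPolynomial ι R} (hf : f ∈ Ideal.span (Set.range p))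
    (N : ℕ) : eval v (homogeneousComponent N f) = 0 := by
  let := MvPolynomial.gradedAlgebra (σ := ι) (R := R)
  have hhom : (Ideal.span (Set.range p)).IsHomogeneous (homogeneousSubmodule ι R) :=
    Ideal.homogeneous_span _ _ (by rintro _ ⟨k, rfl⟩; exact ⟨d k, hp k⟩)
  have hle : Ideal.span (Set.range p) ≤ RingHom.ker (eval v) :=
    Ideal.span_le.2 (by rintro _ ⟨k, rfl⟩; exact hv k)
  exact hle (homogeneousComponent_mem_of_mem hhom hf N)

instance finite_degree_eq {ι : Type*} [Finite ι] (N : ℕ) : Finite {μ : ι →₀ ℕ // μ.degree = N} :=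
  ((Finsupp.finite_of_degree_le N).subset fun _ hμ => le_of_eq hμ).to_subtype

section CoeffMatrix

variable {ι R : Type*} [CommRing R] {N : ℕ}

/-- The coefficients, at the monomials of degree `N`, of polynomials indexed by these monomials. -/
def coeffMatrix (f : {μ : ι →₀ ℕ // μ.degree = N} → MvPolynomial ι R) :
    Matrix {μ : ι →₀ ℕ // μ.degree = N} {μ : ι →₀ ℕ // μ.degree = N} R :=
  Matrix.of fun μ ν => coeff ν.1 (f μ)

theorem coeffMatrix_monomial_one [DecidableEq ι] :
    coeffMatrix (fun μ : {μ : ι →₀ ℕ // μ.degree = N} => monomial μ.1 (1 : R)) = 1 := by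
  ext μ ν
  rw [coeffMatrix, Matrix.of_apply, coeff_monomial, Matrix.one_apply]
  exact if_congr Subtype.ext_iff.symm rfl rfl

variable [Fintype {μ : ι →₀ ℕ // μ.degree = N}]

theorem map_coeffMatrix [DecidableEq ι] {S : Type*} [CommRing S] (φ : R →+* S)
    (f : {μ : ι →₀ ℕ // μ.degree = N} → MvPolynomial ι R) :
    φ.mapMatrix (coeffMatrix f) = coeffMatrix fun μ => map φ (f μ) :=
  Matrix.ext fun _ _ => (coeff_map _ _ _).symm

theorem homogeneousComponent_eq_sum_monomial (f : MvPolynomial ι R) :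
    homogeneousComponent N f =
      ∑ μ : {μ : ι →₀ ℕ // μ.degree = N}, monomial μ.1 (coeff μ.1 f) := by
  classical
  ext ν
  simp only [coeff_homogeneousComponent, coeff_sum, coeff_monomial]
  split_ifs with hν
  · rw [Finset.sum_eq_single ⟨ν, hν⟩ (fun μ _ hμ => if_neg fun h => hμ (Subtype.ext h)) (by simp),
      if_pos rfl]
  · exact (Finset.sum_eq_zero fun μ _ => if_neg (by rintro rfl; exact hν μ.2)).symm

theorem eq_zero_of_det_coeffMatrix_ne_zero [DecidableEq ι] [IsDomain R]
    {f : {μ : ι →₀ ℕ // μ.degree = N} → MvPolynomial ι R} (hdet : (coeffMatrix f).det ≠ 0)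
    {v : ι → R} (hv : ∀ μ, eval v (homogeneousComponent N (f μ)) = 0) : v = 0 := by
  have hker : (coeffMatrix f).mulVec (fun ν => eval v (monomial ν.1 1)) = 0 := by
    funext μ
    rw [Pi.zero_apply, ← hv μ, homogeneousComponent_eq_sum_monomial, map_sum]
    simp [Matrix.mulVec, dotProduct, coeffMatrix, eval_monomial]
  have hmon := Matrix.eq_zero_of_mulVec_eq_zero hdet hker
  funext i
  have hi := congrFun hmon ⟨Finsupp.single i N, Finsupp.degree_single i N⟩
  rw [← X_pow_eq_monomial, map_pow, eval_X] at hi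
  exact eq_zero_of_pow_eq_zero hi

end CoeffMatrix

theorem exists_eval_ne_zero_of_forall_common_zero_eq_zero {σ ι κ K : Type*} [Finite ι]
    [Finite κ] [Field K] [IsAlgClosed K] {P : κ → MvPolynomial ι (MvPolynomial σ K)} {d : κ → ℕ}
    (hP : ∀ k, (P k).IsHomogeneous (d k)) {c₀ : σ → K}
    (h₀ : ∀ v : ι → K, (∀ k, eval v (map (eval c₀) (P k)) = 0) → v = 0) :
    ∃ D : MvPolynomial σ K, eval c₀ D ≠ 0 ∧ ∀ c, eval c D ≠ 0 →
      ∀ v : ι → K, (∀ k, eval v (map (eval c) (P k)) = 0) → v = 0 := by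
  classical
  have := Fintype.ofFinite κ
  obtain ⟨N, hle⟩ := exists_idealOfVars_pow_le
    (I := Ideal.span (Set.range fun k => map (eval c₀) (P k))) fun v hv => h₀ v fun k => by
      simpa using hv _ (Ideal.subset_span (Set.mem_range_self k))
  have := Fintype.ofFinite {μ : ι →₀ ℕ // μ.degree = N}
  have hmon (μ : {μ : ι →₀ ℕ // μ.degree = N}) :
      ∃ g : κ → MvPolynomial ι K, ∑ k, g k * map (eval c₀) (P k) = monomial μ.1 1 :=
    Ideal.mem_span_range_iff_exists_fun.1
      (hle ((monomial_mem_pow_idealOfVars_iff N μ.1 one_ne_zero).2 μ.2.ge))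
  choose g hg using hmon
  -- With the cofactors `g` kept fixed, the coefficient matrix of `F` specializes at `c₀` to the
  -- identity.
  let F (μ : {μ : ι →₀ ℕ // μ.degree = N}) : MvPolynomial ι (MvPolynomial σ K) :=
    ∑ k, map C (g μ k) * P k
  have hF (c : σ → K) (μ) : map (eval c) (F μ) = ∑ k, g μ k * map (eval c) (P k) := by
    have hC : (eval c).comp (C : K →+* MvPolynomial σ K) = RingHom.id K :=
      RingHom.ext (eval_C (f := c))
    simp only [F, map_sum, map_mul, MvPolynomial.map_map, hC, MvPolynomial.map_id]
  have heval (c : σ → K) :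
      eval c (coeffMatrix F).det = (coeffMatrix fun μ => map (eval c) (F μ)).det := by
    rw [RingHom.map_det, map_coeffMatrix]
  refine ⟨(coeffMatrix F).det, ?_, fun c hc v hv => ?_⟩
  · simp only [heval, hF, hg, coeffMatrix_monomial_one, Matrix.det_one]
    exact one_ne_zero
  · rw [heval] at hc
    refine eq_zero_of_det_coeffMatrix_ne_zero hc fun μ => ?_
    refine eval_homogeneousComponent_eq_zero_of_mem_span (fun k => (hP k).map (eval c)) hv ?_ N
    rw [hF]
    exact Ideal.mem_span_range_iff_exists_fun.2 ⟨g μ, rfl⟩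

end Elimination

section WedgePoly

variable {k b : ℕ} {R : Type*} [CommRing R] [Algebra ℂ R]

/-- The coefficients of `e_0 ∧ ⋯ ∧ e_{k-1}` in `M(v^m) ∧ v ∧ e_i`, as polynomials in `v`, where `q`
are the components of `M`. The algebra `R` allows for indeterminate coefficients in `q`. -/
noncomputable def wedgePoly (q : {S : Finset (Fin k) // S.card = b} → MvPolynomial (Fin k) R)
    (i : Fin k) : MvPolynomial (Fin k) R :=
  ∑ S, ∑ j, C (algebraMap ℂ R (wedgeCoeff S.1 j i)) * (q S * X j)

theorem isHomogeneous_wedgePoly {m : ℕ}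
    {q : {S : Finset (Fin k) // S.card = b} → MvPolynomial (Fin k) R}
    (hq : ∀ S, (q S).IsHomogeneous m) (i : Fin k) : (wedgePoly q i).IsHomogeneous (m + 1) :=
  IsHomogeneous.sum _ _ _ fun S _ => IsHomogeneous.sum _ _ _ fun j _ =>
    ((hq S).mul (isHomogeneous_X _ j)).C_mul _

theorem map_wedgePoly {R' : Type*} [CommRing R'] [Algebra ℂ R'] (f : R →ₐ[ℂ] R')
    (q : {S : Finset (Fin k) // S.card = b} → MvPolynomial (Fin k) R) (i : Fin k) :
    map (f : R →+* R') (wedgePoly q i) = wedgePoly (fun S => map (f : R →+* R') (q S)) i := by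
  simp [wedgePoly]

theorem wedgePoly_sum {ι : Type*} (s : Finset ι)
    (q : ι → {S : Finset (Fin k) // S.card = b} → MvPolynomial (Fin k) R) :
    wedgePoly (∑ x ∈ s, q x) = ∑ x ∈ s, wedgePoly (q x) := by
  funext i
  simp only [wedgePoly, Finset.sum_apply, Finset.sum_mul, Finset.mul_sum]
  exact (Finset.sum_congr rfl fun S _ => Finset.sum_comm).trans Finset.sum_comm

theorem wedgePoly_lineMap
    (q q' : {S : Finset (Fin k) // S.card = b} → MvPolynomial (Fin k) R) (t : R) :
    wedgePoly (AffineMap.lineMap q q' t) = AffineMap.lineMap (wedgePoly q) (wedgePoly q') t := by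
  funext i
  simp only [wedgePoly, AffineMap.pi_lineMap_apply, AffineMap.lineMap_apply_module,
    Finset.smul_sum, ← Finset.sum_add_distrib, smul_eq_C_mul]
  exact Finset.sum_congr rfl fun S _ => Finset.sum_congr rfl fun j _ => by ring

variable (q : {S : Finset (Fin k) // S.card = b} → MvPolynomial (Fin k) ℂ) (v : Fin k → ℂ)

theorem polyMap_wedgePoly (i : Fin k) :
    polyMap (wedgePoly q) v i =
      topCoeff k (tval k b q v * ι ℂ v * ι ℂ (Pi.single i (1 : ℂ))) := by
  rw [ι_eq_sum_smul_ι_single v, tval, Finset.sum_mul_sum, Finset.sum_mul, map_sum, polyMap,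
    wedgePoly, map_sum]
  refine Finset.sum_congr rfl fun S _ => ?_
  rw [Finset.sum_mul, map_sum, map_sum]
  refine Finset.sum_congr rfl fun j _ => ?_
  rw [smul_mul_smul_comm, smul_mul_assoc, map_smul, smul_eq_mul, ← wedgeCoeff]
  simp
  ring

theorem polyMap_wedgePoly_eq_zero_iff (hb : b + 2 = k) :
    polyMap (wedgePoly q) v = 0 ↔ tval k b q v * ι ℂ v = 0 := by
  rw [tval_mul_ι_eq_zero_iff hb, funext_iff]
  simp only [polyMap_wedgePoly, Pi.zero_apply]

theorem dotProduct_polyMap_wedgePoly : v ⬝ᵥ polyMap (wedgePoly q) v = 0 := by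
  calc v ⬝ᵥ polyMap (wedgePoly q) v
      = topCoeff k (tval k b q v * ι ℂ v * ∑ i, v i • ι ℂ (Pi.single i (1 : ℂ))) := by
        simp only [dotProduct, polyMap_wedgePoly, Finset.mul_sum, mul_smul_comm, map_sum, map_smul,
          smul_eq_mul]
    _ = 0 := by
        rw [← ι_eq_sum_smul_ι_single, mul_assoc, ι_sq_zero, mul_zero, map_zero]

end WedgePoly

section CyclicTensor

open scoped Fin.CommRing

variable {k b n : ℕ}

theorem wedgeCoeff_compl_pair_mul {a c : Fin k} (hac : a ≠ c) (j i : Fin k) :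
    wedgeCoeff {a, c}ᶜ j i * wedgeCoeff {a, c}ᶜ c a =
      (if j = c then if i = a then 1 else 0 else 0) -
        if j = a then if i = c then 1 else 0 else 0 := by
  have hcard : ({a, c}ᶜ : Finset (Fin k)).card + 2 = k := by
    rw [← Finset.card_pair hac, Finset.card_compl_add_card, Fintype.card_fin]
  have hsq := wedgeCoeff_mul_self hcard (j := c) (i := a) (by simp) (by simp) hac
  have hmem (x : Fin k) : x ∈ ({a, c}ᶜ : Finset (Fin k)) ∨ x = a ∨ x = c := by
    simp only [Finset.mem_compl, Finset.mem_insert, Finset.mem_singleton]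
    exact (em _).symm
  rcases hmem j with hj | rfl | rfl
  · rw [wedgeCoeff_of_mem_left hj]
    simp_all
  · rcases hmem i with hi | rfl | rfl
    · rw [wedgeCoeff_of_mem_right hi]
      simp_all
    · rw [wedgeCoeff_self]
      simp [hac]
    · rw [wedgeCoeff_swap, neg_mul, hsq]
      simp [hac]
  · rcases hmem i with hi | rfl | rfl
    · rw [wedgeCoeff_of_mem_right hi]
      simp_all
    · rw [hsq]
      simp [hac.symm]
    · rw [wedgeCoeff_self]
      simp [hac.symm]

/-- The components of the tensor `± f • e_S` with `S = {a, c}ᶜ`, the sign being chosen so that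
its product with `e_c ∧ e_a` is `f • (e_0 ∧ ⋯ ∧ e_{k-1})`. -/
noncomputable def complPairTensor (b : ℕ) (a c : Fin k) (f : MvPolynomial (Fin k) ℂ)
    (S : {S : Finset (Fin k) // S.card = b}) : MvPolynomial (Fin k) ℂ :=
  if S.1 = {a, c}ᶜ then C (wedgeCoeff S.1 c a) * f else 0

theorem isHomogeneous_complPairTensor {m : ℕ} {f : MvPolynomial (Fin k) ℂ}
    (hf : f.IsHomogeneous m) (a c : Fin k) (S : {S : Finset (Fin k) // S.card = b}) :
    (complPairTensor b a c f S).IsHomogeneous m := by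
  rw [complPairTensor]
  split_ifs
  · exact hf.C_mul _
  · exact isHomogeneous_zero _ _ _

theorem wedgePoly_complPairTensor (hb : b + 2 = k) {a c : Fin k} (hac : a ≠ c)
    (f : MvPolynomial (Fin k) ℂ) :
    wedgePoly (complPairTensor b a c f) = Pi.single a (f * X c) - Pi.single c (f * X a) := by
  have hcard : ({a, c}ᶜ : Finset (Fin k)).card = b := by
    rw [Finset.card_compl, Finset.card_pair hac, Fintype.card_fin, ← hb, Nat.add_sub_cancel]
  have hterm (j i : Fin k) :
      C (wedgeCoeff {a, c}ᶜ j i) * (C (wedgeCoeff {a, c}ᶜ c a) * f * X j) =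
        (if j = c then if i = a then f * X j else 0 else 0) -
          if j = a then if i = c then f * X j else 0 else 0 := by
    rw [mul_assoc (C _), ← mul_assoc, ← C_mul, wedgeCoeff_compl_pair_mul hac]
    simp only [map_sub, apply_ite C, C_1, C_0, sub_mul, ite_mul, one_mul, zero_mul]
  funext i
  rw [wedgePoly, Finset.sum_eq_single ⟨{a, c}ᶜ, hcard⟩]
  · simp only [complPairTensor, if_true, Algebra.algebraMap_self, RingHom.id_apply, hterm,
      Finset.sum_sub_distrib, Finset.sum_ite_eq', Finset.mem_univ, Pi.sub_apply, Pi.single_apply]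
  · intro S _ hS
    simp only [complPairTensor, if_neg fun h => hS (Subtype.ext h), zero_mul, mul_zero,
      Finset.sum_const_zero]
  · exact fun h => absurd (Finset.mem_univ _) h

/-- The components of a tensor whose associated polynomials are `cyclicPoly`. -/
noncomputable def cyclicTensor (n m b : ℕ) :
    {S : Finset (Fin (n + 1)) // S.card = b} → MvPolynomial (Fin (n + 1)) ℂ :=
  ∑ k, complPairTensor b k (k + 1) (X k ^ m)

theorem isHomogeneous_cyclicTensor (n m b : ℕ)
    (S : {S : Finset (Fin (n + 1)) // S.card = b}) : (cyclicTensor n m b S).IsHomogeneous m := by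
  rw [cyclicTensor, Finset.sum_apply]
  exact IsHomogeneous.sum _ _ _ fun k _ =>
    isHomogeneous_complPairTensor (isHomogeneous_X_pow k m) _ _ S

theorem wedgePoly_cyclicTensor (hb : b + 1 = n) (m : ℕ) :
    wedgePoly (cyclicTensor n m b) = cyclicPoly ℂ n m := by
  have hne (k : Fin (n + 1)) : k ≠ k + 1 := by
    rw [ne_eq, left_eq_add, Fin.one_eq_zero_iff]
    omega
  funext i
  simp only [cyclicTensor, wedgePoly_sum, wedgePoly_complPairTensor (congrArg (· + 1) hb) (hne _),
    ← pow_succ, Finset.sum_sub_distrib, Pi.sub_apply, Finset.sum_apply, Pi.single_apply, cyclicPoly,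
    ← sub_eq_iff_eq_add, Finset.sum_ite_eq, Finset.mem_univ, if_true]

end CyclicTensor

section Genericity

/-- The coefficients of degree `m` of a family of polynomials. -/
def coeffFamily {τ σ R : Type*} [CommSemiring R] (m : ℕ) (q : τ → MvPolynomial σ R)
    (t : τ × {μ : σ →₀ ℕ // μ.degree = m}) : R :=
  coeff t.2.1 (q t.1)

theorem coeffFamily_lineMap {τ σ R : Type*} [CommRing R] (m : ℕ) (q q' : τ → MvPolynomial σ R)
    (t : R) : coeffFamily m (AffineMap.lineMap q q' t) =
      AffineMap.lineMap (coeffFamily m q) (coeffFamily m q') t := by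
  funext x
  simp [coeffFamily, AffineMap.pi_lineMap_apply, AffineMap.lineMap_apply_module]

section

variable {τ σ : Type*} {R : Type*} [CommRing R] {m : ℕ} [Fintype {μ : σ →₀ ℕ // μ.degree = m}]

/-- The homogeneous polynomials of degree `m` indexed by `τ` with indeterminate coefficients. -/
noncomputable def genericPoly (R τ σ : Type*) [CommRing R] (m : ℕ)
    [Fintype {μ : σ →₀ ℕ // μ.degree = m}] (S : τ) :
    MvPolynomial σ (MvPolynomial (τ × {μ : σ →₀ ℕ // μ.degree = m}) R) :=
  ∑ μ : {μ : σ →₀ ℕ // μ.degree = m}, monomial μ.1 (X (S, μ))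

theorem isHomogeneous_genericPoly (S : τ) : (genericPoly R τ σ m S).IsHomogeneous m :=
  IsHomogeneous.sum _ _ _ fun μ _ => isHomogeneous_monomial _ μ.2

theorem map_genericPoly {q : τ → MvPolynomial σ R} (hq : ∀ S, (q S).IsHomogeneous m) (S : τ) :
    map (eval (coeffFamily m q)) (genericPoly R τ σ m S) = q S := by
  rw [← homogeneousComponent_eq_self (hq S), homogeneousComponent_eq_sum_monomial, genericPoly,
    map_sum]
  simp only [map_monomial, eval_X, coeffFamily]

end

theorem exists_eval_ne_zero_of_hasSimpleZeros_wedgePoly {k b m : ℕ} (i₀ : Fin k)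
    {q₀ : {S : Finset (Fin k) // S.card = b} → MvPolynomial (Fin k) ℂ}
    (hq₀ : ∀ S, (q₀ S).IsHomogeneous m) (h₀ : HasSimpleZeros i₀ m (wedgePoly q₀)) :
    ∃ D : MvPolynomial ({S : Finset (Fin k) // S.card = b} ×
        {μ : Fin k →₀ ℕ // μ.degree = m}) ℂ,
      eval (coeffFamily m q₀) D ≠ 0 ∧
      ∀ q : {S : Finset (Fin k) // S.card = b} → MvPolynomial (Fin k) ℂ,
        (∀ S, (q S).IsHomogeneous m) → eval (coeffFamily m q) D ≠ 0 →
        HasSimpleZeros i₀ m (wedgePoly q) := by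
  have := Fintype.ofFinite {μ : Fin k →₀ ℕ // μ.degree = m}
  let G := wedgePoly (genericPoly ℂ {S : Finset (Fin k) // S.card = b} (Fin k) m)
  have hG (i : Fin k) : (G i).IsHomogeneous (m + 1) :=
    isHomogeneous_wedgePoly isHomogeneous_genericPoly i
  have hmapG {q} (hq : ∀ S, (q S).IsHomogeneous m) :
      (fun i => map (eval (coeffFamily m q)) (G i)) = wedgePoly q := by
    funext i
    have h := map_wedgePoly (aeval (coeffFamily m q)) (genericPoly ℂ _ (Fin k) m) i
    rw [coe_aeval_eq_eval] at h
    simpa only [map_genericPoly hq] using h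
  let P (j : Option (Fin k)) := j.elim (chartJacobian i₀ m G).det G
  have hP (j : Option (Fin k)) :
      (P j).IsHomogeneous (j.elim (Fintype.card (Fin k) * m) fun _ => m + 1) := by
    cases j with
    | none => exact isHomogeneous_det_chartJacobian i₀ hG
    | some i => exact hG i
  have hiff {q} (hq : ∀ S, (q S).IsHomogeneous m) :
      (∀ v, (∀ j, eval v (map (eval (coeffFamily m q)) (P j)) = 0) → v = 0) ↔
        HasSimpleZeros i₀ m (wedgePoly q) := by
    refine forall_congr' fun v => ?_
    simp only [Option.forall, P, Option.elim, map_det_chartJacobian, ← hmapG hq, funext_iff,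
      polyMap, Pi.zero_apply]
    tauto
  obtain ⟨D, hD₀, hD⟩ := exists_eval_ne_zero_of_forall_common_zero_eq_zero hP ((hiff hq₀).2 h₀)
  exact ⟨D, hD₀, fun q hq hDq => (hiff hq).1 (hD _ hDq)⟩

theorem finite_setOf_eval_lineMap_eq_zero {τ R : Type*} [CommRing R] [IsDomain R]
    {D : MvPolynomial τ R} {c₀ : τ → R} (h : eval c₀ D ≠ 0) (c₁ : τ → R) :
    {t : R | eval (AffineMap.lineMap c₀ c₁ t) D = 0}.Finite := by
  let line (x : τ) : Polynomial R :=
    AffineMap.lineMap (Polynomial.C (c₀ x)) (Polynomial.C (c₁ x)) (Polynomial.X : Polynomial R)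
  have heval (t : R) :
      (aeval line D).eval t = eval (AffineMap.lineMap c₀ c₁ t) D := by
    rw [aeval_def, polynomial_eval_eval₂, ← eval₂_id]
    congr 1
    · ext; simp
    · funext x
      simp [line, AffineMap.pi_lineMap_apply, AffineMap.lineMap_apply_ring']
  have hne : aeval line D ≠ 0 := by
    intro h0
    refine h ?_
    rw [← AffineMap.lineMap_apply_zero (k := R) c₀ c₁, ← heval, h0, Polynomial.eval_zero]
  exact (Polynomial.finite_setOfPred_isRoot hne).subset fun t ht => (heval t).trans ht

theorem exists_forall_hasSimpleZeros_and_ncard_affineZeros {n m b : ℕ} (hm : 1 ≤ m)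
    (hb : b + 1 = n) :
    ∃ D : MvPolynomial ({S : Finset (Fin (n + 1)) // S.card = b} ×
        {μ : Fin (n + 1) →₀ ℕ // μ.degree = m}) ℂ,
      D ≠ 0 ∧
      ∀ q : {S : Finset (Fin (n + 1)) // S.card = b} → MvPolynomial (Fin (n + 1)) ℂ,
        (∀ S, (q S).IsHomogeneous m) → eval (coeffFamily m q) D ≠ 0 →
        HasSimpleZeros 0 m (wedgePoly q) ∧
          (affineZeros 0 (polyMap (wedgePoly q))).ncard =
            (altGeomSum (m + 1) (n + 1)).natAbs := by
  have hcyc := wedgePoly_cyclicTensor hb m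
  obtain ⟨D, hD₀, hD⟩ := exists_eval_ne_zero_of_hasSimpleZeros_wedgePoly 0
    (isHomogeneous_cyclicTensor n m b) (hcyc ▸ hasSimpleZeros_cyclicPoly hm)
  refine ⟨D, fun h => hD₀ (by rw [h, map_zero]), fun q hq hDq => ⟨hD q hq hDq, ?_⟩⟩
  rw [← ncard_affineZeros_cyclicPoly hm, ← hcyc]
  refine ncard_affineZeros_eq_of_hasSimpleZeros (m := m)
    (isHomogeneous_wedgePoly (isHomogeneous_cyclicTensor n m b)) (isHomogeneous_wedgePoly hq)
    (dotProduct_polyMap_wedgePoly _) (dotProduct_polyMap_wedgePoly _)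
    (finite_setOf_eval_lineMap_eq_zero hD₀ (coeffFamily m q)) ?_ ?_ fun t ht => ?_
  · simpa using hD₀
  · simpa using hDq
  · rw [← wedgePoly_lineMap]
    refine hD _ (fun S => ?_) (by rwa [coeffFamily_lineMap])
    rw [AffineMap.pi_lineMap_apply, AffineMap.lineMap_apply_module, smul_eq_C_mul, smul_eq_C_mul]
    exact ((isHomogeneous_cyclicTensor n m b S).C_mul _).add ((hq S).C_mul _)

end Genericity

/-- **Count of eigenvectors for `a = n−1`** (Proposition 6.2): a general tensor
`M ∈ Hom(S^mℂ^{n+1}, Λ^{n−1}ℂ^{n+1})`, represented by its component polynomials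
`(q_S)_{|S|=n−1}` homogeneous of degree `m` (`M(v^m) = Σ_S q_S(v) e_S`), has exactly
`((m+1)^{n+1} + (−1)^n)/(m+2)` eigenvector lines, where an eigenvector is a nonzero `v`
with `M(v^m) ∧ v = 0` in `Λ^nℂ^{n+1}`. -/
theorem statement9 (n m : ℕ) (hn : 2 ≤ n) (hm : 1 ≤ m) :
    ∃ D : MvPolynomial
        ({S : Finset (Fin (n+1)) // S.card = n - 1} ×
          {μ : Fin (n+1) →₀ ℕ // (μ.sum fun _ e => e) = m}) ℂ,
      D ≠ 0 ∧
      ∀ q : {S : Finset (Fin (n+1)) // S.card = n - 1} → MvPolynomial (Fin (n+1)) ℂ,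
        (∀ S, (q S).IsHomogeneous m) →
        MvPolynomial.eval (fun t => MvPolynomial.coeff t.2.1 (q t.1)) D ≠ 0 →
        ∃ v : Fin (if Even n then ((m+1)^(n+1) + 1) / (m+2)
                   else ((m+1)^(n+1) - 1) / (m+2)) → Fin (n+1) → ℂ,
          (∀ i, v i ≠ 0) ∧
          (∀ i j, i ≠ j → ∀ lam : ℂ, v i ≠ lam • v j) ∧
          (∀ i, tval (n+1) (n-1) q (v i) * ExteriorAlgebra.ι ℂ (v i) = 0) ∧
          (∀ w : Fin (n+1) → ℂ, w ≠ 0 →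
            tval (n+1) (n-1) q w * ExteriorAlgebra.ι ℂ w = 0 →
            ∃ i, ∃ mu : ℂ, w = mu • v i) := by
  have hb : n - 1 + 1 = n := by omega
  obtain ⟨D, hD₀, hD⟩ := exists_forall_hasSimpleZeros_and_ncard_affineZeros hm hb
  refine ⟨D, hD₀, fun q hq hDq => ?_⟩
  obtain ⟨hsimple, hcard⟩ := hD q hq hDq
  have hN := natAbs_altGeomSum m.succ_ne_zero (n + 1)
  simp only [Nat.even_add_one, ite_not] at hN
  have hzero (v) := polyMap_wedgePoly_eq_zero_iff q v (congrArg (· + 1) hb)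
  obtain ⟨v, hv, hinj, hsurj⟩ := hsimple.exists_representatives (isHomogeneous_wedgePoly hq)
    (hcard.trans hN) (hN ▸ Int.natAbs_ne_zero.2 (altGeomSum_ne_zero (by omega) n))
  exact ⟨v, fun i => (hv i).1, fun i j hij lam h => hij (hinj i j lam h),
    fun i => (hzero _).1 (hv i).2, fun w hw hwz => hsurj w hw ((hzero w).2 hwz)⟩
end

section
/- Let m ≥ 0 and let s be an integer with 2s ≤ (m+3)(m+1). For a general tuple of nonzero vectors v_1,…,v_s ∈ ℂ³, the linear map from symmetric m-multilinear maps M : (ℂ³)^m → ℂ³ to ⊕_{i=1}^s ℂ³/⟨v_i⟩ sending M to (M(v_i,…,v_i) mod ⟨v_i⟩)_{i=1,…,s} is surjective; equivalently, the subspace of those M having each v_i as an eigenvector has codimension exactly 2s, i.e. dimension 3·binom(m+2,2) − 2s. -/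
open MvPolynomial

/-!
Surjectivity of the evaluation map at `v` follows from the nonvanishing of a determinant that is
polynomial in `v`, so one good tuple is enough, and the points of a good tuple may be moved off any
given hypersurface. Write `Q` for the bundle on projective `n`-space with fibre `V / ⟨v⟩` at `[v]`.
At the point `(1, a, …, a ^ n)` of the rational normal curve the linear forms `a x_k - x_{k+1}` are
coordinates on this fibre; they identify the restriction of `Q` to the curve with a sum of `n`
copies of `𝒪(1)`. Hence `Q ⊗ 𝒪(m)` restricts to a sum of copies of `𝒪(nm + 1)`, and for `m ≥ 1` any
`nm + 2` points of the curve impose independent conditions on degree-`m` tensors. In the plane this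
gives `2m + 2` points on a conic, and multiplying by the equation of the conic adds these to a good
tuple for degree `m - 2` lying off the conic. The induction closes because
`(m + 3)(m + 1) = (m + 1)(m - 1) + 2(2m + 2)`.
-/

open scoped Polynomial

variable {K : Type*} [Field K] {σ ι κ : Type*}

/-- The tensors of degree `m` on `σ → K`, given by a form of degree `m` for each coordinate,
surject onto the sum over `i` of the quotients of `σ → K` by the line of `v i`, under evaluation
at the points `v i`. A class in a quotient is given by a representative `y i`, and `lam` witnesses
congruence modulo `v i`. -/
def EvaluationSurjective (m : ℕ) (v : ι → σ → K) : Prop :=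
  ∀ y : ι → σ → K, ∃ p : σ → MvPolynomial σ K, (∀ k, (p k).IsHomogeneous m) ∧
    ∀ i, ∃ lam : K, (fun k => eval (v i) (p k)) - y i = lam • v i

namespace EvaluationSurjective

lemma comp {m : ℕ} {v : ι → σ → K} (h : EvaluationSurjective m v) {f : κ → ι}
    (hf : Function.Injective f) : EvaluationSurjective m (v ∘ f) := by
  intro y
  obtain ⟨p, hp, hv⟩ := h (Function.extend f y 0)
  exact ⟨p, hp, fun i => by simpa only [Function.comp_apply, hf.extend_apply] using hv (f i)⟩

lemma exists_of_card_le [Fintype ι] [Fintype κ] {m : ℕ} {v : ι → σ → K}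
    (h : EvaluationSurjective m v) (hcard : Fintype.card κ ≤ Fintype.card ι) :
    ∃ w : κ → σ → K, EvaluationSurjective m w :=
  let ⟨f⟩ := Function.Embedding.nonempty_of_card_le hcard
  ⟨v ∘ f, h.comp f.injective⟩

lemma of_subsingleton [Subsingleton ι] (v : ι → σ → K) : EvaluationSurjective 0 v := by
  intro y
  rcases isEmpty_or_nonempty ι with _ | ⟨⟨i⟩⟩
  · exact ⟨0, fun _ => isHomogeneous_zero _ _ _, isEmptyElim⟩
  · refine ⟨fun k => C (y i k), fun k => isHomogeneous_C _ _, fun j => ⟨0, ?_⟩⟩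
    ext k
    simp [Subsingleton.elim j i]

/-- Multiples of `q` vanish on `w`, so they correct the values at `v` without disturbing those
at `w`. -/
lemma sumElim {m d : ℕ} {v : ι → σ → K} {w : κ → σ → K}
    (hv : EvaluationSurjective m v) (hw : EvaluationSurjective (m + d) w)
    {q : MvPolynomial σ K} (hq : q.IsHomogeneous d)
    (hqv : ∀ i, eval (v i) q ≠ 0) (hqw : ∀ j, eval (w j) q = 0) :
    EvaluationSurjective (m + d) (Sum.elim v w) := by
  intro y
  obtain ⟨p, hp, hpw⟩ := hw (y ∘ Sum.inr)
  obtain ⟨r, hr, hrv⟩ := hv fun i =>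
    (eval (v i) q)⁻¹ • (y (Sum.inl i) - fun k => eval (v i) (p k))
  refine ⟨fun k => p k + r k * q, fun k => (hp k).add ((hr k).mul hq), ?_⟩
  rintro (i | j)
  · obtain ⟨lam, hlam⟩ := hrv i
    refine ⟨eval (v i) q * lam, ?_⟩
    ext k
    have hk := congrFun hlam k
    simp only [Pi.sub_apply, Pi.smul_apply, smul_eq_mul, Sum.elim_inl, map_add, map_mul] at hk ⊢
    rw [mul_assoc, ← hk, mul_sub, mul_inv_cancel_left₀ (hqv i)]
    ring
  · obtain ⟨lam, hlam⟩ := hpw j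
    exact ⟨lam, by simpa [hqw j] using hlam⟩

end EvaluationSurjective

section Genericity

variable {τ : Type*}

/-- For tensors `p e` and scalars `lam e i`, the matrix whose column `e` has the coordinates of the
vectors `p e (v i) - lam e i • v i`, as polynomials in the coordinates of the points `v i`. -/
noncomputable def evaluationMatrix (p : τ → σ → MvPolynomial σ K) (lam : τ → ι → K) :
    Matrix (ι × σ) τ (MvPolynomial (ι × σ) K) :=
  .of fun r e => rename (Prod.mk r.1) (p e r.2) - C (lam e r.1) * X r

lemma eval_evaluationMatrix (p : τ → σ → MvPolynomial σ K) (lam : τ → ι → K) (v : ι → σ → K)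
    (r : ι × σ) (e : τ) :
    (evaluationMatrix p lam).map (eval (Function.uncurry v)) r e =
      eval (v r.1) (p e r.2) - lam e r.1 * v r.1 r.2 := by
  simp [evaluationMatrix, eval_rename, Function.comp_def, Function.uncurry]

namespace EvaluationSurjective

lemma of_mulVec_surjective [Fintype τ] {m : ℕ} {p : τ → σ → MvPolynomial σ K}
    (hp : ∀ e k, (p e k).IsHomogeneous m) {lam : τ → ι → K} {v : ι → σ → K}
    (h : Function.Surjective ((evaluationMatrix p lam).map (eval (Function.uncurry v))).mulVec) :
    EvaluationSurjective m v := by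
  intro y
  obtain ⟨c, hc⟩ := h (Function.uncurry y)
  refine ⟨fun k => ∑ e, C (c e) * p e k,
    fun k => IsHomogeneous.sum _ _ _ fun e _ => (hp e k).C_mul _, fun i => ⟨∑ e, c e * lam e i, ?_⟩⟩
  ext k
  have hik : ∑ e, (eval (v i) (p e k) - lam e i * v i k) * c e = y i k := by
    simpa only [Matrix.mulVec, dotProduct, eval_evaluationMatrix, Function.uncurry_apply_pair]
      using congrFun hc (i, k)
  simp only [Pi.sub_apply, Pi.smul_apply, smul_eq_mul, map_sum, map_mul, eval_C, ← hik,
    Finset.sum_mul, ← Finset.sum_sub_distrib]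
  exact Finset.sum_congr rfl fun e _ => by ring

lemma exists_evaluationMatrix_eq_one [DecidableEq (ι × σ)] {m : ℕ} {w : ι → σ → K}
    (hw : EvaluationSurjective m w) :
    ∃ (p : ι × σ → σ → MvPolynomial σ K) (lam : ι × σ → ι → K),
      (∀ e k, (p e k).IsHomogeneous m) ∧
        (evaluationMatrix p lam).map (eval (Function.uncurry w)) = 1 := by
  choose p hp lam hlam using fun e : ι × σ =>
    hw fun j l => (1 : Matrix (ι × σ) (ι × σ) K) (j, l) e
  refine ⟨p, lam, hp, ?_⟩
  ext r e
  have hre : eval (w r.1) (p e r.2) - (1 : Matrix (ι × σ) (ι × σ) K) r e =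
      lam e r.1 * w r.1 r.2 := congrFun (hlam e r.1) r.2
  rw [eval_evaluationMatrix, ← hre, sub_sub_cancel]

lemma exists_polynomial_forall_eval_ne_zero [Finite ι] [Finite σ] {m : ℕ} {w : ι → σ → K}
    (hw : EvaluationSurjective m w) :
    ∃ D : MvPolynomial (ι × σ) K, D ≠ 0 ∧
      ∀ v : ι → σ → K, eval (Function.uncurry v) D ≠ 0 → EvaluationSurjective m v := by
  classical
  cases nonempty_fintype ι
  cases nonempty_fintype σ
  obtain ⟨p, lam, hp, hone⟩ := hw.exists_evaluationMatrix_eq_one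
  have eval_det : ∀ v : ι → σ → K, eval (Function.uncurry v) (evaluationMatrix p lam).det =
      ((evaluationMatrix p lam).map (eval (Function.uncurry v))).det := fun v =>
    RingHom.map_det _ _
  refine ⟨(evaluationMatrix p lam).det, fun hzero => ?_, fun v hv => ?_⟩
  · have hdet := eval_det w
    rw [hone, hzero, map_zero, Matrix.det_one] at hdet
    exact zero_ne_one hdet
  · rw [eval_det] at hv
    exact of_mulVec_surjective hp <| Matrix.mulVec_surjective_iff_isUnit.mpr <|
      (Matrix.isUnit_iff_isUnit_det _).mpr hv.isUnit

lemma exists_off_hypersurface [Infinite K] [Finite ι] [Finite σ] {m : ℕ} {v : ι → σ → K}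
    (hv : EvaluationSurjective m v) {q : MvPolynomial σ K} (hq : q ≠ 0) :
    ∃ w : ι → σ → K, EvaluationSurjective m w ∧ ∀ i, eval (w i) q ≠ 0 := by
  cases nonempty_fintype ι
  obtain ⟨D, hD, hsurj⟩ := hv.exists_polynomial_forall_eval_ne_zero
  have hprod : D * ∏ i, rename (Prod.mk i) q ≠ 0 :=
    mul_ne_zero hD <| Finset.prod_ne_zero_iff.mpr fun i _ =>
      (map_ne_zero_iff _ (rename_injective _ (Prod.mk_right_injective i))).mpr hq
  obtain ⟨u, hu⟩ : ∃ u, eval u (D * ∏ i, rename (Prod.mk i) q) ≠ 0 := by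
    by_contra! hzero
    exact hprod (MvPolynomial.funext fun u => by rw [hzero u, map_zero])
  rw [map_mul, map_prod] at hu
  refine ⟨Function.curry u, hsurj _ ?_, fun i => ?_⟩
  · rw [Function.uncurry_curry]
    exact left_ne_zero_of_mul hu
  · have hi := Finset.prod_ne_zero_iff.mp (right_ne_zero_of_mul hu) i (Finset.mem_univ i)
    rwa [eval_rename] at hi

end EvaluationSurjective

end Genericity

section RationalNormalCurve

variable {R : Type*} [CommSemiring R]

/-- The point with parameter `a` on the affine cone over the rational normal curve of degree `n`. -/
def rationalNormalCurve (n : ℕ) (a : R) : Fin (n + 1) → R :=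
  fun k => a ^ (k : ℕ)

lemma exists_isHomogeneous_eval_rationalNormalCurve_eq_pow {n m j : ℕ} (hj : j ≤ n * m) :
    ∃ P : MvPolynomial (Fin (n + 1)) R, P.IsHomogeneous m ∧
      ∀ a : R, eval (rationalNormalCurve n a) P = a ^ j := by
  induction m generalizing j with
  | zero =>
    obtain rfl : j = 0 := by simpa using hj
    exact ⟨1, isHomogeneous_one _ _, fun a => by simp⟩
  | succ m ih =>
    rw [Nat.mul_succ] at hj
    obtain ⟨P, hP, heval⟩ := ih (j := j - min j n) (by omega)
    refine ⟨P * X ⟨min j n, by omega⟩, hP.mul (isHomogeneous_X _ _), fun a => ?_⟩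
    rw [map_mul, heval, eval_X, rationalNormalCurve, pow_sub_mul_pow a (min_le_left j n)]

lemma exists_isHomogeneous_eval_rationalNormalCurve_eq_eval {n m : ℕ} {f : R[X]}
    (hf : f.natDegree ≤ n * m) :
    ∃ P : MvPolynomial (Fin (n + 1)) R, P.IsHomogeneous m ∧
      ∀ a, eval (rationalNormalCurve n a) P = f.eval a := by
  choose! P hP heval using fun j (hj : j ≤ n * m) =>
    exists_isHomogeneous_eval_rationalNormalCurve_eq_pow (R := R) hj
  refine ⟨∑ j ∈ Finset.range (n * m + 1), C (f.coeff j) * P j,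
    IsHomogeneous.sum _ _ _ fun j hj => (hP j (Finset.mem_range_succ_iff.mp hj)).C_mul _,
    fun a => ?_⟩
  rw [Polynomial.eval_eq_sum_range' (Nat.lt_succ_of_le hf), map_sum]
  refine Finset.sum_congr rfl fun j hj => ?_
  rw [map_mul, eval_C, heval j (Finset.mem_range_succ_iff.mp hj)]

lemma eq_smul_rationalNormalCurve {n : ℕ} {a : R} {z : Fin (n + 1) → R}
    (hz : ∀ k : Fin n, a * z k.castSucc = z k.succ) : z = z 0 • rationalNormalCurve n a := by
  ext k
  induction k using Fin.induction with
  | zero => simp [rationalNormalCurve]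
  | succ k ih =>
    rw [← hz, ih]
    simp only [rationalNormalCurve, Pi.smul_apply, smul_eq_mul, Fin.val_castSucc, Fin.val_succ]
    ring

end RationalNormalCurve

section JumpSolution

variable {R : Type*} [CommRing R]

/-- A solution `f` of `X * f i - f (i + 1) = 0` for `i ≠ k` and `X * f k - f (k + 1) = g`: with
quotient `q` and remainder `r` of `g` by `X ^ (k + 1)`, it is
`(1, X, …, X ^ k, 0, 0, …) * q - (0, …, 0, 1, X, X ^ 2, …) * r`. The division keeps the degrees
low on both sides of the jump. -/
noncomputable def jumpSolution (k : ℕ) (g : R[X]) (i : ℕ) : R[X] :=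
  if i ≤ k then Polynomial.X ^ i * (g /ₘ Polynomial.X ^ (k + 1))
  else -(Polynomial.X ^ (i - (k + 1)) * (g %ₘ Polynomial.X ^ (k + 1)))

lemma X_mul_jumpSolution_sub_succ (k : ℕ) (g : R[X]) (i : ℕ) :
    Polynomial.X * jumpSolution k g i - jumpSolution k g (i + 1) = if k = i then g else 0 := by
  rcases lt_trichotomy i k with hik | rfl | hik
  · simp only [jumpSolution, if_pos hik.le, if_pos (Nat.succ_le_of_lt hik), if_neg hik.ne']
    ring
  · simp only [jumpSolution, le_refl, if_true, if_neg (Nat.not_succ_le_self _), Nat.sub_self]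
    linear_combination Polynomial.modByMonic_add_div g (Polynomial.X ^ (i + 1))
  · simp only [jumpSolution, if_neg hik.ne, if_neg hik.not_ge,
      if_neg (Nat.lt_succ_of_lt hik).not_ge, Nat.sub_add_comm (Nat.succ_le_of_lt hik)]
    ring

lemma natDegree_jumpSolution_le {k d i : ℕ} (hk : k ≤ d) (hi : i ≤ d + 1) {g : R[X]}
    (hg : g.natDegree ≤ d + 1) : (jumpSolution k g i).natDegree ≤ d := by
  nontriviality R
  have hmonic : (Polynomial.X ^ (k + 1) : R[X]).Monic := Polynomial.monic_X_pow _
  rw [jumpSolution]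
  split_ifs with hik
  · have hquot := Polynomial.natDegree_divByMonic g hmonic
    rw [Polynomial.natDegree_X_pow] at hquot
    refine (Polynomial.natDegree_mul_le_of_le (Polynomial.natDegree_X_pow_le _) hquot.le).trans ?_
    omega
  · have hne : (Polynomial.X ^ (k + 1) : R[X]) ≠ 1 := fun h => by
      simpa using congrArg Polynomial.natDegree h
    have hrem := Polynomial.natDegree_modByMonic_lt g hmonic hne
    rw [Polynomial.natDegree_X_pow] at hrem
    rw [Polynomial.natDegree_neg]
    refine (Polynomial.natDegree_mul_le_of_le (Polynomial.natDegree_X_pow_le _) le_rfl).trans ?_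
    omega

lemma exists_X_mul_castSucc_sub_succ_eq {n d : ℕ} (hn : n ≤ d + 1) {g : Fin n → R[X]}
    (hg : ∀ k, (g k).natDegree ≤ d + 1) :
    ∃ f : Fin (n + 1) → R[X], (∀ i, (f i).natDegree ≤ d) ∧
      ∀ k : Fin n, Polynomial.X * f k.castSucc - f k.succ = g k := by
  refine ⟨fun i => ∑ k : Fin n, jumpSolution k (g k) i, fun i =>
    Polynomial.natDegree_sum_le_of_forall_le _ _ fun k _ =>
      natDegree_jumpSolution_le (by omega) (i.is_le.trans hn) (hg k), fun i => ?_⟩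
  simp only [Fin.val_castSucc, Fin.val_succ, Finset.mul_sum, ← Finset.sum_sub_distrib,
    X_mul_jumpSolution_sub_succ, Fin.val_inj, Finset.sum_ite_eq', Finset.mem_univ, if_true]

end JumpSolution

lemma exists_natDegree_le_forall_eval_eq [Fintype ι] {d : ℕ} (hι : Fintype.card ι ≤ d + 1)
    {a : ι → K} (ha : Function.Injective a) (r : ι → K) :
    ∃ g : K[X], g.natDegree ≤ d ∧ ∀ i, g.eval (a i) = r i := by
  classical
  refine ⟨Lagrange.interpolate Finset.univ a r, ?_, fun i =>
    Lagrange.eval_interpolate_at_node r ha.injOn (Finset.mem_univ i)⟩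
  refine (Polynomial.natDegree_le_of_degree_le (Lagrange.degree_interpolate_le r ha.injOn)).trans ?_
  rw [Finset.card_univ]
  omega

lemma evaluationSurjective_rationalNormalCurve [Fintype ι] {n m : ℕ} (hm : 1 ≤ m)
    (hι : Fintype.card ι ≤ n * m + 2) {a : ι → K} (ha : Function.Injective a) :
    EvaluationSurjective m fun i => rationalNormalCurve n (a i) := by
  intro y
  choose g hg heval using fun k : Fin n =>
    exists_natDegree_le_forall_eval_eq hι ha fun i => a i * y i k.castSucc - y i k.succ
  obtain ⟨f, hf, hfg⟩ :=
    exists_X_mul_castSucc_sub_succ_eq (le_add_right (Nat.le_mul_of_pos_right n hm)) hg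
  choose P hP hPf using fun k => exists_isHomogeneous_eval_rationalNormalCurve_eq_eval (hf k)
  refine ⟨P, hP, fun i => ⟨_, eq_smul_rationalNormalCurve fun k => ?_⟩⟩
  have hk : a i * (f k.castSucc).eval (a i) - (f k.succ).eval (a i) =
      a i * y i k.castSucc - y i k.succ := by
    simpa only [Polynomial.eval_sub, Polynomial.eval_mul, Polynomial.eval_X, heval] using
      congrArg (Polynomial.eval (a i)) (hfg k)
  simp only [Pi.sub_apply, hPf]
  linear_combination hk

section Plane

variable {R : Type*} [CommRing R]

/-- The quadratic form cutting out the plane curve `rationalNormalCurve 2`. -/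
noncomputable def conic (R : Type*) [CommRing R] : MvPolynomial (Fin 3) R :=
  X 0 * X 2 - X 1 ^ 2

lemma isHomogeneous_conic : (conic R).IsHomogeneous 2 :=
  ((isHomogeneous_X R 0).mul (isHomogeneous_X R 2)).sub (isHomogeneous_X_pow 1 2)

lemma eval_rationalNormalCurve_conic (a : R) : eval (rationalNormalCurve 2 a) (conic R) = 0 := by
  simp [conic, rationalNormalCurve]

lemma conic_ne_zero [Nontrivial R] : conic R ≠ 0 := by
  intro h
  simpa [conic] using congrArg (eval ![1, 0, 1]) h

variable [Infinite K]

lemma EvaluationSurjective.exists_sum_conic [Finite ι] [Fintype κ] {m : ℕ} {v : ι → Fin 3 → K}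
    (hv : EvaluationSurjective m v) (hκ : Fintype.card κ ≤ 2 * (m + 2) + 2) :
    ∃ w : ι ⊕ κ → Fin 3 → K, EvaluationSurjective (m + 2) w := by
  obtain ⟨u, hu, hconic⟩ := hv.exists_off_hypersurface conic_ne_zero
  let a : κ ↪ K :=
    (Fintype.equivFin κ).toEmbedding.trans (Fin.valEmbedding.trans (Infinite.natEmbedding K))
  have hcurve := evaluationSurjective_rationalNormalCurve (Nat.le_add_left 1 (m + 1)) hκ a.injective
  exact ⟨_, hu.sumElim hcurve isHomogeneous_conic hconic fun j => eval_rationalNormalCurve_conic _⟩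

variable (K) in
lemma exists_evaluationSurjective (m : ℕ) :
    ∃ v : Fin ((m + 3) * (m + 1) / 2) → Fin 3 → K, EvaluationSurjective m v := by
  induction m using Nat.twoStepInduction with
  | zero => exact ⟨1, .of_subsingleton (ι := Fin 1) 1⟩
  | one =>
    exact ⟨_, evaluationSurjective_rationalNormalCurve le_rfl (ι := Fin 4) (by simp)
      ((Infinite.natEmbedding K).injective.comp Fin.val_injective)⟩
  | more m ih _ =>
    obtain ⟨v, hv⟩ := ih
    obtain ⟨w, hw⟩ := hv.exists_sum_conic (κ := Fin (2 * (m + 2) + 2)) (Fintype.card_fin _).le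
    refine hw.exists_of_card_le ?_
    have hcount : (m + 2 + 3) * (m + 2 + 1) = (m + 3) * (m + 1) + 2 * (2 * (m + 2) + 2) := by ring
    simp only [Fintype.card_sum, Fintype.card_fin]
    omega

end Plane

theorem statement11_general {K : Type*} [Field K] [Infinite K] {ι : Type*} [Fintype ι] (m : ℕ)
    (hι : 2 * Fintype.card ι ≤ (m + 3) * (m + 1)) :
    ∃ D : MvPolynomial (ι × Fin 3) K, D ≠ 0 ∧
      ∀ v : ι → Fin 3 → K, eval (Function.uncurry v) D ≠ 0 → EvaluationSurjective m v := by
  obtain ⟨v, hv⟩ := exists_evaluationSurjective K m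
  obtain ⟨w, hw⟩ := hv.exists_of_card_le (κ := ι) (by rw [Fintype.card_fin]; omega)
  exact hw.exists_polynomial_forall_eval_ne_zero

/-- Theorem 5.1(i) for `ℙ²`: if `2s ≤ (m+3)(m+1)`, then for a general tuple of nonzero
vectors `v_1,…,v_s ∈ ℂ³`, the evaluation map sending a tensor
`M ∈ Hom(S^mℂ³, ℂ³)` (represented by three homogeneous degree-`m` component
polynomials) to `(M(v_i^m) mod ⟨v_i⟩)_i ∈ ⊕_i ℂ³/⟨v_i⟩` is surjective; equivalently,
the tensors having each `v_i` as an eigenvector form a subspace of codimension `2s`. -/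
theorem statement11 (m s : ℕ) (hs : 2 * s ≤ (m + 3) * (m + 1)) :
    ∃ D : MvPolynomial (Fin s × Fin 3) ℂ, D ≠ 0 ∧
      ∀ v : Fin s → Fin 3 → ℂ, (∀ i, v i ≠ 0) →
        MvPolynomial.eval (fun t => v t.1 t.2) D ≠ 0 →
        ∀ y : Fin s → Fin 3 → ℂ,
          ∃ p : Fin 3 → MvPolynomial (Fin 3) ℂ,
            (∀ k, (p k).IsHomogeneous m) ∧
            ∀ i, ∃ lam : ℂ, (fun k => MvPolynomial.eval (v i) (p k)) - y i = lam • v i := by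
  obtain ⟨D, hD, hsurj⟩ := statement11_general (K := ℂ) m ((Fintype.card_fin s).symm ▸ hs)
  exact ⟨D, hD, fun v _ => hsurj v⟩
end

section
/- Let m ≥ 2 and 2s ≤ m² + 3m + 4, or m = 1 and s ≤ 3. For a general tuple of nonzero vectors v_1,…,v_s ∈ ℂ³, let W = {M ∈ Hom(S^mℂ³, ℂ³) : M(v_i^m) ∧ v_i = 0 for all i = 1,…,s}. Then a nonzero v ∈ ℂ³ satisfies M(v^m) ∧ v = 0 for every M ∈ W if and only if v is a scalar multiple of some v_i; that is, the common eigenvectors of W are exactly the nonzero multiples of v_1,…,v_s. -/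
open MvPolynomial ExteriorAlgebra

/-!
For `x` in the ambient space `V`, write `ev_x` for evaluation at `x` on the space of forms of
degree `m`; let `N` be the dimension of the latter.

If `u` is a common eigenvector of the tensors with eigenvectors `v_i`, then `ev_u = ∑ b_i ev_{v_i}`
for some `b_i`: otherwise some form `f` vanishes at all the `v_i` but not at `u`, and `f` times a
vector outside `⟨u⟩` is a tensor that has the `v_i`, but not `u`, as eigenvectors. Moreover, a
tensor `p` with `p(v_i) = l_i v_i` exists as soon as the vectors `l_i v_i` satisfy every linear
relation between the `ev_{v_i}`, and then `p(u) = ∑ b_i l_i v_i` lies in `⟨u⟩`.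

For at most `N` general points there are no relations, so the `l_i` are arbitrary and some `v_i`
with `b_i ≠ 0` lies in `⟨u⟩`. For `N + 1` general points there is one relation
`∑ a_i ev_{v_i} = 0` up to scaling, and all its coefficients are nonzero. The condition on `l` then
says that `∑ a_i l_i v_i = 0` implies `∑ b_i l_i v_i ∈ ⟨u⟩`, so that there is a linear map `T` from
`V` to `V / ⟨u⟩` with `T v_i = (b_i / a_i) π v_i`, where `π` is the projection. The quadrics
`α(Tx) β(πx) - β(Tx) α(πx)` vanish at the `v_i`; multiplied by a form of degree `m - 2`, they are
forms of degree `m` killed by the `ev_{v_i}`, which span the dual space, hence zero. So `Tx` is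
parallel to `πx` for every `x`, and since `dim V / ⟨u⟩ ≥ 2` this makes `T` a multiple `c π`. As
`ev_u ≠ 0`, some `b_i / a_i` differs from `c`, and for this `i` the vector `v_i` lies in `⟨u⟩`.
-/

section LinearAlgebra

variable {K V W ι : Type*} [Field K] [AddCommGroup V] [Module K V] [AddCommGroup W] [Module K W]

theorem exists_linearMap_comp_eq_of_ker_le {U : Type*} [AddCommGroup U] [Module K U]
    {f : U →ₗ[K] V} {g : U →ₗ[K] W} (h : LinearMap.ker f ≤ LinearMap.ker g) :
    ∃ T : V →ₗ[K] W, T ∘ₗ f = g := by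
  obtain ⟨r, hr⟩ := ((LinearMap.ker f).liftQ f le_rfl).exists_leftInverse_of_injective
    (Submodule.ker_liftQ_eq_bot' _ f rfl)
  refine ⟨(LinearMap.ker f).liftQ g h ∘ₗ r, LinearMap.ext fun x => ?_⟩
  have hrx : r (f x) = (LinearMap.ker f).mkQ x := LinearMap.congr_fun hr ((LinearMap.ker f).mkQ x)
  simp [hrx]

theorem exists_linearMap_apply_eq [Fintype ι] {x : ι → V} {y : ι → W}
    (h : ∀ c : ι → K, ∑ i, c i • x i = 0 → ∑ i, c i • y i = 0) :
    ∃ T : V →ₗ[K] W, ∀ i, T (x i) = y i := by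
  classical
  obtain ⟨T, hT⟩ := exists_linearMap_comp_eq_of_ker_le
    (f := Fintype.linearCombination K x) (g := Fintype.linearCombination K y) fun c hc => by
      simpa [Fintype.linearCombination_apply] using h c hc
  exact ⟨T, fun i => by simpa using LinearMap.congr_fun hT (Pi.single i 1)⟩

theorem span_range_eq_top_of_linearIndepOn [FiniteDimensional K V] {x : ι → V} {S : Finset ι}
    (h : LinearIndepOn K x S) (hS : S.card = Module.finrank K V) :
    Submodule.span K (Set.range x) = ⊤ := by
  rw [eq_top_iff, ← h.span_eq_top_of_card_eq_finrank' (by simpa using hS)]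
  exact Submodule.span_mono (Set.range_comp_subset_range Subtype.val x)

theorem exists_forall_dual_apply_eq [FiniteDimensional K V] [Fintype ι]
    {φ : ι → Module.Dual K V} {y : ι → K}
    (h : ∀ c : ι → K, ∑ i, c i • φ i = 0 → ∑ i, c i * y i = 0) :
    ∃ x : V, ∀ i, φ i x = y i := by
  obtain ⟨T, hT⟩ := exists_linearMap_apply_eq (x := φ) (y := y) h
  exact ⟨(Module.evalEquiv K V).symm T, fun i => by simp [hT]⟩

theorem exists_linearIndependent_of_span_eq_top [FiniteDimensional K V] [Fintype ι] {X : Type*}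
    {x : X → V} (hx : Submodule.span K (Set.range x) = ⊤)
    (hι : Fintype.card ι ≤ Module.finrank K V) :
    ∃ a : ι → X, LinearIndependent K (x ∘ a) := by
  obtain ⟨κ, a, -, hspan, hli⟩ := exists_linearIndependent' K x
  let b : Module.Basis κ K V := .mk hli (by rw [hspan, hx])
  have : Fintype κ := FiniteDimensional.fintypeBasisIndex b
  obtain ⟨e⟩ : Nonempty (ι ↪ κ) := Function.Embedding.nonempty_of_card_le <| by
    rwa [← Module.finrank_eq_card_basis b]
  exact ⟨a ∘ e, hli.comp e e.injective⟩

theorem exists_relation_of_minimal_dependent [Fintype ι] {x : ι → V}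
    (hdep : ¬ LinearIndependent K x) (hmin : ∀ i, LinearIndepOn K x {i}ᶜ) :
    ∃ a : ι → K, (∀ i, a i ≠ 0) ∧ ∑ i, a i • x i = 0 ∧
      ∀ c : ι → K, ∑ i, c i • x i = 0 → ∃ t : K, c = t • a := by
  classical
  have eq_zero_of_apply_eq_zero (c : ι → K) (hc : ∑ i, c i • x i = 0) (i : ι) (hci : c i = 0) :
      c = 0 := by
    have hsum : ∑ j ∈ ({i}ᶜ : Finset ι), c j • x j = 0 := by
      rw [← hc, ← Finset.sum_compl_add_sum {i}, Finset.sum_singleton, hci, zero_smul, add_zero]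
    funext j
    by_cases hj : j = i
    · rw [hj, hci, Pi.zero_apply]
    · exact linearIndepOn_finset_iff.1 (by simpa using hmin i) c hsum j (by simpa using hj)
  obtain ⟨a, ha, j, haj⟩ := Fintype.not_linearIndependent_iff.1 hdep
  refine ⟨a, fun i hi => haj (congrFun (eq_zero_of_apply_eq_zero a ha i hi) j), ha,
    fun c hc => ⟨c j / a j, ?_⟩⟩
  refine sub_eq_zero.1 (eq_zero_of_apply_eq_zero _ ?_ j ?_)
  · simp [sub_smul, mul_smul, ← Finset.smul_sum, hc, ha]
  · simp [haj]

theorem exists_eq_smul_of_forall_not_linearIndependent {π T : V →ₗ[K] W}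
    (hπ : Function.Surjective π) (hW : 1 < Module.rank K W)
    (h : ∀ x, ¬ LinearIndependent K ![π x, T x]) : ∃ c : K, T = c • π := by
  have apply_eq_smul (x : V) (hx : π x ≠ 0) : ∃ a : K, a • π x = T x := by
    simpa [LinearIndependent.pair_iff' hx] using h x
  have hker : LinearMap.ker π ≤ LinearMap.ker T := by
    intro z hz
    by_contra hTz
    obtain ⟨y, hy⟩ := exists_linearIndependent_pair_of_one_lt_rank hW hTz
    obtain ⟨x, rfl⟩ := hπ y
    have hx : π x ≠ 0 := hy.ne_zero 1
    have hxz : π (x + z) = π x := by rw [map_add, LinearMap.mem_ker.1 hz, add_zero]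
    obtain ⟨a, ha⟩ := apply_eq_smul x hx
    obtain ⟨b, hb⟩ := apply_eq_smul (x + z) (by rwa [hxz])
    rw [hxz, map_add, ← ha] at hb
    refine (LinearIndependent.pair_iff' hx).1 (LinearIndependent.pair_symm_iff.1 hy) (b - a) ?_
    rw [sub_smul, hb, add_sub_cancel_left]
  obtain ⟨S, rfl⟩ := exists_linearMap_comp_eq_of_ker_le hker
  obtain ⟨c, rfl⟩ := LinearMap.exists_eq_smul_id_of_forall_notLinearIndependent (f := S) fun w => by
    obtain ⟨x, rfl⟩ := hπ w
    exact h x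
  exact ⟨c, rfl⟩

theorem exists_dual_mul_sub_mul_ne_zero {x y : V} (h : LinearIndependent K ![x, y]) :
    ∃ α β : Module.Dual K V, α x * β y - β x * α y ≠ 0 := by
  obtain ⟨T, hT⟩ := exists_linearMap_apply_eq (K := K) (x := ![x, y])
    (y := (![(1, 0), (0, 1)] : Fin 2 → K × K)) fun c hc => by
      simp [Fintype.linearIndependent_iff.1 h c hc]
  have hx : T x = (1, 0) := hT 0
  have hy : T y = (0, 1) := hT 1
  exact ⟨LinearMap.fst K K K ∘ₗ T, LinearMap.snd K K K ∘ₗ T, by simp [hx, hy]⟩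

theorem exteriorAlgebra_ι_mul_ι_eq_zero_iff {u w : V} (hu : u ≠ 0) :
    ExteriorAlgebra.ι K w * ExteriorAlgebra.ι K u = 0 ↔ w ∈ Submodule.span K {u} := by
  constructor
  · intro h
    by_contra hw
    have hwu : LinearIndependent K ![w, u] := by
      rw [LinearIndependent.pair_symm_iff, LinearIndependent.pair_iff' hu]
      simpa [Submodule.mem_span_singleton] using hw
    have hne := (exteriorPower.ιMulti_family_linearIndependent_field (n := 2) hwu).ne_zero
      (Set.powersetCard.ofFinEmbEquiv (RelEmbedding.refl _))
    refine hne (Subtype.ext ?_)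
    simpa [exteriorPower.ιMulti_family, ExteriorAlgebra.ιMulti_apply] using h
  · intro h
    obtain ⟨c, rfl⟩ := Submodule.mem_span_singleton.1 h
    simp

theorem exists_eq_smul_of_mem_span_singleton {u v : V} (hv : v ≠ 0)
    (h : v ∈ Submodule.span K {u}) : ∃ c : K, u = c • v := by
  obtain ⟨c, rfl⟩ := Submodule.mem_span_singleton.1 h
  exact ⟨c⁻¹, (inv_smul_smul₀ (left_ne_zero_of_smul hv) u).symm⟩

end LinearAlgebra

section Forms

variable {R σ : Type*} [CommSemiring R]

/-- Evaluation at the vector `x`, as a functional on the space of forms of degree `m`. -/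
noncomputable def evalForm (m : ℕ) (x : σ → R) : Module.Dual R (homogeneousSubmodule σ R m) :=
  (aeval x).toLinearMap ∘ₗ (homogeneousSubmodule σ R m).subtype

@[simp]
theorem evalForm_apply (m : ℕ) (x : σ → R) (f : homogeneousSubmodule σ R m) :
    evalForm m x f = eval x f.1 := by
  simp [evalForm, aeval_eq_eval]

theorem evalForm_smul (m : ℕ) (c : R) (x : σ → R) :
    evalForm m (c • x) = c ^ m • evalForm m x := by
  ext ⟨f, hf⟩
  simp only [evalForm_apply, LinearMap.smul_apply, smul_eq_mul, eval_eq, Finset.mul_sum]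
  refine Finset.sum_congr rfl fun d hd => ?_
  have degree_eq : ∑ i ∈ d.support, d i = m := by
    rw [← Finsupp.degree_apply, Finsupp.degree_eq_weight_one]
    exact hf (mem_support_iff.1 hd)
  simp only [Pi.smul_apply, smul_eq_mul, mul_pow, Finset.prod_mul_distrib,
    Finset.prod_pow_eq_pow_sum, degree_eq]
  ring

/-- The monomial basis of the space of forms of degree `m`, indexed by multisets of `m`
variables. -/
noncomputable def homogeneousSubmoduleBasis [DecidableEq σ] (m : ℕ) :
    Module.Basis (Sym σ m) R (homogeneousSubmodule σ R m) :=
  let e : Sym σ m ≃ {d : σ →₀ ℕ | d.degree = m} :=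
    (Sym.equivNatSum σ m).trans <| Equiv.subtypeEquivRight fun d => by
      simp [Finsupp.sum, Finsupp.degree_apply]
  ((basisRestrictSupport R {d : σ →₀ ℕ | d.degree = m}).reindex e.symm).map <|
    LinearEquiv.ofEq _ _ (homogeneousSubmodule_eq_finsupp_supported σ R m).symm

theorem finrank_homogeneousSubmodule [StrongRankCondition R] [Fintype σ] (m : ℕ) :
    Module.finrank R (homogeneousSubmodule σ R m) = (Fintype.card σ).multichoose m := by
  classical
  rw [Module.finrank_eq_card_basis (homogeneousSubmoduleBasis m), Sym.card_sym_eq_multichoose]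

instance finite_homogeneousSubmodule [Finite σ] (m : ℕ) :
    Module.Finite R (homogeneousSubmodule σ R m) := by
  classical
  have := Fintype.ofFinite σ
  exact .of_basis (homogeneousSubmoduleBasis m)

variable {K ι : Type*} [Field K]

theorem evalForm_ne_zero (m : ℕ) {x : σ → K} (hx : x ≠ 0) : evalForm m x ≠ 0 := by
  obtain ⟨k, hk⟩ := Function.ne_iff.1 hx
  refine fun h => pow_ne_zero m hk ?_
  simpa using LinearMap.congr_fun h ⟨X k ^ m, by simpa using (isHomogeneous_X K k).pow m⟩

theorem span_range_evalForm [Finite σ] [Infinite K] (m : ℕ) :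
    Submodule.span K (Set.range (evalForm (R := K) (σ := σ) m)) = ⊤ := by
  refine Submodule.span_eq_top_of_ne_zero fun f hf => ?_
  by_contra! h
  exact hf (Subtype.ext (MvPolynomial.funext fun x => by simpa using h (evalForm m x) ⟨x, rfl⟩))

theorem eq_zero_of_eval_eq_zero_of_span_evalForm_eq_top {m : ℕ} {v : ι → σ → K}
    (hv : Submodule.span K (Set.range fun i => evalForm m (v i)) = ⊤) {f : MvPolynomial σ K}
    (hf : f.IsHomogeneous m) (hfv : ∀ i, eval (v i) f = 0) : f = 0 := by
  suffices (⟨f, hf⟩ : homogeneousSubmodule σ K m) = 0 from congrArg Subtype.val this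
  refine (Module.forall_dual_apply_eq_zero_iff K _).1 fun φ => ?_
  have hφ : φ ∈ Submodule.span K (Set.range fun i => evalForm m (v i)) := hv ▸ Submodule.mem_top
  refine Submodule.span_le (p := LinearMap.ker (Module.Dual.eval K _ ⟨f, hf⟩)) |>.2 ?_ hφ
  rintro - ⟨i, rfl⟩
  simpa using hfv i

theorem exists_isHomogeneous_one_eval_eq [Finite σ] (α : Module.Dual K (σ → K)) :
    ∃ f : MvPolynomial σ K, f.IsHomogeneous 1 ∧ ∀ x, eval x f = α x := by
  classical
  have := Fintype.ofFinite σ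
  refine ⟨∑ k, C (α fun j => if k = j then 1 else 0) * X k,
    .sum _ _ _ fun k _ => isHomogeneous_C_mul_X _ k, fun x => ?_⟩
  simp [α.pi_apply_eq_sum_univ x, mul_comm]

theorem mul_apply_eq_mul_apply_of_span_evalForm_eq_top [Finite σ] {m : ℕ} (hm : 2 ≤ m)
    {v : ι → σ → K} (hv : Submodule.span K (Set.range fun i => evalForm m (v i)) = ⊤)
    {α β γ δ : Module.Dual K (σ → K)} (h : ∀ i, α (v i) * β (v i) = γ (v i) * δ (v i))
    (x : σ → K) : α x * β x = γ x * δ x := by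
  rcases isEmpty_or_nonempty σ with hσ | ⟨⟨k⟩⟩
  · simp [Subsingleton.elim x 0]
  obtain ⟨a, ha, ha'⟩ := exists_isHomogeneous_one_eval_eq α
  obtain ⟨b, hb, hb'⟩ := exists_isHomogeneous_one_eval_eq β
  obtain ⟨c, hc, hc'⟩ := exists_isHomogeneous_one_eval_eq γ
  obtain ⟨d, hd, hd'⟩ := exists_isHomogeneous_one_eval_eq δ
  have hf : (X k ^ (m - 2) * (a * b - c * d)).IsHomogeneous m := by
    have := ((isHomogeneous_X K k).pow (m - 2)).mul ((ha.mul hb).sub (hc.mul hd))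
    rwa [one_mul, Nat.sub_add_cancel hm] at this
  have quadric_eq_zero : a * b - c * d = 0 := by
    refine (mul_eq_zero.1 (eq_zero_of_eval_eq_zero_of_span_evalForm_eq_top hv hf fun i => ?_)
      ).resolve_left (pow_ne_zero _ (X_ne_zero k))
    simp [ha', hb', hc', hd', h i]
  simpa [ha', hb', hc', hd', sub_eq_zero] using congrArg (eval x) quadric_eq_zero

theorem exists_eq_smul_of_span_evalForm_eq_top [Finite σ] {m : ℕ} (hm : 2 ≤ m)
    {v : ι → σ → K} (hv : Submodule.span K (Set.range fun i => evalForm m (v i)) = ⊤)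
    {W : Type*} [AddCommGroup W] [Module K W] {π T : (σ → K) →ₗ[K] W}
    (hπ : Function.Surjective π) (hW : 1 < Module.rank K W) {d : ι → K}
    (hT : ∀ i, T (v i) = d i • π (v i)) : ∃ c : K, T = c • π := by
  refine exists_eq_smul_of_forall_not_linearIndependent hπ hW fun x hx => ?_
  obtain ⟨α, β, hαβ⟩ := exists_dual_mul_sub_mul_ne_zero hx
  refine hαβ (sub_eq_zero.2 ?_)
  refine mul_apply_eq_mul_apply_of_span_evalForm_eq_top hm hv (α := α ∘ₗ π) (β := β ∘ₗ T)
    (γ := β ∘ₗ π) (δ := α ∘ₗ T) (fun i => ?_) x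
  simp only [LinearMap.comp_apply, hT i, map_smul, smul_eq_mul]
  ring

end Forms

section Eigenvectors

variable {K σ ι : Type*} [Field K]

/-- `u` is an eigenvector of the tensor with component polynomials `p`: `p(u) ∧ u = 0`, the
wedge being the product of the exterior algebra. -/
def IsEigenvector (p : σ → MvPolynomial σ K) (u : σ → K) : Prop :=
  ExteriorAlgebra.ι K (fun k => eval u (p k)) * ExteriorAlgebra.ι K u = 0

/-- `u` is an eigenvector of every tensor of degree `m` of which all the `v i` are eigenvectors. -/
def IsCommonEigenvector (m : ℕ) (v : ι → σ → K) (u : σ → K) : Prop :=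
  ∀ p : σ → MvPolynomial σ K, (∀ k, (p k).IsHomogeneous m) → (∀ i, IsEigenvector p (v i)) →
    IsEigenvector p u

theorem isEigenvector_iff {p : σ → MvPolynomial σ K} {u : σ → K} (hu : u ≠ 0) :
    IsEigenvector p u ↔ (fun k => eval u (p k)) ∈ Submodule.span K {u} :=
  exteriorAlgebra_ι_mul_ι_eq_zero_iff hu

theorem isEigenvector_of_eval_eq_smul {p : σ → MvPolynomial σ K} {u : σ → K} {c : K}
    (h : (fun k => eval u (p k)) = c • u) : IsEigenvector p u := by
  simp [IsEigenvector, h]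

theorem isCommonEigenvector_smul (m : ℕ) (v : ι → σ → K) (i : ι) (c : K) :
    IsCommonEigenvector m v (c • v i) := by
  intro p hp hpv
  have eval_smul : (fun k => eval (c • v i) (p k)) = c ^ m • fun k => eval (v i) (p k) := by
    ext k
    simpa using LinearMap.congr_fun (evalForm_smul m c (v i)) ⟨p k, hp k⟩
  rw [IsEigenvector, eval_smul, map_smul, map_smul, smul_mul_smul_comm, hpv i, smul_zero]

theorem exists_tensor_eval_eq [Finite σ] [Fintype ι] {m : ℕ} {v w : ι → σ → K}
    (h : ∀ c : ι → K, ∑ i, c i • evalForm m (v i) = 0 → ∑ i, c i • w i = 0) :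
    ∃ p : σ → MvPolynomial σ K, (∀ k, (p k).IsHomogeneous m) ∧
      ∀ i, (fun k => eval (v i) (p k)) = w i := by
  choose f hf using fun k => exists_forall_dual_apply_eq (φ := fun i => evalForm m (v i))
    (y := fun i => w i k) fun c hc => by simpa using congrFun (h c hc) k
  exact ⟨fun k => (f k).1, fun k => (f k).2, fun i => funext fun k => by simpa using hf k i⟩

namespace IsCommonEigenvector

variable {m : ℕ} {v : ι → σ → K} {u : σ → K}

theorem evalForm_mem_span [Finite σ] [Nontrivial σ] [Finite ι] (h : IsCommonEigenvector m v u)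
    (hu : u ≠ 0) :
    evalForm m u ∈ Submodule.span K (Set.range fun i => evalForm m (v i)) := by
  have := Fintype.ofFinite σ
  refine mem_span_of_iInf_ker_le_ker fun f hf => ?_
  obtain ⟨w, hw⟩ := exists_linearIndependent_pair_of_one_lt_rank (R := K)
    (by rw [rank_fun']; exact_mod_cast Fintype.one_lt_card) hu
  let p (k : σ) : MvPolynomial σ K := C (w k) * f.1
  have eval_p (x : σ → K) : (fun k => eval x (p k)) = eval x f.1 • w := by
    ext k
    simp [p, mul_comm]
  have eigenvector_v (i : ι) : IsEigenvector p (v i) := by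
    have hfi : eval (v i) f.1 = 0 := by simpa using (Submodule.mem_iInf _).1 hf i
    exact isEigenvector_of_eval_eq_smul (c := 0) (by rw [eval_p, hfi, zero_smul, zero_smul])
  have hu_mem := (isEigenvector_iff hu).1 (h p (fun k => f.2.C_mul (w k)) eigenvector_v)
  rw [eval_p] at hu_mem
  by_contra hfu
  rw [LinearMap.mem_ker, evalForm_apply] at hfu
  obtain ⟨c, hc⟩ := Submodule.mem_span_singleton.1 ((Submodule.smul_mem_iff _ hfu).1 hu_mem)
  exact (LinearIndependent.pair_iff' hu).1 hw c hc

theorem sum_smul_mem_span [Finite σ] [Fintype ι] (h : IsCommonEigenvector m v u) (hu : u ≠ 0)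
    {b l : ι → K} (hb : ∑ i, b i • evalForm m (v i) = evalForm m u)
    (hl : ∀ c : ι → K, ∑ i, c i • evalForm m (v i) = 0 → ∑ i, c i • l i • v i = 0) :
    ∑ i, b i • l i • v i ∈ Submodule.span K {u} := by
  obtain ⟨p, hp, hpv⟩ := exists_tensor_eval_eq hl
  have eval_u : (fun k => eval u (p k)) = ∑ i, b i • l i • v i := by
    ext k
    have eval_uk := LinearMap.congr_fun hb ⟨p k, hp k⟩
    simpa [← hpv] using eval_uk.symm
  rw [← eval_u, ← isEigenvector_iff hu]
  exact h p hp fun i => isEigenvector_of_eval_eq_smul (hpv i)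

theorem exists_eq_smul_of_linearIndependent [Finite σ] [Nontrivial σ] [Finite ι]
    (h : IsCommonEigenvector m v u) (hu : u ≠ 0) (hv : ∀ i, v i ≠ 0)
    (hli : LinearIndependent K fun i => evalForm m (v i)) : ∃ i, ∃ c : K, u = c • v i := by
  classical
  have := Fintype.ofFinite ι
  obtain ⟨b, hb⟩ := (Submodule.mem_span_range_iff_exists_fun K).1 (h.evalForm_mem_span hu)
  obtain ⟨i, -, hi⟩ := Finset.exists_ne_zero_of_sum_ne_zero (hb ▸ evalForm_ne_zero m hu)
  have hbi : b i • v i ∈ Submodule.span K {u} := by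
    simpa [Pi.single_apply] using h.sum_smul_mem_span hu (l := Pi.single i 1) hb fun c hc => by
      simp [Fintype.linearIndependent_iff.1 hli c hc]
  exact ⟨i, exists_eq_smul_of_mem_span_singleton (hv i)
    ((Submodule.smul_mem_iff _ (left_ne_zero_of_smul hi)).1 hbi)⟩

theorem exists_linearMap_apply_eq_smul [Finite σ] [Fintype ι] (h : IsCommonEigenvector m v u)
    (hu : u ≠ 0) {a b : ι → K} (ha : ∀ i, a i ≠ 0)
    (hrel : ∀ c : ι → K, ∑ i, c i • evalForm m (v i) = 0 → ∃ t : K, c = t • a)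
    (hb : ∑ i, b i • evalForm m (v i) = evalForm m u) :
    ∃ T : (σ → K) →ₗ[K] (σ → K) ⧸ Submodule.span K {u},
      ∀ i, T (v i) = (b i / a i) • (Submodule.span K {u}).mkQ (v i) := by
  obtain ⟨T, hT⟩ := exists_linearMap_apply_eq (K := K) (x := fun i => a i • v i)
    (y := fun i => (Submodule.span K {u}).mkQ (b i • v i)) fun l hl => by
      have hmem : ∑ i, b i • l i • v i ∈ Submodule.span K {u} := by
        refine h.sum_smul_mem_span hu hb fun c hc => ?_
        obtain ⟨t, rfl⟩ := hrel c hc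
        rw [← smul_zero t, ← hl, Finset.smul_sum]
        simp only [Pi.smul_apply, smul_assoc, smul_comm (a _) (l _)]
      rw [← Submodule.Quotient.mk_eq_zero, ← Submodule.mkQ_apply, map_sum] at hmem
      rw [← hmem]
      simp only [map_smul, smul_comm (b _) (l _)]
  refine ⟨T, fun i => ?_⟩
  rw [div_eq_inv_mul, mul_smul, eq_inv_smul_iff₀ (ha i), ← map_smul, ← map_smul, hT i]

theorem exists_eq_smul_of_minimal_dependent [Fintype σ] [Finite ι] (hm : 2 ≤ m)
    (hσ : 3 ≤ Fintype.card σ) (h : IsCommonEigenvector m v u) (hu : u ≠ 0) (hv : ∀ i, v i ≠ 0)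
    (hspan : Submodule.span K (Set.range fun i => evalForm m (v i)) = ⊤)
    (hdep : ¬ LinearIndependent K fun i => evalForm m (v i))
    (hmin : ∀ i, LinearIndepOn K (fun i => evalForm m (v i)) {i}ᶜ) :
    ∃ i, ∃ c : K, u = c • v i := by
  have := Fintype.ofFinite ι
  obtain ⟨a, ha, hasum, hrel⟩ := exists_relation_of_minimal_dependent hdep hmin
  obtain ⟨b, hb⟩ : ∃ b : ι → K, ∑ i, b i • evalForm m (v i) = evalForm m u :=
    (Submodule.mem_span_range_iff_exists_fun K).1 (hspan ▸ Submodule.mem_top)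
  obtain ⟨T, hT⟩ := h.exists_linearMap_apply_eq_smul hu ha hrel hb
  have one_lt_rank : 1 < Module.rank K ((σ → K) ⧸ Submodule.span K {u}) := by
    have := Submodule.finrank_quotient_add_finrank (Submodule.span K {u})
    rw [finrank_span_singleton hu, Module.finrank_fintype_fun_eq_card] at this
    rw [← Module.finrank_eq_rank]
    exact_mod_cast (by lia : 1 < Module.finrank K ((σ → K) ⧸ Submodule.span K {u}))
  obtain ⟨c, rfl⟩ := exists_eq_smul_of_span_evalForm_eq_top hm hspan
    (Submodule.mkQ_surjective _) one_lt_rank hT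
  obtain ⟨i, hi⟩ : ∃ i, c ≠ b i / a i := by
    by_contra! hc
    refine evalForm_ne_zero m hu ?_
    rw [← hb, ← smul_zero c, ← hasum, Finset.smul_sum]
    exact Finset.sum_congr rfl fun i _ => by rw [smul_smul, hc i, div_mul_cancel₀ _ (ha i)]
  have mkQ_eq_zero : (Submodule.span K {u}).mkQ (v i) = 0 := by
    by_contra hne
    exact hi (smul_left_injective K hne (hT i))
  exact ⟨i, exists_eq_smul_of_mem_span_singleton (hv i)
    ((Submodule.Quotient.mk_eq_zero _).1 mkQ_eq_zero)⟩

end IsCommonEigenvector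

end Eigenvectors

section Generic

variable {ι σ K : Type*} [Field K]

variable (ι σ K) in
/-- The filter of general tuples of vectors: its sets contain the complement of a proper
hypersurface. -/
def generic : Filter (ι → σ → K) where
  sets := {S | ∃ D : MvPolynomial (ι × σ) K, D ≠ 0 ∧
    ∀ v : ι → σ → K, eval (fun t => v t.1 t.2) D ≠ 0 → v ∈ S}
  univ_sets := ⟨1, one_ne_zero, fun _ _ => trivial⟩
  sets_of_superset := by
    rintro S T ⟨D, hD, hDS⟩ hST
    exact ⟨D, hD, fun v hv => hST (hDS v hv)⟩
  inter_sets := by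
    rintro S T ⟨D, hD, hDS⟩ ⟨E, hE, hET⟩
    refine ⟨D * E, mul_ne_zero hD hE, fun v hv => ?_⟩
    rw [map_mul] at hv
    exact ⟨hDS v (left_ne_zero_of_mul hv), hET v (right_ne_zero_of_mul hv)⟩

theorem eventually_generic_iff {P : (ι → σ → K) → Prop} :
    (∀ᶠ v in generic ι σ K, P v) ↔ ∃ D : MvPolynomial (ι × σ) K, D ≠ 0 ∧
      ∀ v : ι → σ → K, eval (fun t => v t.1 t.2) D ≠ 0 → P v :=
  Iff.rfl

theorem eventually_generic_ne_zero [Nonempty σ] (i : ι) : ∀ᶠ v in generic ι σ K, v i ≠ 0 := by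
  inhabit σ
  exact eventually_generic_iff.2 ⟨X (i, default), X_ne_zero _, fun v hv h => hv (by simp [h])⟩

theorem eventually_generic_linearIndepOn_evalForm [Finite σ] [Infinite K] (m : ℕ)
    {S : Finset ι}
    (hS : S.card ≤ Module.finrank K (homogeneousSubmodule σ K m)) :
    ∀ᶠ v in generic ι σ K, LinearIndepOn K (fun i => evalForm m (v i)) (S : Set ι) := by
  classical
  obtain ⟨x, hx⟩ := exists_linearIndependent_of_span_eq_top (ι := S)
    (span_range_evalForm (K := K) (σ := σ) m) (by simpa using hS)
  choose g hg using fun j : S =>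
    exists_forall_dual_apply_eq (φ := evalForm m ∘ x) (y := Pi.single j 1) fun c hc => by
      simp [Fintype.linearIndependent_iff.1 hx c hc]
  let A (v : ι → σ → K) : Matrix S S K := .of fun i j => evalForm m (v i) (g j)
  let D : MvPolynomial (ι × σ) K :=
    (Matrix.of fun i j : S => rename (Prod.mk (i : ι)) (g j).1).det
  have eval_D (v : ι → σ → K) : eval (fun t => v t.1 t.2) D = (A v).det := by
    rw [RingHom.map_det]
    congr 1
    ext i j
    simp [A, eval_rename, Function.comp_def]
  refine eventually_generic_iff.2 ⟨D, fun hD => ?_, fun v hv => ?_⟩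
  · have hA : A (Function.extend Subtype.val x 0) = 1 := by
      ext i j
      simpa [A, Subtype.val_injective.extend_apply, Matrix.one_apply, Pi.single_apply] using hg j i
    simpa [hD, hA] using eval_D (Function.extend Subtype.val x 0)
  · rw [eval_D] at hv
    exact .of_comp (LinearMap.pi fun j => Module.Dual.eval K _ (g j))
      (Matrix.linearIndependent_rows_of_det_ne_zero hv)

theorem eventually_generic_exists_eq_smul_of_card_le [Fintype σ] [Nontrivial σ] [Fintype ι]
    [Infinite K] {m : ℕ} (hι : Fintype.card ι ≤ (Fintype.card σ).multichoose m) :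
    ∀ᶠ v in generic ι σ K, ∀ u ≠ 0, IsCommonEigenvector m v u → ∃ i, ∃ c : K, u = c • v i := by
  have hli := eventually_generic_linearIndepOn_evalForm (K := K) (σ := σ)
    (S := (Finset.univ : Finset ι)) m (by rwa [finrank_homogeneousSubmodule, Finset.card_univ])
  filter_upwards [hli, Filter.eventually_all.2 eventually_generic_ne_zero] with v hli hv u hu h
  rw [Finset.coe_univ, linearIndepOn_univ_iff] at hli
  exact h.exists_eq_smul_of_linearIndependent hu hv hli

theorem eventually_generic_exists_eq_smul_of_card_eq_add_one [Fintype σ] [Fintype ι] [Infinite K]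
    {m : ℕ} (hm : 2 ≤ m) (hσ : 3 ≤ Fintype.card σ)
    (hι : Fintype.card ι = (Fintype.card σ).multichoose m + 1) :
    ∀ᶠ v in generic ι σ K, ∀ u ≠ 0, IsCommonEigenvector m v u → ∃ i, ∃ c : K, u = c • v i := by
  classical
  have : Nonempty σ := Fintype.card_pos_iff.1 (by lia)
  obtain ⟨i₀⟩ := Fintype.card_pos_iff.1 (by lia : 0 < Fintype.card ι)
  have hcard (i : ι) : ({i}ᶜ : Finset ι).card = (Fintype.card σ).multichoose m := by
    rw [Finset.card_compl, Finset.card_singleton, hι, Nat.add_sub_cancel]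
  have hfin : Module.finrank K (Module.Dual K (homogeneousSubmodule σ K m)) =
      (Fintype.card σ).multichoose m := by
    rw [Subspace.dual_finrank_eq, finrank_homogeneousSubmodule]
  have hmin := Filter.eventually_all.2 fun i : ι =>
    eventually_generic_linearIndepOn_evalForm (K := K) (σ := σ) (S := {i}ᶜ) m
      (by rw [finrank_homogeneousSubmodule, hcard])
  filter_upwards [hmin, Filter.eventually_all.2 eventually_generic_ne_zero] with v hmin hv u hu h
  have hspan := span_range_eq_top_of_linearIndepOn (hmin i₀) (by rw [hfin, hcard])
  have hdep : ¬ LinearIndependent K fun i => evalForm m (v i) := fun hli => by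
    have := hli.fintype_card_le_finrank
    lia
  exact h.exists_eq_smul_of_minimal_dependent hm hσ hu hv hspan hdep fun i => by
    simpa using hmin i

end Generic

theorem two_mul_multichoose_three (m : ℕ) : 2 * Nat.multichoose 3 m = m ^ 2 + 3 * m + 2 := by
  rw [Nat.multichoose_eq, show 3 + m - 1 = m + 2 by lia, Nat.choose_symm_add,
    Nat.choose_two_right, Nat.mul_div_cancel' (Nat.even_mul_pred_self _).two_dvd]
  simp only [Nat.add_one_sub_one]
  ring

theorem statement12_general {K σ ι : Type*} [Field K] [Infinite K] [Fintype σ] [Nontrivial σ]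
    [Fintype ι] (m : ℕ)
    (h : Fintype.card ι ≤ (Fintype.card σ).multichoose m ∨
      2 ≤ m ∧ 3 ≤ Fintype.card σ ∧ Fintype.card ι ≤ (Fintype.card σ).multichoose m + 1) :
    ∀ᶠ v in generic ι σ K, ∀ u ≠ 0,
      IsCommonEigenvector m v u ↔ ∃ i, ∃ c : K, u = c • v i := by
  suffices only_if : ∀ᶠ v in generic ι σ K, ∀ u ≠ 0, IsCommonEigenvector m v u →
      ∃ i, ∃ c : K, u = c • v i by
    filter_upwards [only_if] with v hv u hu
    refine ⟨hv u hu, ?_⟩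
    rintro ⟨i, c, rfl⟩
    exact isCommonEigenvector_smul m v i c
  by_cases hι : Fintype.card ι ≤ (Fintype.card σ).multichoose m
  · exact eventually_generic_exists_eq_smul_of_card_le hι
  · obtain ⟨hm, hσ, hι'⟩ := h.resolve_left hι
    exact eventually_generic_exists_eq_smul_of_card_eq_add_one hm hσ (by lia)

/-- Theorem 5.1(ii) for `ℙ²`: if `m ≥ 2` and `2s ≤ m² + 3m + 4` (or `m = 1` and
`s ≤ 3`), then for a general tuple of nonzero vectors `v_1,…,v_s ∈ ℂ³`, the common
eigenvectors of all tensors `M ∈ Hom(S^mℂ³, ℂ³)` (represented by three homogeneous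
degree-`m` component polynomials) having every `v_i` as an eigenvector are exactly the
nonzero scalar multiples of the `v_i`. -/
theorem statement12 (m s : ℕ)
    (hms : (2 ≤ m ∧ 2 * s ≤ m ^ 2 + 3 * m + 4) ∨ (m = 1 ∧ s ≤ 3)) :
    ∃ D : MvPolynomial (Fin s × Fin 3) ℂ, D ≠ 0 ∧
      ∀ v : Fin s → Fin 3 → ℂ, (∀ i, v i ≠ 0) →
        MvPolynomial.eval (fun t => v t.1 t.2) D ≠ 0 →
        ∀ u : Fin 3 → ℂ, u ≠ 0 →
          ((∀ p : Fin 3 → MvPolynomial (Fin 3) ℂ,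
              (∀ k, (p k).IsHomogeneous m) →
              (∀ i, ExteriorAlgebra.ι ℂ (fun k => MvPolynomial.eval (v i) (p k)) *
                  ExteriorAlgebra.ι ℂ (v i) = 0) →
              ExteriorAlgebra.ι ℂ (fun k => MvPolynomial.eval u (p k)) *
                ExteriorAlgebra.ι ℂ u = 0) ↔
            ∃ i, ∃ lam : ℂ, u = lam • v i) := by
  have hN := two_mul_multichoose_three m
  obtain ⟨D, hD, hDv⟩ := eventually_generic_iff.1 <|
    statement12_general (K := ℂ) (σ := Fin 3) (ι := Fin s) m (by
      simp only [Fintype.card_fin]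
      grind)
  exact ⟨D, hD, fun v _ hv => hDv v hv⟩
end

section
/- Let m ≥ 0 and let s be an integer with s ≤ ⌊((m+4)(m+3)(m+1)/2 − m − 2)/3⌋. For a general tuple of nonzero vectors v_1,…,v_s ∈ ℂ⁴, the linear map from symmetric m-multilinear maps M : (ℂ⁴)^m → Λ²ℂ⁴ to ⊕_{i=1}^s Λ²ℂ⁴/(v_i ∧ ℂ⁴) sending M to (M(v_i,…,v_i) mod v_i ∧ ℂ⁴)_{i=1,…,s} is surjective; equivalently, the subspace of those M with M(v_i^m) ∧ v_i = 0 in Λ³ℂ⁴ for all i has codimension exactly 3s, i.e. dimension 6·binom(m+3,3) − 3s. -/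
open MvPolynomial ExteriorAlgebra

/-! Surjectivity of evaluation at `v₁, …, vₛ` is an open condition, so one configuration of points
suffices. Where `v₃ ≠ 0`, the class of a bivector `(a, b)` modulo `v ∧ K⁴` is given by the three
coordinates of `v₃ b + v × a`, so three prescribed forms of degree `m` are needed at every point.

The configuration consists of grid points `(1, x β₁, x β₂, x β₃)` with `β` of degree `m`, together
with general points of the plane `v₀ = 0`. The forms of degree `m` take independent values at all
grid points, by triangularity of the Newton basis. Let `U` be a set of `k` exponents `β` with
`β₀ = 0` and drop the corresponding grid points; then the Newton forms `f_γ`, `γ ∈ U`, vanish at the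
remaining ones and restrict to the monomials `X ^ γ` on the plane. At `3k` points of the plane, the
residues with indices `1` and `2` are fitted by arbitrary ternary forms and, after the grid points
have been dealt with, the residue with index `0` is corrected by combinations of the functions
`X i * X ^ γ`. These are `3k` distinct monomials if all `γ ∈ U` have the same value of
`γ₁ + 2 γ₂` modulo `3`; by pigeonhole such a `U` exists for `k = ⌊(m + 2).choose 2 / 3⌋`, and the
number of points is `(m + 3).choose 3 - k + 3 k`. -/

/-- A property of tuples of points of affine space holds for a general tuple if it holds off the
zero set of some nonzero polynomial in all the coordinates. -/
def ForGeneralTuple {κ σ K : Type*} [CommSemiring K] (P : (κ → σ → K) → Prop) : Prop :=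
  ∃ D : MvPolynomial (κ × σ) K, D ≠ 0 ∧ ∀ v, eval (fun t => v t.1 t.2) D ≠ 0 → P v

namespace ForGeneralTuple

variable {κ σ K : Type*}

theorem mono [CommSemiring K] {P Q : (κ → σ → K) → Prop} (hP : ForGeneralTuple P)
    (h : ∀ v, P v → Q v) : ForGeneralTuple Q :=
  let ⟨D, hD, hDP⟩ := hP
  ⟨D, hD, fun v hv => h v (hDP v hv)⟩

theorem and [CommRing K] [IsDomain K] {P Q : (κ → σ → K) → Prop} (hP : ForGeneralTuple P)
    (hQ : ForGeneralTuple Q) : ForGeneralTuple fun v => P v ∧ Q v := by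
  obtain ⟨D, hD, hDP⟩ := hP
  obtain ⟨E, hE, hEQ⟩ := hQ
  refine ⟨D * E, mul_ne_zero hD hE, fun v hv => ?_⟩
  rw [map_mul] at hv
  exact ⟨hDP v (left_ne_zero_of_mul hv), hEQ v (right_ne_zero_of_mul hv)⟩

theorem exists_tuple [CommRing K] [IsDomain K] [Infinite K] {P : (κ → σ → K) → Prop}
    (hP : ForGeneralTuple P) : ∃ v, P v := by
  obtain ⟨D, hD, hDP⟩ := hP
  by_contra! hnP
  refine hD (MvPolynomial.funext fun x => ?_)
  rw [map_zero]
  by_contra hx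
  exact hnP (fun i j => x (i, j)) (hDP _ hx)

theorem coord_ne_zero [CommRing K] [IsDomain K] [Finite κ] (a : σ) :
    ForGeneralTuple fun v : κ → σ → K => ∀ i, v i a ≠ 0 := by
  have := Fintype.ofFinite κ
  refine ⟨∏ i, X (i, a), Finset.prod_ne_zero_iff.2 fun i _ => X_ne_zero _, fun v hv i => ?_⟩
  simp only [map_prod, eval_X] at hv
  exact Finset.prod_ne_zero_iff.1 hv i (Finset.mem_univ i)

variable [Field K] {N : Type*}

theorem mulVec_surjective [Fintype N] [DecidableEq N]
    {P : Matrix N N (MvPolynomial (κ × σ) K)} (hP : P.det ≠ 0) :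
    ForGeneralTuple fun v : κ → σ → K =>
      Function.Surjective (P.map (eval fun t => v t.1 t.2)).mulVec := by
  refine ⟨P.det, hP, fun v hv => ?_⟩
  rw [RingHom.map_det] at hv
  exact Matrix.mulVec_surjective_iff_isUnit.2 ((Matrix.isUnit_iff_isUnit_det _).2 hv.isUnit)

theorem surjective_of_exists [Finite N] {W : Type*} [AddCommGroup W] [Module K W]
    {E : (κ → σ → K) → W →ₗ[K] N → K}
    (hE : ∀ w k, ∃ P : MvPolynomial (κ × σ) K, ∀ v, eval (fun t => v t.1 t.2) P = E v w k)
    {v₀ : κ → σ → K} (h₀ : Function.Surjective (E v₀)) :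
    ForGeneralTuple fun v => Function.Surjective (E v) := by
  classical
  have := Fintype.ofFinite N
  choose P hP using hE
  choose w hw using fun k => h₀ (Pi.single k 1)
  let A : Matrix N N (MvPolynomial (κ × σ) K) := Matrix.of fun l k => P (w k) l
  have hA : A.det ≠ 0 := by
    intro h
    have hone : (eval fun t => v₀ t.1 t.2).mapMatrix A = 1 := by
      ext l k
      simp [A, hP, hw, Matrix.one_apply, Pi.single_apply]
    simpa [h, hone] using (eval fun t => v₀ t.1 t.2).map_det A
  refine (mulVec_surjective hA).mono fun v hv y => ?_
  obtain ⟨c, rfl⟩ := hv y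
  refine ⟨∑ k, c k • w k, funext fun l => ?_⟩
  simp [A, hP, Matrix.mulVec, dotProduct, mul_comm]

end ForGeneralTuple

/-- Distinct terms of the Leibniz expansion are distinct monomials, so nothing cancels. -/
theorem det_monomial_ne_zero {R σ N : Type*} [CommRing R] [Nontrivial R] [Fintype N]
    [DecidableEq N] {e : N → σ →₀ ℕ} (he : Function.Injective e) :
    (Matrix.of fun j k => rename (Prod.mk j) (monomial (e k) (1 : R))).det ≠ 0 := by
  classical
  let d : Equiv.Perm N → N × σ →₀ ℕ := fun π => ∑ k, (e k).mapDomain (Prod.mk (π k))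
  have hd_apply : ∀ π k s, d π (π k, s) = e k s := by
    intro π k s
    simp only [d, Finsupp.finsetSum_apply]
    rw [Finset.sum_eq_single k]
    · exact Finsupp.mapDomain_apply (Prod.mk_right_injective _) _ _
    · intro l _ hl
      refine Finsupp.mapDomain_of_notMem_range _ _ ?_
      rintro ⟨t, ht⟩
      exact hl (π.injective (Prod.ext_iff.1 ht).1)
    · simp
  have hd : ∀ π, d π = d 1 → π = 1 := by
    intro π h
    refine Equiv.ext fun k => he (Finsupp.ext fun s => ?_)
    calc e (π k) s = d 1 (π k, s) := (hd_apply 1 (π k) s).symm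
      _ = d π (π k, s) := by rw [h]
      _ = e k s := hd_apply π k s
  have hterm : ∀ π : Equiv.Perm N, ∏ k, rename (Prod.mk (π k)) (monomial (e k) (1 : R)) =
      monomial (d π) 1 := fun π => by
    simp only [rename_monomial, d, monomial_sum_one]
  refine ne_zero_iff.2 ⟨d 1, ?_⟩
  simp only [Matrix.det_apply, Matrix.of_apply, hterm, coeff_sum, coeff_smul, coeff_monomial]
  rw [Finset.sum_eq_single 1 (fun π _ hπ => by rw [if_neg fun h => hπ (hd π h), smul_zero])
    (fun h => absurd (Finset.mem_univ 1) h)]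
  simp

theorem forGeneralTuple_monomial_interpolation {K σ N : Type*} [Field K] [Fintype N]
    {e : N → σ →₀ ℕ} (he : Function.Injective e) :
    ForGeneralTuple fun p : N → σ → K =>
      ∀ ρ : N → K, ∃ c : N → K, ∀ j, ∑ k, c k * eval (p j) (monomial (e k) 1) = ρ j := by
  classical
  refine (ForGeneralTuple.mulVec_surjective (det_monomial_ne_zero he)).mono fun p hp ρ => ?_
  obtain ⟨c, rfl⟩ := hp ρ
  refine ⟨c, fun j => ?_⟩
  simp only [Matrix.mulVec, dotProduct, Matrix.map_apply, Matrix.of_apply, eval_rename,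
    Function.comp_def, mul_comm (c _)]
section Bivector

variable {R : Type*} [CommRing R]

/-- The bivector in `⋀²R⁴` with coordinates `(a, b)`: the `i`-th coordinate vector times the last
one has coefficient `aᵢ`, and `b` lists the coefficients of the products of the first three in the
cyclic order of the cross product. -/
noncomputable def bivector :
    (Fin 3 → R) × (Fin 3 → R) →ₗ[R] ExteriorAlgebra R (Fin 4 → R) :=
  let e : Fin 4 → ExteriorAlgebra R (Fin 4 → R) := fun i => ι R (Pi.single i 1)
  (Fintype.linearCombination R ![e 0 * e 3, e 1 * e 3, e 2 * e 3]).coprod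
    (Fintype.linearCombination R ![e 1 * e 2, e 2 * e 0, e 0 * e 1])

theorem bivector_apply (a b : Fin 3 → R) {e : Fin 4 → ExteriorAlgebra R (Fin 4 → R)}
    (he : ∀ i, e i = ι R (Pi.single i 1)) :
    bivector (a, b) =
      a 0 • (e 0 * e 3) + a 1 • (e 1 * e 3) + a 2 • (e 2 * e 3) +
        (b 0 • (e 1 * e 2) + b 1 • (e 2 * e 0) + b 2 • (e 0 * e 1)) := by
  obtain rfl : e = _ := funext he
  simp [bivector, Fintype.linearCombination_apply, Fin.sum_univ_three]

theorem ι_mul_ι_eq_bivector (x y : Fin 4 → R) :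
    ι R x * ι R y =
      bivector (y 3 • Fin.init x - x 3 • Fin.init y, crossProduct (Fin.init x) (Fin.init y)) := by
  obtain ⟨e, he⟩ : ∃ e : Fin 4 → ExteriorAlgebra R (Fin 4 → R), ∀ i, e i = ι R (Pi.single i 1) :=
    ⟨_, fun _ => rfl⟩
  have expand : ∀ z : Fin 4 → R,
      ι R z = z 0 • e 0 + z 1 • e 1 + z 2 • e 2 + z 3 • e 3 := fun z => by
    conv_lhs => rw [pi_eq_sum_univ' z, map_sum, Fin.sum_univ_four]
    simp only [he, ← map_smul]
  have swap : ∀ i j, e j * e i = -(e i * e j) := fun i j => by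
    rw [he, he]
    exact eq_neg_of_add_eq_zero_left (ι_add_mul_swap _ _)
  have sq : ∀ i, e i * e i = 0 := fun i => by rw [he, ι_sq_zero]
  rw [expand x, expand y, bivector_apply _ _ he]
  simp only [cross_apply, Fin.init, Pi.sub_apply,
    Pi.smul_apply, smul_eq_mul, Matrix.cons_val, Fin.castSucc_zero, Fin.castSucc_one,
    show (2 : Fin 3).castSucc = 2 from rfl,
    add_mul, mul_add, smul_mul_smul_comm, sq, smul_zero, swap 0 1, swap 0 2,
    swap 0 3, swap 1 2, swap 1 3, swap 2 3]
  module

theorem exists_bivector_eq_of_mem_exteriorPower {y : ExteriorAlgebra R (Fin 4 → R)}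
    (hy : y ∈ ⋀[R]^2 (Fin 4 → R)) : ∃ w, bivector w = y := by
  suffices h : ⋀[R]^2 (Fin 4 → R) ≤ LinearMap.range bivector from h hy
  rw [exteriorPower, pow_two, Submodule.mul_le]
  rintro _ ⟨x, rfl⟩ _ ⟨y, rfl⟩
  exact ⟨_, (ι_mul_ι_eq_bivector x y).symm⟩

/-- The three coordinates of `v₃ • w` modulo `v ∧ R⁴`, where `w` is a bivector in the coordinates
of `bivector`. They exist because `v` and the first three coordinate vectors span `R⁴` as soon as
`v₃` is invertible. -/
def residue (v : Fin 4 → R) : (Fin 3 → R) × (Fin 3 → R) →ₗ[R] Fin 3 → R :=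
  v 3 • LinearMap.snd R _ _ + crossProduct (Fin.init v) ∘ₗ LinearMap.fst R _ _

theorem residue_apply (v : Fin 4 → R) (a b : Fin 3 → R) :
    residue v (a, b) = v 3 • b + crossProduct (Fin.init v) a :=
  rfl

theorem residue_eq_vecCons (v : Fin 4 → R) (a b : Fin 3 → R) :
    residue v (a, b) = ![v 3 * b 0 + (v 1 * a 2 - v 2 * a 1), v 3 * b 1 + (v 2 * a 0 - v 0 * a 2),
      v 3 * b 2 + (v 0 * a 1 - v 1 * a 0)] := by
  ext i
  fin_cases i <;> rfl

theorem map_residue {S : Type*} [CommRing S] (φ : R →+* S) (v : Fin 4 → R) (a b : Fin 3 → R)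
    (i : Fin 3) : φ (residue v (a, b) i) = residue (φ ∘ v) (φ ∘ a, φ ∘ b) i := by
  fin_cases i <;> simp [residue_apply, cross_apply, Fin.init]

theorem smul_bivector (v : Fin 4 → R) (a b : Fin 3 → R) :
    v 3 • bivector (a, b) = bivector (0, residue v (a, b)) - ι R v * ι R (Fin.snoc a 0) := by
  have hlast : (Fin.snoc a 0 : Fin 4 → R) 3 = 0 := Fin.snoc_last (α := fun _ => R) 0 a
  rw [ι_mul_ι_eq_bivector, hlast, Fin.init_snoc, ← map_smul, ← map_sub, residue_apply]
  simp

theorem exists_bivector_eq_ι_mul_ι {K : Type*} [Field K] {v : Fin 4 → K} (hv : v 3 ≠ 0)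
    {w : (Fin 3 → K) × (Fin 3 → K)} (hw : residue v w = 0) :
    ∃ u, bivector w = ι K v * ι K u := by
  refine ⟨(v 3)⁻¹ • -Fin.snoc w.1 0, ?_⟩
  rw [eq_comm, map_smul, mul_smul_comm, inv_smul_eq_iff₀ hv, smul_bivector, hw, Prod.mk_zero_zero,
    map_zero, map_neg, mul_neg, zero_sub]

theorem basis_exteriorAlgebra_apply {I M : Type*} [LinearOrder I] [AddCommGroup M] [Module R M]
    (b : Module.Basis I R M) (S : Finset I) :
    b.ExteriorAlgebra S = ((S.sort (· ≤ ·)).map fun j => ι R (b j)).prod := by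
  refine (ExteriorAlgebra.basis_apply_ofCard b rfl).trans ((ιMulti_apply _).trans ?_)
  rw [← Finset.listMap_orderEmbOfFin_finRange S rfl, List.map_map, List.ofFn_eq_map]
  rfl

theorem basis_exteriorAlgebra_pair {I M : Type*} [LinearOrder I] [AddCommGroup M] [Module R M]
    (b : Module.Basis I R M) {i j : I} (hij : i < j) :
    b.ExteriorAlgebra {i, j} = ι R (b i) * ι R (b j) := by
  have hsort : ({i, j} : Finset I).sort (· ≤ ·) = [i, j] := by
    rw [Finset.sort_insert] <;> simp [hij.le, hij.ne]
  simp [basis_exteriorAlgebra_apply, hsort]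

/-- Matches the six coordinates of `bivector` with the pairs of indices below `4`: those in `a` with
the pairs `{i, 3}` and those in `b` with their complements, for `i < 3`. -/
noncomputable def pairEquiv : Fin 3 ⊕ Fin 3 ≃ {S : Finset (Fin 4) // S.card = 2} :=
  Equiv.ofBijective
    (Sum.elim (fun i => ⟨{i.castSucc, 3}, by decide +revert⟩)
      ![⟨{1, 2}, rfl⟩, ⟨{0, 2}, rfl⟩, ⟨{0, 1}, rfl⟩])
    (by decide)

/-- The coordinates of `bivector (a, b)` with respect to the basis bivectors `e_S`, indexed through
`pairEquiv`. The sign arises because `e₂ ∧ e₀ = -e₀ ∧ e₂`. -/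
def pairCoords (a b : Fin 3 → R) : Fin 3 ⊕ Fin 3 → R := Sum.elim a ![b 0, -b 1, b 2]

theorem pairCoords_mem {S : Type*} [SetLike S R] [NegMemClass S R] {N : S} {a b : Fin 3 → R}
    (ha : ∀ k, a k ∈ N) (hb : ∀ k, b k ∈ N) : ∀ k, pairCoords a b k ∈ N
  | .inl k => ha k
  | .inr k => by
    fin_cases k
    · exact hb 0
    · exact neg_mem (hb 1)
    · exact hb 2

theorem map_pairCoords {S : Type*} [CommRing S] (φ : R →+* S) (a b : Fin 3 → R)
    (k : Fin 3 ⊕ Fin 3) : φ (pairCoords a b k) = pairCoords (φ ∘ a) (φ ∘ b) k := by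
  rcases k with k | k
  · rfl
  · fin_cases k <;> simp [pairCoords]

theorem sum_pairCoords_smul (a b : Fin 3 → R) :
    ∑ S, pairCoords a b (pairEquiv.symm S) • (Pi.basisFun R (Fin 4)).ExteriorAlgebra S.1 =
      bivector (a, b) := by
  obtain ⟨e, he⟩ : ∃ e : Fin 4 → ExteriorAlgebra R (Fin 4 → R), ∀ i, e i = ι R (Pi.single i 1) :=
    ⟨_, fun _ => rfl⟩
  have pair {i j : Fin 4} (hij : i < j) :
      (Pi.basisFun R (Fin 4)).ExteriorAlgebra {i, j} = e i * e j := by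
    simp only [basis_exteriorAlgebra_pair _ hij, Pi.basisFun_apply, he]
  have swap : e 0 * e 2 = -(e 2 * e 0) := by
    simpa only [he] using eq_neg_of_add_eq_zero_left (ι_add_mul_swap _ _)
  have inl (i : Fin 3) : (Pi.basisFun R (Fin 4)).ExteriorAlgebra (pairEquiv (.inl i)).1 =
      e i.castSucc * e 3 := pair (Fin.castSucc_lt_last i)
  have inr (i : Fin 3) : (Pi.basisFun R (Fin 4)).ExteriorAlgebra (pairEquiv (.inr i)).1 =
      ![e 1 * e 2, e 0 * e 2, e 0 * e 1] i := by
    fin_cases i <;> exact pair (by decide)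
  rw [← pairEquiv.sum_comp, bivector_apply a b he]
  simp only [Fintype.sum_sum_type, Equiv.symm_apply_apply, inl, inr, Fin.sum_univ_three,
    pairCoords, Sum.elim_inl, Sum.elim_inr, Matrix.cons_val, swap, smul_neg, neg_smul, neg_neg,
    Fin.castSucc_zero, Fin.castSucc_one, show (2 : Fin 3).castSucc = 2 from rfl]

end Bivector

section ResidueEval

variable {K κ : Type*} [Field K] (m : ℕ)

/-- Evaluates a bivector `w` of forms of degree `m` at the points `vᵢ` of `K⁴`, recording the
residues of the values `w (vᵢ)` modulo `vᵢ ∧ K⁴`. -/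
noncomputable def residueEval (v : κ → Fin 4 → K) :
    (Fin 3 → homogeneousSubmodule (Fin 4) K m) × (Fin 3 → homogeneousSubmodule (Fin 4) K m) →ₗ[K]
      κ × Fin 3 → K :=
  LinearMap.pi fun t =>
    let ev := ((aeval (v t.1)).toLinearMap ∘ₗ Submodule.subtype _).compLeft (Fin 3)
    LinearMap.proj t.2 ∘ₗ residue (v t.1) ∘ₗ ev.prodMap ev

variable {m}

theorem residueEval_apply (v : κ → Fin 4 → K)
    (a b : Fin 3 → homogeneousSubmodule (Fin 4) K m) (i : κ) (j : Fin 3) :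
    residueEval m v (a, b) (i, j) =
      residue (v i) (fun k => eval (v i) (a k).1, fun k => eval (v i) (b k).1) j :=
  rfl

theorem forGeneralTuple_residueEval_surjective [Finite κ] {v₀ : κ → Fin 4 → K}
    (h₀ : Function.Surjective (residueEval m v₀)) :
    ForGeneralTuple fun v : κ → Fin 4 → K => Function.Surjective (residueEval m v) := by
  refine ForGeneralTuple.surjective_of_exists ?_ h₀
  rintro ⟨a, b⟩ ⟨i, j⟩
  refine ⟨residue (fun l => X (i, l))
    (fun k => rename (Prod.mk i) (a k).1, fun k => rename (Prod.mk i) (b k).1) j, fun v => ?_⟩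
  simp only [map_residue, residueEval_apply, Function.comp_def, eval_X, eval_rename]

theorem exists_tensor_sub_eq_ι_mul_ι {v : κ → Fin 4 → K} (hv₃ : ∀ i, v i 3 ≠ 0)
    (hv : Function.Surjective (residueEval m v)) {y : κ → ExteriorAlgebra K (Fin 4 → K)}
    (hy : ∀ i, y i ∈ ⋀[K]^2 (Fin 4 → K)) :
    ∃ q : {S : Finset (Fin 4) // S.card = 2} → MvPolynomial (Fin 4) K,
      (∀ S, (q S).IsHomogeneous m) ∧ ∀ i, ∃ u,
        ∑ S, eval (v i) (q S) • (Pi.basisFun K (Fin 4)).ExteriorAlgebra S.1 - y i =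
          ι K (v i) * ι K u := by
  choose w hw using fun i => exists_bivector_eq_of_mem_exteriorPower (hy i)
  obtain ⟨⟨a, b⟩, hab⟩ := hv fun t => residue (v t.1) (w t.1) t.2
  refine ⟨fun S => pairCoords (fun k => (a k).1) (fun k => (b k).1) (pairEquiv.symm S),
    fun S => pairCoords_mem (fun k => (a k).2) (fun k => (b k).2) _, fun i => ?_⟩
  obtain ⟨u, hu⟩ := exists_bivector_eq_ι_mul_ι (hv₃ i)
    (w := (fun k => eval (v i) (a k).1, fun k => eval (v i) (b k).1) - w i) <| by
      rw [map_sub, sub_eq_zero]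
      exact funext fun j => congrFun hab (i, j)
  refine ⟨u, ?_⟩
  simp only [map_pairCoords, sum_pairCoords_smul, ← hw, ← map_sub, ← hu]
  rfl

end ResidueEval

theorem isUnit_of_blockTriangular {K N L : Type*} [Field K] [Fintype N] [DecidableEq N]
    [LinearOrder L] {M : Matrix N N K} {b : N → L} (hM : M.BlockTriangular b)
    (hblock : ∀ i j, b i = b j → i ≠ j → M i j = 0) (hdiag : ∀ i, M i i ≠ 0) : IsUnit M := by
  have hdiagonal (l : L) :
      M.toSquareBlock b l = Matrix.diagonal fun i : {i // b i = l} => M i i := by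
    ext i j
    rw [Matrix.diagonal_apply]
    split_ifs with hij
    · rw [hij, Matrix.toSquareBlock_def, Matrix.of_apply]
    · exact hblock i j (i.2.trans j.2.symm) (Subtype.coe_injective.ne hij)
  rw [Matrix.isUnit_iff_isUnit_det, isUnit_iff_ne_zero, hM.det]
  refine Finset.prod_ne_zero_iff.2 fun l _ => ?_
  rw [hdiagonal, Matrix.det_diagonal]
  exact Finset.prod_ne_zero_iff.2 fun i _ => hdiag i

section Grid

variable {K : Type*} {n : ℕ}

/-- The point `(1, x (β 1), …, x (β n))`. -/
def gridPoint [One K] (x : ℕ → K) (β : Fin (n + 1) →₀ ℕ) : Fin (n + 1) → K :=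
  Fin.cons 1 fun i => x (β i.succ)

/-- The homogenization, with respect to the variable `X 0`, of the Newton basis polynomial with
exponents `α 1, …, α n`. -/
noncomputable def gridForm [CommRing K] (x : ℕ → K) (α : Fin (n + 1) →₀ ℕ) :
    MvPolynomial (Fin (n + 1)) K :=
  X 0 ^ α 0 * ∏ i : Fin n, ∏ l ∈ Finset.range (α i.succ), (X i.succ - C (x l) * X 0)

theorem isHomogeneous_gridForm [CommRing K] (x : ℕ → K) (α : Fin (n + 1) →₀ ℕ) :
    (gridForm x α).IsHomogeneous α.degree := by
  have hlin (i : Fin n) (l : ℕ) :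
      (X i.succ - C (x l) * X 0 : MvPolynomial (Fin (n + 1)) K).IsHomogeneous 1 :=
    (isHomogeneous_X _ _).sub ((isHomogeneous_X _ _).C_mul _)
  rw [Finsupp.degree_eq_sum, Fin.sum_univ_succ]
  refine (isHomogeneous_X_pow _ _).mul (.prod _ _ _ fun i _ => ?_)
  simpa using IsHomogeneous.prod (Finset.range (α i.succ)) _ (fun _ => 1) fun l _ => hlin i l

theorem eval_gridPoint_gridForm [CommRing K] (x : ℕ → K) (α β : Fin (n + 1) →₀ ℕ) :
    eval (gridPoint x β) (gridForm x α) =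
      ∏ i : Fin n, ∏ l ∈ Finset.range (α i.succ), (x (β i.succ) - x l) := by
  simp [gridForm, gridPoint]

theorem eval_gridPoint_gridForm_self_ne_zero [CommRing K] [IsDomain K] {x : ℕ → K}
    (hx : Function.Injective x) (α : Fin (n + 1) →₀ ℕ) :
    eval (gridPoint x α) (gridForm x α) ≠ 0 := by
  rw [eval_gridPoint_gridForm]
  refine Finset.prod_ne_zero_iff.2 fun i _ => Finset.prod_ne_zero_iff.2 fun l hl => ?_
  exact sub_ne_zero.2 (hx.ne (Finset.mem_range.1 hl).ne')

theorem eval_gridPoint_gridForm_eq_zero [CommRing K] (x : ℕ → K) {α β : Fin (n + 1) →₀ ℕ}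
    (hdeg : β.degree = α.degree) (h₀ : α 0 ≤ β 0) (hne : β ≠ α) :
    eval (gridPoint x β) (gridForm x α) = 0 := by
  obtain ⟨i, hi⟩ : ∃ i : Fin n, β i.succ < α i.succ := by
    by_contra! hle
    refine hne (Finsupp.ext fun i => ?_)
    rw [Finsupp.degree_eq_sum, Finsupp.degree_eq_sum] at hdeg
    exact ((Finset.sum_eq_sum_iff_of_le fun i _ => Fin.cases h₀ hle i).1 hdeg.symm i
      (Finset.mem_univ i)).symm
  rw [eval_gridPoint_gridForm]
  exact Finset.prod_eq_zero (Finset.mem_univ i)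
    (Finset.prod_eq_zero (Finset.mem_range.2 hi) (sub_self _))

theorem exists_isHomogeneous_eval_gridPoint_eq [Field K] {x : ℕ → K} (hx : Function.Injective x)
    {m : ℕ} {G : Finset (Fin (n + 1) →₀ ℕ)} (hG : ∀ β ∈ G, β.degree = m) (f : G → K) :
    ∃ q : MvPolynomial (Fin (n + 1)) K, q.IsHomogeneous m ∧
      ∀ β : G, eval (gridPoint x β.1) q = f β := by
  let M : Matrix G G K := Matrix.of fun β α => eval (gridPoint x β.1) (gridForm x α.1)
  have hM (β α : G) (h₀ : α.1 0 ≤ β.1 0) (hne : β ≠ α) : M β α = 0 :=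
    eval_gridPoint_gridForm_eq_zero x ((hG β β.2).trans (hG α α.2).symm) h₀
      (Subtype.coe_injective.ne hne)
  have hunit : IsUnit M := isUnit_of_blockTriangular (b := fun β => β.1 0)
    (fun β α h => hM β α h.le (ne_of_apply_ne (·.1 0) h.ne')) (fun β α h => hM β α h.ge)
    fun α => eval_gridPoint_gridForm_self_ne_zero hx α.1
  obtain ⟨c, rfl⟩ := Matrix.mulVec_surjective_iff_isUnit.2 hunit f
  refine ⟨∑ α, C (c α) * gridForm x α.1, .sum _ _ _ fun α _ =>
    (hG α α.2 ▸ isHomogeneous_gridForm x α.1).C_mul _, fun β => ?_⟩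
  simp [M, Matrix.mulVec, dotProduct, mul_comm]

theorem eval_cons_zero_gridForm [CommRing K] (x : ℕ → K) (p : Fin n → K) (γ : Fin n →₀ ℕ) :
    eval (Fin.cons 0 p) (gridForm x (γ.cons 0)) = eval p (monomial γ 1) := by
  simp [gridForm, eval_monomial, Finsupp.prod_fintype]

theorem degree_cons_zero (γ : Fin n →₀ ℕ) : (γ.cons 0 : Fin (n + 1) →₀ ℕ).degree = γ.degree := by
  simp [Finsupp.degree_eq_sum, Fin.sum_univ_succ]

end Grid

theorem exists_subset_injective_add_single {n k : ℕ} [NeZero n] {A : Finset (Fin n →₀ ℕ)}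
    (hk : n * k ≤ A.card) : ∃ U ⊆ A, U.card = k ∧
      Function.Injective fun t : Fin n × U => t.2.1 + Finsupp.single t.1 1 := by
  -- `Σ i * β i` modulo `n` grows by `i` when `single i 1` is added, so it recovers `i` from a sum
  -- whose first summand has color `r`.
  let color : (Fin n →₀ ℕ) →ₗ[ℕ] Fin n := Finsupp.linearCombination ℕ id
  obtain ⟨r, -, hr⟩ := Finset.exists_le_card_fiber_of_mul_le_card_of_maps_to
    (f := color) (s := A) (t := Finset.univ) (n := k) (fun _ _ => Finset.mem_univ _)
    Finset.univ_nonempty (by simpa using hk)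
  obtain ⟨U, hU, hcard⟩ := Finset.exists_subset_card_eq hr
  refine ⟨U, hU.trans (Finset.filter_subset _ _), hcard, ?_⟩
  have hcolor (t : Fin n × U) : color (t.2.1 + Finsupp.single t.1 1) = r + t.1 := by
    rw [map_add, (Finset.mem_filter.1 (hU t.2.2)).2]
    simp [color]
  rintro ⟨i, γ⟩ ⟨j, δ⟩ h
  obtain rfl : i = j := by
    exact add_left_cancel ((hcolor _).symm.trans ((congrArg color h).trans (hcolor _)))
  exact Prod.ext rfl (Subtype.ext (add_right_cancel h))

theorem mem_finsuppAntidiag_univ {n m : ℕ} {β : Fin n →₀ ℕ} :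
    β ∈ Finset.finsuppAntidiag Finset.univ m ↔ β.degree = m := by
  simp [Finset.mem_finsuppAntidiag, Finsupp.degree_eq_sum]

theorem card_finsuppAntidiag_univ (n m : ℕ) :
    (Finset.finsuppAntidiag (Finset.univ : Finset (Fin (n + 1))) m).card = (m + n).choose n := by
  rw [Finset.card_finsuppAntidiag_nat_eq_choose, Finset.card_fin, Nat.add_right_comm,
    Nat.add_sub_cancel, add_comm n, Nat.choose_symm_add]

section Plane

variable {K : Type*} [Field K] {n m : ℕ}

theorem forGeneralTuple_exists_isHomogeneous_eval_eq {κ : Type*} [Fintype κ]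
    (hκ : Fintype.card κ ≤ (m + n).choose n) :
    ForGeneralTuple fun p : κ → Fin (n + 1) → K =>
      ∀ ρ : κ → K, ∃ q : MvPolynomial (Fin (n + 1)) K, q.IsHomogeneous m ∧
        ∀ j, eval (p j) q = ρ j := by
  rw [← card_finsuppAntidiag_univ, ← Fintype.card_coe] at hκ
  obtain ⟨g⟩ := Function.Embedding.nonempty_of_card_le hκ
  refine (forGeneralTuple_monomial_interpolation
    (Subtype.val_injective.comp g.injective)).mono fun p hp ρ => ?_
  obtain ⟨c, hc⟩ := hp ρ
  refine ⟨∑ k, C (c k) * monomial (g k).1 1, .sum _ _ _ fun k _ =>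
    (isHomogeneous_monomial _ (mem_finsuppAntidiag_univ.1 (g k).2)).C_mul _, fun j => ?_⟩
  rw [← hc j]
  simp only [map_sum, map_mul, eval_C, Function.comp_apply]

theorem forGeneralTuple_exists_sum_mul_eval_eq (x : ℕ → K) {U : Finset (Fin n →₀ ℕ)}
    (hU : ∀ γ ∈ U, γ.degree = m)
    (hinj : Function.Injective fun t : Fin n × U => t.2.1 + Finsupp.single t.1 1) :
    ForGeneralTuple fun p : Fin n × U → Fin n → K =>
      ∀ ρ : Fin n × U → K, ∃ h : Fin n → MvPolynomial (Fin (n + 1)) K,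
        (∀ i, (h i).IsHomogeneous m) ∧
        (∀ i (β : Fin (n + 1) →₀ ℕ), β.degree = m → (∀ γ ∈ U, β ≠ γ.cons 0) →
          eval (gridPoint x β) (h i) = 0) ∧
        ∀ j, ∑ i, p j i * eval (Fin.cons 0 (p j)) (h i) = ρ j := by
  refine (forGeneralTuple_monomial_interpolation hinj).mono fun p hp ρ => ?_
  obtain ⟨c, hc⟩ := hp ρ
  have hdeg (γ : U) : (γ.1.cons 0 : Fin (n + 1) →₀ ℕ).degree = m :=
    (degree_cons_zero _).trans (hU γ γ.2)
  refine ⟨fun i => ∑ γ, C (c (i, γ)) * gridForm x (γ.1.cons 0), fun i => .sum _ _ _ fun γ _ =>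
    (hdeg γ ▸ isHomogeneous_gridForm x _).C_mul _, fun i β hβ hβU => ?_, fun j => ?_⟩
  · rw [map_sum]
    refine Finset.sum_eq_zero fun γ _ => ?_
    rw [map_mul, eval_gridPoint_gridForm_eq_zero x (hβ.trans (hdeg γ).symm) (by simp)
      (hβU γ γ.2), mul_zero]
  · rw [← hc j, Fintype.sum_prod_type]
    refine Finset.sum_congr rfl fun i _ => ?_
    rw [map_sum, Finset.mul_sum]
    refine Finset.sum_congr rfl fun γ _ => ?_
    rw [map_mul, eval_C, eval_cons_zero_gridForm, monomial_add_single, map_mul, map_pow, eval_X,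
      pow_one, mul_left_comm, mul_comm (p j i)]

end Plane

theorem residueEval_surjective_comp {K κ κ' : Type*} [Field K] {m : ℕ} {v : κ → Fin 4 → K}
    (hv : Function.Surjective (residueEval m v)) {g : κ' → κ} (hg : Function.Injective g) :
    Function.Surjective (residueEval m (v ∘ g)) := by
  intro τ
  obtain ⟨τ', rfl⟩ := (hg.prodMap Function.injective_id).surjective_comp_right τ
  obtain ⟨w, rfl⟩ := hv τ'
  exact ⟨w, rfl⟩

section Configuration

variable {K : Type*} [Field K] {m : ℕ} {x : ℕ → K} {G : Finset (Fin 4 →₀ ℕ)}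

theorem exists_residueEval_gridPoint_eq (hx : Function.Injective x) (hx₀ : ∀ l, x l ≠ 0)
    (hG : ∀ β ∈ G, β.degree = m) (b₁ b₂ : homogeneousSubmodule (Fin 4) K m)
    (τ : G × Fin 3 → K) : ∃ a₁ a₂ b₀ : homogeneousSubmodule (Fin 4) K m,
      residueEval m (fun β : G => gridPoint x β.1) (![0, a₁, a₂], ![b₀, b₁, b₂]) = τ := by
  have grid (f : G → K) : ∃ q : homogeneousSubmodule (Fin 4) K m,
      ∀ β : G, eval (gridPoint x β.1) q.1 = f β := by
    obtain ⟨q, hq, hqf⟩ := exists_isHomogeneous_eval_gridPoint_eq hx hG f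
    exact ⟨⟨q, hq⟩, hqf⟩
  obtain ⟨a₁, ha₁⟩ := grid fun β => τ (β, 2) - x (β.1 3) * eval (gridPoint x β.1) b₂.1
  obtain ⟨a₂, ha₂⟩ := grid fun β => x (β.1 3) * eval (gridPoint x β.1) b₁.1 - τ (β, 1)
  obtain ⟨b₀, hb₀⟩ := grid fun β => (τ (β, 0) - (x (β.1 1) * eval (gridPoint x β.1) a₂.1 -
    x (β.1 2) * eval (gridPoint x β.1) a₁.1)) / x (β.1 3)
  refine ⟨a₁, a₂, b₀, funext fun ⟨β, i⟩ => ?_⟩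
  have h0 : gridPoint x β.1 0 = 1 := rfl
  have h1 : gridPoint x β.1 1 = x (β.1 1) := rfl
  have h2 : gridPoint x β.1 2 = x (β.1 2) := rfl
  have h3 : gridPoint x β.1 3 = x (β.1 3) := rfl
  rw [residueEval_apply, residue_eq_vecCons]
  fin_cases i
  · simp [h1, h2, h3, hb₀, mul_div_cancel₀ _ (hx₀ _)]
  · simp [h0, h3, ha₂]
  · simp [h0, h3, ha₁]

theorem residue_cons_zero (p : Fin 3 → K) (a b : Fin 3 → K) :
    residue (Fin.cons 0 p) (a, b) = ![p 2 * b 0 + (p 0 * a 2 - p 1 * a 1),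
      p 2 * b 1 + p 1 * a 0, p 2 * b 2 - p 0 * a 0] := by
  have hexpand : residue (Fin.cons 0 p) (a, b) = ![p 2 * b 0 + (p 0 * a 2 - p 1 * a 1),
      p 2 * b 1 + (p 1 * a 0 - 0 * a 2), p 2 * b 2 + (0 * a 1 - p 0 * a 0)] :=
    residue_eq_vecCons _ a b
  rw [hexpand, zero_mul, zero_mul, sub_zero, zero_sub, ← sub_eq_add_neg]

theorem residueEval_sumElim_surjective (hx : Function.Injective x) (hx₀ : ∀ l, x l ≠ 0)
    (hG : ∀ β ∈ G, β.degree = m) {κ : Type*} {p : κ → Fin 3 → K} (hp₀ : ∀ j, p j 2 ≠ 0)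
    (hp : ∀ ρ : κ → K, ∃ q : MvPolynomial (Fin 3) K, q.IsHomogeneous m ∧
      ∀ j, eval (p j) q = ρ j)
    (hpG : ∀ ρ : κ → K, ∃ h : Fin 3 → MvPolynomial (Fin 4) K, (∀ i, (h i).IsHomogeneous m) ∧
      (∀ i, ∀ β ∈ G, eval (gridPoint x β) (h i) = 0) ∧
      ∀ j, ∑ i, p j i * eval (Fin.cons 0 (p j)) (h i) = ρ j) :
    Function.Surjective (residueEval m
      (Sum.elim (fun β : G => gridPoint x β.1) fun j => Fin.cons 0 (p j))) := by
  intro τ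
  have plane (i : Fin 3) : ∃ q : homogeneousSubmodule (Fin 4) K m,
      ∀ j, p j 2 * eval (Fin.cons 0 (p j)) q.1 = τ (.inr j, i) := by
    obtain ⟨q, hq, hqp⟩ := hp fun j => τ (.inr j, i) / p j 2
    refine ⟨⟨rename Fin.succ q, hq.rename_isHomogeneous⟩, fun j => ?_⟩
    rw [eval_rename]
    exact (congrArg _ (hqp j)).trans (mul_div_cancel₀ _ (hp₀ j))
  obtain ⟨b₁, hb₁⟩ := plane 1
  obtain ⟨b₂, hb₂⟩ := plane 2
  obtain ⟨a₁, a₂, b₀, hgrid⟩ := exists_residueEval_gridPoint_eq hx hx₀ hG b₁ b₂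
    fun t => τ (.inl t.1, t.2)
  obtain ⟨h, hhom, hhG, hhp⟩ := hpG fun j =>
    τ (.inr j, 0) - residueEval m (fun j => Fin.cons 0 (p j)) (![0, a₁, a₂], ![b₀, b₁, b₂]) (j, 0)
  lift h to Fin 3 → homogeneousSubmodule (Fin 4) K m using hhom
  -- On the plane, only the zeroth residue is still wrong, and this correction changes no other one.
  refine ⟨(![0, a₁, a₂], ![b₀, b₁, b₂]) + (![0, -h 1, h 0], ![h 2, 0, 0]), funext ?_⟩
  rintro ⟨β | j, i⟩
  · rw [map_add, Pi.add_apply]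
    refine (congrArg₂ (· + ·) (congrFun hgrid (β, i)) ?_).trans (add_zero _)
    rw [residueEval_apply, residue_eq_vecCons]
    fin_cases i <;> simp [hhG _ β.1 β.2]
  · have hj := hhp j
    rw [residueEval_apply, residue_cons_zero] at hj
    rw [Prod.mk_add_mk, residueEval_apply, Sum.elim_inr, residue_cons_zero]
    fin_cases i
    · linear_combination (norm := (simp [Fin.sum_univ_three]; ring)) hj
    · simp [hb₁]
    · simp [hb₂]

end Configuration

theorem exists_residueEval_surjective {K : Type*} [Field K] [Infinite K] {m s : ℕ}
    (hs : s ≤ (m + 3).choose 3 + 2 * ((m + 2).choose 2 / 3)) :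
    ∃ v : Fin s → Fin 4 → K, Function.Surjective (residueEval m v) := by
  classical
  let x := Set.Infinite.natEmbedding _ (Set.finite_singleton (0 : K)).infinite_compl
  obtain ⟨U, hU, hUcard, hinj⟩ := exists_subset_injective_add_single
    ((Nat.mul_div_le _ 3).trans_eq (card_finsuppAntidiag_univ 2 m).symm)
  have hUdeg : ∀ γ ∈ U, γ.degree = m := fun γ hγ => mem_finsuppAntidiag_univ.1 (hU hγ)
  let G := Finset.finsuppAntidiag (Finset.univ : Finset (Fin 4)) m \ U.image (Finsupp.cons 0)
  have hG : ∀ β ∈ G, β.degree = m ∧ ∀ γ ∈ U, β ≠ γ.cons 0 := fun β hβ => by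
    rw [Finset.mem_sdiff, mem_finsuppAntidiag_univ] at hβ
    exact ⟨hβ.1, fun γ hγ h => hβ.2 (Finset.mem_image.2 ⟨γ, hγ, h.symm⟩)⟩
  have hGcard : (m + 3).choose 3 - U.card ≤ G.card := by
    rw [← card_finsuppAntidiag_univ 3 m]
    exact (Nat.sub_le_sub_left Finset.card_image_le _).trans (Finset.le_card_sdiff _ _)
  have hcard : Fintype.card (Fin 3 × U) = 3 * U.card := by
    rw [Fintype.card_prod, Fintype.card_fin, Fintype.card_coe]
  obtain ⟨p, hp₀, hp, hpG⟩ := ((ForGeneralTuple.coord_ne_zero (K := K) (κ := Fin 3 × U) 2).and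
    ((forGeneralTuple_exists_isHomogeneous_eval_eq (m := m) (by omega)).and
      (forGeneralTuple_exists_sum_mul_eval_eq (fun l => (x l).1) hUdeg hinj))).exists_tuple
  have hsurj := residueEval_sumElim_surjective (Subtype.val_injective.comp x.injective)
    (fun l => (x l).2) (fun β hβ => (hG β hβ).1) hp₀ hp fun ρ =>
      let ⟨h, hhom, hhG, hhp⟩ := hpG ρ
      ⟨h, hhom, fun i β hβ => hhG i β (hG β hβ).1 (hG β hβ).2, hhp⟩
  obtain ⟨g⟩ : Nonempty (Fin s ↪ G ⊕ Fin 3 × U) := by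
    refine Function.Embedding.nonempty_of_card_le ?_
    rw [Fintype.card_sum, Fintype.card_fin, Fintype.card_coe, hcard]
    omega
  exact ⟨_, residueEval_surjective_comp hsurj g.injective⟩

theorem statement15_general {K : Type*} [Field K] [Infinite K] {m s : ℕ}
    (hs : s ≤ (m + 3).choose 3 + 2 * ((m + 2).choose 2 / 3)) :
    ForGeneralTuple fun v : Fin s → Fin 4 → K =>
      ∀ y : Fin s → ExteriorAlgebra K (Fin 4 → K), (∀ i, y i ∈ ⋀[K]^2 (Fin 4 → K)) →
        ∃ q : {S : Finset (Fin 4) // S.card = 2} → MvPolynomial (Fin 4) K,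
          (∀ S, (q S).IsHomogeneous m) ∧ ∀ i, ∃ u,
            ∑ S, eval (v i) (q S) • (Pi.basisFun K (Fin 4)).ExteriorAlgebra S.1 - y i =
              ι K (v i) * ι K u := by
  obtain ⟨v₀, hv₀⟩ := exists_residueEval_surjective (K := K) hs
  exact ((forGeneralTuple_residueEval_surjective hv₀).and (.coord_ne_zero 3)).mono
    fun v hv y hy => exists_tensor_sub_eq_ι_mul_ι hv.2 hv.1 hy

theorem basis_exteriorAlgebra_eq_eWedge {k : ℕ} (S : Finset (Fin k)) :
    (Pi.basisFun ℂ (Fin k)).ExteriorAlgebra S = eWedge k S := by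
  simp only [basis_exteriorAlgebra_apply, Pi.basisFun_apply, eWedge]

theorem bound_le_choose_add (m : ℕ) :
    ((m + 4) * (m + 3) * (m + 1) / 2 - m - 2) / 3 ≤
      (m + 3).choose 3 + 2 * ((m + 2).choose 2 / 3) := by
  have h₂ : (m + 2).choose 2 * 2 = (m + 2) * (m + 1) := by
    simpa using (Nat.add_one_mul_choose_eq (m + 1) 1).symm
  have h₃ : (m + 3) * (m + 2).choose 2 = (m + 3).choose 3 * 3 := Nat.add_one_mul_choose_eq (m + 2) 2
  have hmod : (m + 2).choose 2 % 3 ≠ 2 := fun h => by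
    have hm : (m + 2) * (m + 1) % 3 = 1 := by omega
    have : m % 3 = 0 ∨ m % 3 = 1 ∨ m % 3 = 2 := by omega
    rcases this with h' | h' | h' <;> simp [Nat.mul_mod, Nat.add_mod, h'] at hm
  have hprod : (m + 4) * (m + 3) * (m + 1) =
      2 * (3 * (m + 3).choose 3 + 2 * (m + 2).choose 2 + m + 1) := by
    nlinarith
  rw [hprod, Nat.mul_div_cancel_left _ two_pos]
  omega

/-- Theorem 5.3(iii) (`ℙ³`, bundle `Q*(m+1)`): if
`s ≤ ⌊((m+4)(m+3)(m+1)/2 − m − 2)/3⌋`, then for a general tuple of nonzero vectors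
`v_1,…,v_s ∈ ℂ⁴`, the evaluation map sending a tensor `M ∈ Hom(S^mℂ⁴, Λ²ℂ⁴)`
(represented by six homogeneous degree-`m` component polynomials `(q_S)_{|S|=2}`) to
`(M(v_i^m) mod v_i ∧ ℂ⁴)_i ∈ ⊕_i Λ²ℂ⁴/(v_i ∧ ℂ⁴)` is surjective; equivalently, the
tensors with `M(v_i^m) ∧ v_i = 0` for all `i` form a subspace of codimension `3s`. -/
theorem statement15 (m s : ℕ)
    (hs : s ≤ ((m + 4) * (m + 3) * (m + 1) / 2 - m - 2) / 3) :
    ∃ D : MvPolynomial (Fin s × Fin 4) ℂ, D ≠ 0 ∧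
      ∀ v : Fin s → Fin 4 → ℂ, (∀ i, v i ≠ 0) →
        MvPolynomial.eval (fun t => v t.1 t.2) D ≠ 0 →
        ∀ y : Fin s → ExteriorAlgebra ℂ (Fin 4 → ℂ),
          (∀ i, y i ∈ ⋀[ℂ]^2 (Fin 4 → ℂ)) →
          ∃ q : {S : Finset (Fin 4) // S.card = 2} → MvPolynomial (Fin 4) ℂ,
            (∀ S, (q S).IsHomogeneous m) ∧
            ∀ i, ∃ u : Fin 4 → ℂ,
              tval 4 2 q (v i) - y i = ExteriorAlgebra.ι ℂ (v i) * ExteriorAlgebra.ι ℂ u := by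
  obtain ⟨D, hD, h⟩ := statement15_general (K := ℂ) (hs.trans (bound_le_choose_add m))
  exact ⟨D, hD, fun v _ hv => by
    simpa only [tval, basis_exteriorAlgebra_eq_eWedge] using h v hv⟩
end
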